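/- arXiv:2504.06842 — 2 statements merged into one kernel-verified Lean document; each statement's English description precedes it below -/
import Mathlib

section
/- Landscape analysis theorem. Let m ≥ 100 be an integer, let x = {x_1,…,x_s} ⊂ 𝕋 satisfy Δ(x) ≥ 8π/m, let U be an orthonormal basis of the Fourier subspace range Φ(m,x), and let Ũ ∈ ℂ^{m×s} have orthonormal columns with ϑ := ‖UU^* − ŨŨ^*‖_2 ≤ 0.01. Then the landscape function q̃ := q_Ũ has at least s critical points x̃_1,…,x̃_s ∈ 𝕋 such that for each j ∈ {1,…,s}: (a) |x̃_j − x_j| ≤ 7ϑ/m; (b) 0.0271·m² ≤ q̃''(t) ≤ 0.269·m² for all t with |t − x̃_j| ≤ π/(3m); (c) x̃_j is a local minimum of q̃ and q̃(x̃_j) ≤ q̃(x_j) ≤ ϑ² ≤ 10⁻⁴; (d) q̃'(t) ≥ +0.0306·m for all t ∈ [x̃_j + π/(3m), x̃_j + 4π/(3m)] and q̃'(t) ≤ −0.0306·m for all t ∈ [x̃_j − 4π/(3m), x̃_j − π/(3m)]; (e) q̃(t) ≥ 0.529 for every t ∈ 𝕋 lying outside the union over j of the intervals [x̃_j − 4π/(3m),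 x̃_j + 4π/(3m)]; (f) q̃'(t) ≤ +0.292·m²·|t − x̃_j| for all t ∈ [x̃_j + π/(3m), x̃_j + 4π/(3m)] and q̃'(t) ≥ −0.292·m²·|t − x̃_j| for all t ∈ [x̃_j − 4π/(3m), x̃_j − π/(3m)]. -/
open scoped Real BigOperators Matrix
open Matrix

noncomputable section

/-- Distance on the torus `ℝ/2πℤ` between (representatives of) two points. -/
def torusDist (u v : ℝ) : ℝ := ⨅ n : ℤ, |u - v + 2 * Real.pi * n|

/-- The steering vector `φ(t) = m^{-1/2} (e^{ikt})_{k ∈ I(m)}`,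
where `I(m) = {-(m-1)/2, …, (m-1)/2}` (realized by `k ↦ k - (m-1)/2` for `k : Fin m`). -/
def steer (m : ℕ) (t : ℝ) : Fin m → ℂ :=
  fun k => (Real.sqrt m : ℂ)⁻¹ *
    Complex.exp (Complex.I * (((((k : ℕ) : ℝ) - ((m : ℝ) - 1) / 2) * t : ℝ) : ℂ))

/-- The nonharmonic Fourier matrix `Φ(n, x) = (e^{i k x_j})_{k ∈ I(n), j}`. -/
def fourierMatrix (n : ℕ) {s : ℕ} (x : Fin s → ℝ) : Matrix (Fin n) (Fin s) ℂ :=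
  fun k j => Complex.exp (Complex.I * (((((k : ℕ) : ℝ) - ((n : ℝ) - 1) / 2) * x j : ℝ) : ℂ))

/-- The landscape function `q_W(t) = 1 - ‖W^* φ(t)‖₂²`. -/
def landscape {m s : ℕ} (W : Matrix (Fin m) (Fin s) ℂ) (t : ℝ) : ℝ :=
  1 - ∑ j, ‖(Wᴴ *ᵥ steer m t) j‖ ^ 2

/-- Spectral norm (ℓ² → ℓ² operator norm) of a complex matrix. -/
def specNorm {d e : ℕ} (M : Matrix (Fin d) (Fin e) ℂ) : ℝ :=
  ‖LinearMap.toContinuousLinearMap (Matrix.toEuclideanLin M)‖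

/-- Column span (range) of a matrix, as a subspace of Euclidean space. -/
def colSpan {d e : ℕ} (M : Matrix (Fin d) (Fin e) ℂ) :
    Submodule ℂ (EuclideanSpace ℂ (Fin d)) :=
  LinearMap.range (Matrix.toEuclideanLin M)

/-- `U` is a matrix whose columns form an orthonormal basis of the subspace `V`. -/
def IsONBasisOf {d e : ℕ} (U : Matrix (Fin d) (Fin e) ℂ)
    (V : Submodule ℂ (EuclideanSpace ℂ (Fin d))) : Prop :=
  Uᴴ * U = 1 ∧ colSpan U = V

/-!
The landscape of a subspace `W` is `1 - ‖P_W φ(t)‖²`. Projecting onto the Fourier subspace can be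
done in two stages: first onto the line through `φ(x_j)`, then onto what remains of the other
steering vectors after the component along `φ(x_j)` is removed. The first stage contributes
`1 - D(t - x_j)²`, where `D` is the Dirichlet kernel `⟨φ(0), φ(t)⟩`. The second one is a correction
that vanishes to second order at `x_j` and is small, because the points are `8π/m`-separated: by
`|D(u)| ≤ 1 / (m |sin (u / 2)|)`, all correlations between distinct steering vectors are controlled
by sums of `csc²`. Replacing the Fourier subspace by one at distance `θ` changes the landscape and
its first two derivatives by multiples of `θ`, `m θ` and `m² θ`.

At `x_j` the perturbed landscape is thus at most `θ²` with slope `O(m θ)`, while its curvature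
nearby is at least a constant times `m²`, so its derivative has a zero within `7 θ / m` of `x_j`.
Away from all the points the projection of `φ(t)` is bounded by a sum of `csc²` and the Riesz lower
bound of the steering vectors.
-/

/-! ### The torus -/

lemma torusDist_le_abs_sub_add (u v : ℝ) (n : ℤ) : torusDist u v ≤ |u - v + 2 * π * n| :=
  ciInf_le ⟨0, by rintro _ ⟨n, rfl⟩; positivity⟩ n

lemma torusDist_eq_norm (u v : ℝ) :
    torusDist u v = ‖((u - v : ℝ) : AddCircle (2 * π))‖ := by
  have hper : ∀ n : ℤ, ((u - v + 2 * π * n : ℝ) : AddCircle (2 * π)) = (u - v : ℝ) := fun n => by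
    rw [mul_comm (2 * π), ← zsmul_eq_mul, AddCircle.coe_add, AddCircle.coe_zsmul,
      AddCircle.coe_period, smul_zero, add_zero]
  refine le_antisymm ?_ ?_
  · rw [AddCircle.norm_eq]
    refine (torusDist_le_abs_sub_add u v (-round ((2 * π)⁻¹ * (u - v)))).trans_eq ?_
    push_cast
    ring_nf
  · refine le_ciInf fun n => ?_
    rw [← hper n]
    exact QuotientAddGroup.norm_mk_le_norm

lemma torusDist_comm (u v : ℝ) : torusDist u v = torusDist v u := by
  rw [torusDist_eq_norm, torusDist_eq_norm, ← neg_sub, AddCircle.coe_neg, norm_neg]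

lemma torusDist_triangle (u v w : ℝ) : torusDist u w ≤ torusDist u v + torusDist v w := by
  simp only [torusDist_eq_norm]
  rw [← sub_add_sub_cancel u v w, AddCircle.coe_add]
  exact norm_add_le _ _


lemma torusDist_le_abs_sub (u v : ℝ) : torusDist u v ≤ |u - v| := by
  simpa using torusDist_le_abs_sub_add u v 0

lemma torusDist_le_pi (u v : ℝ) : torusDist u v ≤ π := by
  rw [torusDist_eq_norm]
  have h := AddCircle.norm_le_half_period (2 * π) Real.two_pi_pos.ne' (x := ((u - v : ℝ) : _))
  rwa [abs_of_pos Real.two_pi_pos, mul_div_cancel_left₀ _ two_ne_zero] at h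

lemma exists_torusDist_eq_abs (u v : ℝ) : ∃ n : ℤ, torusDist u v = |u - v + 2 * π * n| := by
  refine ⟨-round ((2 * π)⁻¹ * (u - v)), ?_⟩
  rw [torusDist_eq_norm, AddCircle.norm_eq]
  push_cast
  ring_nf

/-! ### The Dirichlet kernel -/

/-- The `k`-th element of the index set `I(m) = {-(m-1)/2, …, (m-1)/2}`. -/
def freq (m : ℕ) (k : Fin m) : ℝ := (k : ℕ) - ((m : ℝ) - 1) / 2

/-- The `p`-th derivative of the normalized Dirichlet kernel `t ↦ m⁻¹ ∑_{k ∈ I(m)} e^{ikt}`, written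
out through `cos^{(p)} = cos (· + pπ/2)`. -/
def dirichlet (m p : ℕ) (t : ℝ) : ℝ :=
  (∑ k, freq m k ^ p * Real.cos (freq m k * t + p * (π / 2))) / m

/-- The function `csc² (t / 2)`, with the junk value `0` at the multiples of `2π`. -/
def cscSq (t : ℝ) : ℝ := (Real.sin (t / 2) ^ 2)⁻¹

section Dirichlet

variable (m : ℕ) (t : ℝ)

lemma freq_rev (k : Fin m) : freq m k.rev = -freq m k := by
  unfold freq
  rw [Fin.val_rev, Nat.cast_sub k.2]
  push_cast
  ring

lemma dirichlet_zero_apply : dirichlet m 0 t = (∑ k, Real.cos (freq m k * t)) / m := by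
  simp [dirichlet]

lemma dirichlet_one_apply :
    dirichlet m 1 t = -((∑ k, freq m k * Real.sin (freq m k * t)) / m) := by
  simp [dirichlet, Real.cos_add_pi_div_two, neg_div]

lemma dirichlet_two_apply :
    dirichlet m 2 t = -((∑ k, freq m k ^ 2 * Real.cos (freq m k * t)) / m) := by
  simp [dirichlet, mul_div_cancel₀, Real.cos_add_pi, neg_div]

lemma hasDerivAt_dirichlet (p : ℕ) : HasDerivAt (dirichlet m p) (dirichlet m (p + 1) t) t := by
  refine HasDerivAt.div_const (HasDerivAt.fun_sum fun k _ => ?_) _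
  have harg : HasDerivAt (fun t => freq m k * t + p * (π / 2)) (freq m k) t := by
    simpa using ((hasDerivAt_id t).const_mul (freq m k)).add_const (p * (π / 2))
  refine (harg.cos.const_mul (freq m k ^ p)).congr_deriv ?_
  rw [Nat.cast_add_one, add_one_mul, ← add_assoc, Real.cos_add_pi_div_two]
  ring

lemma natCast_mul_dirichlet_zero : m * dirichlet m 0 t = ∑ k, Real.cos (freq m k * t) := by
  rcases eq_or_ne m 0 with rfl | hm
  · simp
  · rw [dirichlet_zero_apply, mul_div_cancel₀ _ (Nat.cast_ne_zero.mpr hm)]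

lemma dirichlet_zero_mul_sin :
    m * dirichlet m 0 t * Real.sin (t / 2) = Real.sin (m * t / 2) := by
  have hterm : ∀ k : ℕ, Real.cos ((k - ((m : ℝ) - 1) / 2) * t) * Real.sin (t / 2) =
      Real.sin (((k + 1 : ℕ) - (m : ℝ) / 2) * t) / 2 - Real.sin ((k - (m : ℝ) / 2) * t) / 2 := by
    intro k
    have hplus : ((k + 1 : ℕ) - (m : ℝ) / 2) * t = (k - ((m : ℝ) - 1) / 2) * t + t / 2 := by
      push_cast
      ring
    have hminus : (k - (m : ℝ) / 2) * t = (k - ((m : ℝ) - 1) / 2) * t - t / 2 := by ring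
    rw [hplus, hminus, Real.sin_add, Real.sin_sub]
    ring
  rw [natCast_mul_dirichlet_zero, Finset.sum_mul]
  unfold freq
  rw [Fin.sum_univ_eq_sum_range
      fun k : ℕ => Real.cos ((k - ((m : ℝ) - 1) / 2) * t) * Real.sin (t / 2),
    Finset.sum_congr rfl fun k _ => hterm k,
    Finset.sum_range_sub fun k : ℕ => Real.sin ((k - (m : ℝ) / 2) * t) / 2]
  rw [show (m - (m : ℝ) / 2) * t = m * t / 2 by ring,
    show (((0 : ℕ) : ℝ) - m / 2) * t = -(m * t / 2) by push_cast; ring, Real.sin_neg]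
  ring

lemma dirichlet_one_mul_sin :
    m * dirichlet m 1 t * Real.sin (t / 2) + m * dirichlet m 0 t * (Real.cos (t / 2) / 2) =
      m / 2 * Real.cos (m * t / 2) := by
  have hlhs : HasDerivAt (fun t => m * dirichlet m 0 t * Real.sin (t / 2)) _ t :=
    ((hasDerivAt_dirichlet m t 0).const_mul (m : ℝ)).mul ((hasDerivAt_id t).div_const 2).sin
  have hrhs := (((hasDerivAt_id t).const_mul (m : ℝ)).div_const 2).sin
  simp only [dirichlet_zero_mul_sin] at hlhs
  have h := hlhs.unique hrhs
  simp only [id, zero_add] at h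
  linarith

lemma dirichlet_two_mul_sin :
    dirichlet m 2 t * Real.sin (t / 2) + dirichlet m 1 t * Real.cos (t / 2) =
      -((m : ℝ) ^ 2 - 1) / 4 * dirichlet m 0 t * Real.sin (t / 2) := by
  rcases eq_or_ne m 0 with rfl | hm
  · simp [dirichlet]
  have hsin := ((hasDerivAt_id t).div_const 2).sin
  have hcos := ((hasDerivAt_id t).div_const 2).cos.div_const 2
  have hlhs : HasDerivAt (fun t => m * dirichlet m 1 t * Real.sin (t / 2) +
      m * dirichlet m 0 t * (Real.cos (t / 2) / 2)) _ t :=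
    (((hasDerivAt_dirichlet m t 1).const_mul (m : ℝ)).mul hsin).add
      (((hasDerivAt_dirichlet m t 0).const_mul (m : ℝ)).mul hcos)
  have hrhs := ((((hasDerivAt_id t).const_mul (m : ℝ)).div_const 2).cos).const_mul ((m : ℝ) / 2)
  simp only [dirichlet_one_mul_sin] at hlhs
  have h := hlhs.unique hrhs
  simp only [id, zero_add, Nat.reduceAdd] at h
  rw [← dirichlet_zero_mul_sin] at h
  refine mul_left_cancel₀ (Nat.cast_ne_zero.mpr hm : (m : ℝ) ≠ 0) ?_
  linear_combination h

end Dirichlet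

/-! ### Decay of the kernel away from the diagonal -/

lemma cscSq_add_two_pi_mul_int (t : ℝ) (n : ℤ) : cscSq (t + 2 * π * n) = cscSq t := by
  have hsq : ((-1 : ℝ) ^ n) ^ 2 = 1 := by rw [← zpow_natCast, zpow_comm]; simp
  rw [cscSq, show (t + 2 * π * n) / 2 = t / 2 + n * π by ring, Real.sin_add_int_mul_pi, mul_pow,
    hsq, one_mul, cscSq]

lemma cscSq_abs (t : ℝ) : cscSq |t| = cscSq t := by
  rcases abs_choice t with h | h <;> simp [h, cscSq, neg_div]

lemma cscSq_eq_torusDist (u v : ℝ) : cscSq (u - v) = cscSq (torusDist u v) := by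
  obtain ⟨n, hn⟩ := exists_torusDist_eq_abs u v
  rw [hn, cscSq_abs, cscSq_add_two_pi_mul_int]

lemma sin_half_sub_ne_zero {u v : ℝ} (h : 0 < torusDist u v) : Real.sin ((u - v) / 2) ≠ 0 := by
  have hpos : 0 < Real.sin (torusDist u v / 2) :=
    Real.sin_pos_of_pos_of_lt_pi (by linarith) (by linarith [torusDist_le_pi u v, Real.pi_pos])
  have hcsc : 0 < cscSq (u - v) := by
    rw [cscSq_eq_torusDist]
    exact inv_pos.mpr (pow_pos hpos 2)
  exact pow_ne_zero_iff two_ne_zero |>.mp (inv_pos.mp hcsc).ne'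

lemma one_le_cscSq {t : ℝ} (h : Real.sin (t / 2) ≠ 0) : 1 ≤ cscSq t :=
  (one_le_inv₀ (by positivity)).mpr (Real.sin_sq_le_one _)

lemma cscSq_sub_one {t : ℝ} (h : Real.sin (t / 2) ≠ 0) :
    cscSq t - 1 = (Real.cos (t / 2) / Real.sin (t / 2)) ^ 2 := by
  rw [cscSq, div_pow, Real.cos_sq']
  field_simp

-- `csc² w = 1 + cot² w` and `w ≤ tan w`.
lemma cscSq_le {t : ℝ} (h0 : 0 < t) (hpi : t ≤ π) : cscSq t ≤ 4 / t ^ 2 + 1 := by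
  have hsin : 0 < Real.sin (t / 2) :=
    Real.sin_pos_of_pos_of_lt_pi (by linarith) (by linarith [Real.pi_pos])
  have hcos : 0 ≤ Real.cos (t / 2) :=
    Real.cos_nonneg_of_neg_pi_div_two_le_of_le (by linarith) (by linarith)
  have hcot : Real.cos (t / 2) / Real.sin (t / 2) ≤ 2 / t := by
    rcases hpi.eq_or_lt with rfl | hlt
    · rw [Real.cos_pi_div_two, zero_div]
      positivity
    · have hle := Real.le_tan (x := t / 2) (by linarith) (by linarith)
      have hinv := inv_anti₀ (by positivity) hle
      rwa [Real.tan_eq_sin_div_cos, inv_div, inv_div] at hinv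
  rw [← sub_le_iff_le_add, cscSq_sub_one hsin.ne', show 4 / t ^ 2 = (2 / t) ^ 2 by ring]
  gcongr

lemma cscSq_sub_le {u v : ℝ} (h : 0 < torusDist u v) :
    cscSq (u - v) ≤ 4 / torusDist u v ^ 2 + 1 := by
  rw [cscSq_eq_torusDist]
  exact cscSq_le h (torusDist_le_pi u v)

section Decay

variable (m : ℕ) {t : ℝ}

lemma dirichlet_zero_sq_le (h : Real.sin (t / 2) ≠ 0) :
    (m * dirichlet m 0 t) ^ 2 ≤ cscSq t := by
  rw [cscSq, ← one_div, le_div_iff₀ (by positivity), ← mul_pow, dirichlet_zero_mul_sin]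
  exact Real.sin_sq_le_one _

lemma dirichlet_one_sq_le (h : Real.sin (t / 2) ≠ 0) :
    4 * (m : ℝ) ^ 2 * dirichlet m 1 t ^ 2 ≤ cscSq t * (m ^ 2 + (cscSq t - 1)) := by
  have h0 := dirichlet_zero_mul_sin m t
  have h1 := dirichlet_one_mul_sin m t
  have hcsc := cscSq_sub_one h
  have hhalf := Real.sin_sq_add_cos_sq (m * t / 2)
  have hprod : cscSq t * (m ^ 2 + (cscSq t - 1)) =
      (m ^ 2 * Real.sin (t / 2) ^ 2 + Real.cos (t / 2) ^ 2) / (Real.sin (t / 2) ^ 2) ^ 2 := by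
    rw [hcsc, cscSq]
    field_simp
  set S := Real.sin (t / 2)
  set C := Real.cos (t / 2)
  set a := Real.sin (m * t / 2)
  set b := Real.cos (m * t / 2)
  have hlin : 2 * m * dirichlet m 1 t * S ^ 2 = m * b * S - a * C := by
    linear_combination 2 * S * h1 - C * h0
  rw [hprod, le_div_iff₀ (by positivity)]
  -- Lagrange's identity for `(m S, C)` and `(b, -a)`.
  have hlagrange :
      (m * b * S - a * C) ^ 2 + (m * S * a + b * C) ^ 2 = m ^ 2 * S ^ 2 + C ^ 2 := by
    linear_combination (m ^ 2 * S ^ 2 + C ^ 2) * hhalf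
  calc 4 * (m : ℝ) ^ 2 * dirichlet m 1 t ^ 2 * (S ^ 2) ^ 2
      = (2 * m * dirichlet m 1 t * S ^ 2) ^ 2 := by ring
    _ = (m * b * S - a * C) ^ 2 := by rw [hlin]
    _ ≤ m ^ 2 * S ^ 2 + C ^ 2 := by linarith [sq_nonneg (m * S * a + b * C)]

lemma abs_dirichlet_two_le (h : Real.sin (t / 2) ≠ 0) :
    |dirichlet m 2 t| ≤
      (m : ℝ) ^ 2 / 4 * |dirichlet m 0 t| + √(cscSq t - 1) * |dirichlet m 1 t| := by
  rcases Nat.eq_zero_or_pos m with rfl | hm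
  · simp [dirichlet]
  have hm1 : (1 : ℝ) ≤ m := Nat.one_le_cast.mpr hm
  have hsolve : dirichlet m 2 t = -(((m : ℝ) ^ 2 - 1) / 4 * dirichlet m 0 t) -
      Real.cos (t / 2) / Real.sin (t / 2) * dirichlet m 1 t := by
    field_simp
    linear_combination 4 * dirichlet_two_mul_sin m t
  rw [cscSq_sub_one h, Real.sqrt_sq_eq_abs, hsolve]
  refine (abs_sub _ _).trans ?_
  rw [abs_neg, abs_mul, abs_mul, abs_of_nonneg (a := ((m : ℝ) ^ 2 - 1) / 4) (by nlinarith)]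
  gcongr
  linarith

end Decay

/-! ### The kernel near the diagonal -/

section NearDiagonal

variable {m : ℕ} (t : ℝ)

lemma sum_freq_sq (m : ℕ) : ∑ k, freq m k ^ 2 = m * ((m : ℝ) ^ 2 - 1) / 12 := by
  have hsum : ∀ (c : ℝ) (n : ℕ), ∑ k ∈ Finset.range n, (k - c) ^ 2 =
      n * (n - 1) * (2 * n - 1) / 6 - c * (n * (n - 1)) + n * c ^ 2 := by
    intro c n
    induction n with
    | zero => simp
    | succ n ih => rw [Finset.sum_range_succ, ih]; push_cast; ring
  unfold freq
  rw [Fin.sum_univ_eq_sum_range fun k : ℕ => (k - ((m : ℝ) - 1) / 2) ^ 2, hsum]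
  ring

lemma sum_freq_pow_four (m : ℕ) :
    ∑ k, freq m k ^ 4 = m * ((m : ℝ) ^ 2 - 1) * (3 * (m : ℝ) ^ 2 - 7) / 240 := by
  have hsum : ∀ (c : ℝ) (n : ℕ), ∑ k ∈ Finset.range n, (k - c) ^ 4 =
      n * (n - 1) * (2 * n - 1) * (3 * n ^ 2 - 3 * n - 1) / 30 - 4 * c * (n * (n - 1) / 2) ^ 2 +
        6 * c ^ 2 * (n * (n - 1) * (2 * n - 1) / 6) - 4 * c ^ 3 * (n * (n - 1) / 2) +
        n * c ^ 4 := by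
    intro c n
    induction n with
    | zero => simp
    | succ n ih => rw [Finset.sum_range_succ, ih]; push_cast; ring
  unfold freq
  rw [Fin.sum_univ_eq_sum_range fun k : ℕ => (k - ((m : ℝ) - 1) / 2) ^ 4, hsum]
  ring

lemma avg_freq_sq_le (m : ℕ) : (∑ k, freq m k ^ 2) / m ≤ (m : ℝ) ^ 2 / 12 := by
  rw [sum_freq_sq]
  refine div_le_of_le_mul₀ (by positivity) (by positivity) ?_
  nlinarith [(m.cast_nonneg : (0 : ℝ) ≤ m)]

lemma le_avg_freq_sq (hm : 100 ≤ m) :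
    0.9999 * (m : ℝ) ^ 2 / 12 ≤ (∑ k, freq m k ^ 2) / m := by
  have hm' : (100 : ℝ) ≤ m := Nat.ofNat_le_cast.mpr hm
  rw [sum_freq_sq, le_div_iff₀ (by linarith)]
  have : (10000 : ℝ) ≤ (m : ℝ) ^ 2 := by nlinarith
  nlinarith

lemma avg_freq_pow_four_le (m : ℕ) : (∑ k, freq m k ^ 4) / m ≤ (m : ℝ) ^ 4 / 80 := by
  rcases Nat.eq_zero_or_pos m with rfl | hm
  · simp
  have hm1 : (1 : ℝ) ≤ m := Nat.one_le_cast.mpr hm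
  rw [sum_freq_pow_four, div_le_iff₀ (by linarith)]
  have : ((m : ℝ) ^ 2 - 1) * (3 * (m : ℝ) ^ 2 - 7) / 240 ≤ (m : ℝ) ^ 4 / 80 := by nlinarith
  nlinarith

lemma sq_sub_pow_four_le_mul_sin (x : ℝ) : x ^ 2 - x ^ 4 / 6 ≤ x * Real.sin x := by
  rcases le_total 0 x with h | h
  · nlinarith [Real.sin_ge_sub_cube h]
  · have := Real.sin_ge_sub_cube (neg_nonneg.mpr h)
    rw [Real.sin_neg] at this
    nlinarith

lemma abs_dirichlet_zero_le_one : |dirichlet m 0 t| ≤ 1 := by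
  rw [dirichlet_zero_apply, abs_div, Nat.abs_cast]
  refine div_le_one_of_le₀ ((Finset.abs_sum_le_sum_abs _ _).trans ?_) m.cast_nonneg
  exact (Finset.sum_le_sum fun k _ => Real.abs_cos_le_one _).trans_eq (by simp)

lemma abs_dirichlet_one_le : |dirichlet m 1 t| ≤ (m : ℝ) ^ 2 * |t| / 12 := by
  have hterm : ∀ k, |freq m k * Real.sin (freq m k * t)| ≤ |t| * freq m k ^ 2 := fun k => by
    rw [abs_mul, ← sq_abs (freq m k)]
    calc |freq m k| * |Real.sin (freq m k * t)|
        ≤ |freq m k| * |freq m k * t| :=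
          mul_le_mul_of_nonneg_left Real.abs_sin_le_abs (abs_nonneg _)
      _ = |t| * |freq m k| ^ 2 := by rw [abs_mul]; ring
  rw [dirichlet_one_apply, abs_neg, abs_div, Nat.abs_cast]
  calc |∑ k, freq m k * Real.sin (freq m k * t)| / m
      ≤ (∑ k, |t| * freq m k ^ 2) / m := by
        gcongr
        exact (Finset.abs_sum_le_sum_abs _ _).trans (Finset.sum_le_sum fun k _ => hterm k)
    _ = |t| * ((∑ k, freq m k ^ 2) / m) := by rw [← Finset.mul_sum, mul_div_assoc]
    _ ≤ |t| * ((m : ℝ) ^ 2 / 12) := mul_le_mul_of_nonneg_left (avg_freq_sq_le m) (abs_nonneg t)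
    _ = (m : ℝ) ^ 2 * |t| / 12 := by ring

lemma abs_dirichlet_two_le_sq_div : |dirichlet m 2 t| ≤ (m : ℝ) ^ 2 / 12 := by
  rw [dirichlet_two_apply, abs_neg, abs_div, Nat.abs_cast]
  refine le_trans ?_ (avg_freq_sq_le m)
  gcongr
  refine (Finset.abs_sum_le_sum_abs _ _).trans (Finset.sum_le_sum fun k _ => ?_)
  rw [abs_mul, abs_sq]
  exact mul_le_of_le_one_right (sq_nonneg _) (Real.abs_cos_le_one _)

lemma le_dirichlet_zero (hm : 0 < m) : 1 - (m * t) ^ 2 / 24 ≤ dirichlet m 0 t := by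
  have hm' : (m : ℝ) ≠ 0 := Nat.cast_ne_zero.mpr hm.ne'
  have hterm : ∑ k, (1 - t ^ 2 / 2 * freq m k ^ 2) ≤ ∑ k, Real.cos (freq m k * t) :=
    Finset.sum_le_sum fun k _ => by
      linarith [Real.one_sub_sq_div_two_le_cos (x := freq m k * t)]
  calc 1 - (m * t) ^ 2 / 24 = 1 - t ^ 2 / 2 * ((m : ℝ) ^ 2 / 12) := by ring
    _ ≤ 1 - t ^ 2 / 2 * ((∑ k, freq m k ^ 2) / m) :=
        sub_le_sub_left (mul_le_mul_of_nonneg_left (avg_freq_sq_le m) (by positivity)) _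
    _ = (∑ k, (1 - t ^ 2 / 2 * freq m k ^ 2)) / m := by
        rw [Finset.sum_sub_distrib, ← Finset.mul_sum]
        simp [sub_div, hm', mul_div_assoc]
    _ ≤ dirichlet m 0 t := by rw [dirichlet_zero_apply]; gcongr

lemma le_neg_mul_dirichlet_one (hm : 100 ≤ m) :
    (m * t) ^ 2 * (0.083325 - (m * t) ^ 2 / 480) ≤ -(t * dirichlet m 1 t) := by
  have hterm : ∑ k, (t ^ 2 * freq m k ^ 2 - t ^ 4 / 6 * freq m k ^ 4) ≤
      ∑ k, t * (freq m k * Real.sin (freq m k * t)) :=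
    Finset.sum_le_sum fun k _ => by linarith [sq_sub_pow_four_le_mul_sin (freq m k * t)]
  calc (m * t) ^ 2 * (0.083325 - (m * t) ^ 2 / 480)
      = t ^ 2 * (0.9999 * (m : ℝ) ^ 2 / 12) - t ^ 4 / 6 * ((m : ℝ) ^ 4 / 80) := by ring
    _ ≤ t ^ 2 * ((∑ k, freq m k ^ 2) / m) - t ^ 4 / 6 * ((∑ k, freq m k ^ 4) / m) :=
        sub_le_sub (mul_le_mul_of_nonneg_left (le_avg_freq_sq hm) (by positivity))
          (mul_le_mul_of_nonneg_left (avg_freq_pow_four_le m) (by positivity))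
    _ = (∑ k, (t ^ 2 * freq m k ^ 2 - t ^ 4 / 6 * freq m k ^ 4)) / m := by
        rw [Finset.sum_sub_distrib, ← Finset.mul_sum, ← Finset.mul_sum]
        ring
    _ ≤ (∑ k, t * (freq m k * Real.sin (freq m k * t))) / m := by gcongr
    _ = -(t * dirichlet m 1 t) := by
        rw [dirichlet_one_apply, ← Finset.mul_sum]
        ring

lemma le_neg_dirichlet_two (hm : 100 ≤ m) :
    (m : ℝ) ^ 2 * (0.083325 - (m * t) ^ 2 / 160) ≤ -dirichlet m 2 t := by
  have hterm : ∑ k, (freq m k ^ 2 - t ^ 2 / 2 * freq m k ^ 4) ≤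
      ∑ k, freq m k ^ 2 * Real.cos (freq m k * t) :=
    Finset.sum_le_sum fun k _ => by
      nlinarith [mul_le_mul_of_nonneg_left (Real.one_sub_sq_div_two_le_cos (x := freq m k * t))
        (sq_nonneg (freq m k))]
  calc (m : ℝ) ^ 2 * (0.083325 - (m * t) ^ 2 / 160)
      = 0.9999 * (m : ℝ) ^ 2 / 12 - t ^ 2 / 2 * ((m : ℝ) ^ 4 / 80) := by ring
    _ ≤ (∑ k, freq m k ^ 2) / m - t ^ 2 / 2 * ((∑ k, freq m k ^ 4) / m) :=
        sub_le_sub (le_avg_freq_sq hm)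
          (mul_le_mul_of_nonneg_left (avg_freq_pow_four_le m) (by positivity))
    _ = (∑ k, (freq m k ^ 2 - t ^ 2 / 2 * freq m k ^ 4)) / m := by
        rw [Finset.sum_sub_distrib, ← Finset.mul_sum]
        ring
    _ ≤ (∑ k, freq m k ^ 2 * Real.cos (freq m k * t)) / m := by gcongr
    _ = -dirichlet m 2 t := by rw [dirichlet_two_apply, neg_neg]

lemma dirichlet_zero_abs : dirichlet m 0 |t| = dirichlet m 0 t := by
  rcases abs_choice t with h | h <;> simp [h, dirichlet_zero_apply]

lemma sin_le_mul_dirichlet_zero (h : m * |t| / 2 < π) :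
    Real.sin (m * |t| / 2) ≤ m * |t| / 2 * dirichlet m 0 t := by
  rcases eq_or_ne t 0 with rfl | ht
  · simp
  rcases Nat.eq_zero_or_pos m with rfl | hm
  · simp
  have hm1 : (1 : ℝ) ≤ m := Nat.one_le_cast.mpr hm
  have hnum : 0 ≤ Real.sin (m * |t| / 2) :=
    Real.sin_nonneg_of_nonneg_of_le_pi (by positivity) h.le
  have hden : 0 < Real.sin (|t| / 2) :=
    Real.sin_pos_of_pos_of_lt_pi (by positivity) (by nlinarith [abs_nonneg t])
  have hprod := dirichlet_zero_mul_sin m |t|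
  rw [dirichlet_zero_abs] at hprod
  have hD : 0 ≤ m * dirichlet m 0 t := nonneg_of_mul_nonneg_left (hprod ▸ hnum) hden
  calc Real.sin (m * |t| / 2) = m * dirichlet m 0 t * Real.sin (|t| / 2) := hprod.symm
    _ ≤ m * dirichlet m 0 t * (|t| / 2) := by gcongr; exact Real.sin_le (by positivity)
    _ = m * |t| / 2 * dirichlet m 0 t := by ring

/-! The landscape function generated by the single point `0` is `1 - (dirichlet m 0)²`; its first
two derivatives are the expressions bounded below. -/

lemma curvature_le : -2 * dirichlet m 0 t * dirichlet m 2 t - 2 * dirichlet m 1 t ^ 2 ≤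
    (m : ℝ) ^ 2 / 6 := by
  have hprod : -(dirichlet m 0 t * dirichlet m 2 t) ≤ 1 * ((m : ℝ) ^ 2 / 12) := by
    refine (neg_le_abs _).trans ?_
    rw [abs_mul]
    gcongr
    exacts [abs_dirichlet_zero_le_one t, abs_dirichlet_two_le_sq_div t]
  nlinarith [sq_nonneg (dirichlet m 1 t)]

lemma le_curvature (hm : 100 ≤ m) (ht : |m * t| ≤ 2) :
    (m : ℝ) ^ 2 * (0.1666 - (m * t) ^ 2 / 30) ≤
      -2 * dirichlet m 0 t * dirichlet m 2 t - 2 * dirichlet m 1 t ^ 2 := by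
  have h0 := le_dirichlet_zero t (by lia : 0 < m)
  have h1 : dirichlet m 1 t ^ 2 ≤ ((m : ℝ) ^ 2 * |t| / 12) ^ 2 := by
    rw [← sq_abs (dirichlet m 1 t)]
    gcongr
    exact abs_dirichlet_one_le t
  have h2 := le_neg_dirichlet_two t hm
  have hsq : (m * t) ^ 2 ≤ 4 := by
    have := sq_le_sq' (by linarith [abs_nonneg (m * t)]) ht
    rw [sq_abs] at this
    linarith
  have hprod : (1 - (m * t) ^ 2 / 24) * ((m : ℝ) ^ 2 * (0.083325 - (m * t) ^ 2 / 160)) ≤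
      dirichlet m 0 t * -dirichlet m 2 t :=
    mul_le_mul h0 h2 (mul_nonneg (by positivity) (by linarith)) (by linarith)
  have hone : ((m : ℝ) ^ 2 * |t| / 12) ^ 2 = (m : ℝ) ^ 2 * ((m * t) ^ 2 / 144) := by
    rw [div_pow, mul_pow, sq_abs]
    ring
  nlinarith [mul_nonneg (sq_nonneg (m : ℝ)) (sq_nonneg (m * t)),
    mul_nonneg (sq_nonneg (m : ℝ)) (sq_nonneg ((m * t) ^ 2))]

lemma abs_slope_le : |-2 * dirichlet m 0 t * dirichlet m 1 t| ≤ (m : ℝ) ^ 2 * |t| / 6 := by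
  rw [abs_mul, abs_mul]
  calc |(-2 : ℝ)| * |dirichlet m 0 t| * |dirichlet m 1 t|
      ≤ 2 * 1 * ((m : ℝ) ^ 2 * |t| / 12) := by
        rw [abs_neg, abs_two]
        gcongr
        exacts [abs_dirichlet_zero_le_one t, abs_dirichlet_one_le t]
    _ = (m : ℝ) ^ 2 * |t| / 6 := by ring

lemma le_mul_slope_of_le {c d : ℝ} (hm : 100 ≤ m) (hc : 0 ≤ c) (hd : 0 ≤ d)
    (h0 : c ≤ dirichlet m 0 t) (h1 : d ≤ m * |t| * (0.083325 - (m * t) ^ 2 / 480)) :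
    2 * c * d * (m * |t|) ≤ t * (-2 * dirichlet m 0 t * dirichlet m 1 t) := by
  have hone := le_neg_mul_dirichlet_one t hm
  have hprod : d * (m * |t|) ≤ -(t * dirichlet m 1 t) := by
    refine (mul_le_mul_of_nonneg_right h1 (by positivity)).trans ?_
    calc m * |t| * (0.083325 - (m * t) ^ 2 / 480) * (m * |t|)
        = m ^ 2 * |t| ^ 2 * (0.083325 - (m * t) ^ 2 / 480) := by ring
      _ ≤ -(t * dirichlet m 1 t) := by rwa [sq_abs, ← mul_pow]
  calc 2 * c * d * (m * |t|) = 2 * (c * (d * (m * |t|))) := by ring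
    _ ≤ 2 * (dirichlet m 0 t * -(t * dirichlet m 1 t)) := by
        exact mul_le_mul_of_nonneg_left (mul_le_mul h0 hprod (by positivity) (hc.trans h0))
          two_pos.le
    _ = t * (-2 * dirichlet m 0 t * dirichlet m 1 t) := by ring

lemma le_mul_slope_near (hm : 100 ≤ m) (hlo : 0.977 ≤ m * |t|) (hhi : m * |t| ≤ 2) :
    0.1244 * (m * |t|) ≤ t * (-2 * dirichlet m 0 t * dirichlet m 1 t) := by
  have hu : (m * t) ^ 2 = (m * |t|) ^ 2 := by rw [mul_pow, mul_pow, sq_abs]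
  have h0 : 0.8333 ≤ dirichlet m 0 t := by
    refine le_trans ?_ (le_dirichlet_zero t (by lia))
    rw [hu]
    nlinarith
  have h1 := le_mul_slope_of_le (c := 0.8333) (d := 0.0794) t hm (by norm_num) (by norm_num) h0 (by
    rw [hu]
    nlinarith [mul_nonneg (sub_nonneg.mpr hlo) (sub_nonneg.mpr hhi)])
  linarith

lemma le_dirichlet_zero_far (hlo : 3.4 ≤ m * |t|) (hhi : m * |t| ≤ 4.26) :
    0.393 ≤ dirichlet m 0 t := by
  have hpi := Real.pi_gt_d4
  have hpi' := Real.pi_lt_d4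
  set w := m * |t| / 2 with hw
  have hsin : 0.393 * w ≤ Real.sin w := by
    have hcube := Real.sin_ge_sub_cube (x := π - w) (by linarith)
    rw [Real.sin_pi_sub] at hcube
    have hv : 1.0115 ≤ π - w := by linarith
    have hv' : π - w ≤ 1.4416 := by linarith
    nlinarith [mul_nonneg (sub_nonneg.mpr hv) (sub_nonneg.mpr hv')]
  refine le_of_mul_le_mul_left ?_ (show 0 < w by linarith)
  rw [mul_comm]
  exact hsin.trans (sin_le_mul_dirichlet_zero t (by linarith))

lemma le_mul_slope_far (hm : 100 ≤ m) (hlo : 2 ≤ m * |t|) (hhi : m * |t| ≤ 4.26) :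
    0.147 * (m * |t|) ≤ t * (-2 * dirichlet m 0 t * dirichlet m 1 t) := by
  have hu : (m * t) ^ 2 = (m * |t|) ^ 2 := by rw [mul_pow, mul_pow, sq_abs]
  rcases le_total (m * |t|) 3.4 with hmid | hmid
  · have h0 : 0.518 ≤ dirichlet m 0 t := by
      refine le_trans ?_ (le_dirichlet_zero t (by lia))
      rw [hu]
      nlinarith
    have h1 := le_mul_slope_of_le (c := 0.518) (d := 0.1499) t hm (by norm_num) (by norm_num) h0 (by
      rw [hu]
      nlinarith [mul_nonneg (sub_nonneg.mpr hlo) (sub_nonneg.mpr hmid)])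
    linarith
  · have h1 := le_mul_slope_of_le (c := 0.393) (d := 0.1938) t hm (by norm_num) (by norm_num)
      (le_dirichlet_zero_far t hmid hhi) (by
        rw [hu]
        nlinarith [mul_nonneg (sub_nonneg.mpr hmid) (sub_nonneg.mpr hhi)])
    linarith

end NearDiagonal

/-! ### Sums over separated points -/

section SeparatedSums

variable {ι : Type*} {S : Finset ι} {z : ι → ℝ}

lemma sum_le_sum_range_of_separated {g : ℝ → ℝ} {c : ℝ} {L : ℕ}
    (hz : ∀ k ∈ S, z k ∈ Set.Ico c (c + L))
    (hsep : (S : Set ι).Pairwise fun k l => 1 ≤ |z k - z l|)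
    (hg : AntitoneOn g (Set.Ici c)) (hg0 : ∀ y ∈ Set.Ici c, 0 ≤ g y) :
    ∑ k ∈ S, g (z k) ≤ ∑ n ∈ Finset.range L, g (c + n) := by
  classical
  have hfloor : ∀ k ∈ S, c + (⌊z k - c⌋₊ : ℝ) ≤ z k := fun k hk => by
    linarith [Nat.floor_le (sub_nonneg.mpr (hz k hk).1)]
  have hinj : Set.InjOn (fun k => ⌊z k - c⌋₊) (S : Set ι) := by
    intro k hk l hl hkl
    by_contra hne
    have hk' := Nat.lt_floor_add_one (z k - c)
    have hl' := Nat.lt_floor_add_one (z l - c)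
    rw [show ⌊z k - c⌋₊ = ⌊z l - c⌋₊ from hkl] at hk'
    have hlt : |z k - z l| < 1 := by
      have := hfloor k hk
      rw [show ⌊z k - c⌋₊ = ⌊z l - c⌋₊ from hkl] at this
      rw [abs_lt]
      constructor <;> linarith [hfloor l hl]
    exact (hsep hk hl hne).not_gt hlt
  calc ∑ k ∈ S, g (z k) ≤ ∑ k ∈ S, g (c + ⌊z k - c⌋₊) :=
        Finset.sum_le_sum fun k hk => hg (by simp) (hz k hk).1 (hfloor k hk)
    _ = ∑ n ∈ S.image fun k => ⌊z k - c⌋₊, g (c + n) := by rw [Finset.sum_image hinj]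
    _ ≤ ∑ n ∈ Finset.range L, g (c + n) := by
        refine Finset.sum_le_sum_of_subset_of_nonneg ?_ fun n _ _ => hg0 _ (by simp)
        intro n hn
        obtain ⟨k, hk, rfl⟩ := Finset.mem_image.mp hn
        rw [Finset.mem_range, Nat.floor_lt (sub_nonneg.mpr (hz k hk).1)]
        linarith [(hz k hk).2]

lemma sum_le_sum_range_add_sum_range_of_separated {g : ℝ → ℝ} {c₁ c₂ : ℝ} {L : ℕ}
    (hz : ∀ k ∈ S, z k ∈ Set.Ico c₁ (c₁ + L) ∨ -z k ∈ Set.Ico c₂ (c₂ + L))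
    (hsep : (S : Set ι).Pairwise fun k l => 1 ≤ |z k - z l|)
    (heven : ∀ y, g (-y) = g y) (hg₁ : AntitoneOn g (Set.Ici c₁)) (hg₂ : AntitoneOn g (Set.Ici c₂))
    (hg0 : ∀ y, 0 ≤ g y) :
    ∑ k ∈ S, g (z k) ≤
      ∑ n ∈ Finset.range L, g (c₁ + n) + ∑ n ∈ Finset.range L, g (c₂ + n) := by
  classical
  rw [← Finset.sum_filter_add_sum_filter_not S fun k => z k ∈ Set.Ico c₁ (c₁ + L)]
  refine add_le_add (sum_le_sum_range_of_separated (fun k hk => (Finset.mem_filter.mp hk).2)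
    (hsep.mono (Finset.coe_subset.mpr (Finset.filter_subset _ _))) hg₁ fun y _ => hg0 y) ?_
  simp_rw [← heven (z _)]
  refine sum_le_sum_range_of_separated (z := fun k => -z k) (fun k hk => ?_) ?_ hg₂ fun y _ => hg0 y
  · obtain ⟨hkS, hk⟩ := Finset.mem_filter.mp hk
    exact (hz k hkS).resolve_left hk
  · intro k hk l hl hkl
    have := hsep (Finset.mem_filter.mp hk).1 (Finset.mem_filter.mp hl).1 hkl
    rwa [← neg_sub', abs_neg]

lemma antitoneOn_div_sq_add_one {A c : ℝ} (hA : 0 ≤ A) (hc : 0 < c) :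
    AntitoneOn (fun y => A / y ^ 2 + 1) (Set.Ici c) := by
  intro a ha b _ hab
  have : 0 < a := hc.trans_le ha
  dsimp only
  gcongr

lemma sum_range_inv_sq_le (N : ℕ) : ∑ n ∈ Finset.range N, ((1 + n : ℝ) ^ 2)⁻¹ ≤ π ^ 2 / 6 := by
  have h := (hasSum_nat_add_iff' 1).mpr hasSum_zeta_two
  simp only [Finset.range_one, Finset.sum_singleton, Nat.cast_zero, ne_eq, OfNat.ofNat_ne_zero,
    not_false_eq_true, zero_pow, div_zero, sub_zero] at h
  refine le_trans (le_of_eq ?_) (sum_le_hasSum (Finset.range N) (fun n _ => by positivity) h)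
  simp [add_comm]

-- Telescoping: `(n + 3/2)⁻² ≤ (n + 1)⁻¹ - (n + 2)⁻¹`.
lemma sum_range_inv_half_add_sq_le (N : ℕ) :
    ∑ n ∈ Finset.range N, ((1 / 2 + n : ℝ) ^ 2)⁻¹ ≤ 5 := by
  have hsucc : ∀ N : ℕ, ∑ n ∈ Finset.range (N + 1), ((1 / 2 + n : ℝ) ^ 2)⁻¹ ≤
      5 - 1 / (N + 1 : ℝ) := by
    intro N
    induction N with
    | zero => norm_num
    | succ n ih =>
      have hstep : ((1 / 2 + (n + 1 : ℕ) : ℝ) ^ 2)⁻¹ ≤ 1 / (n + 1 : ℝ) - 1 / ((n + 1 : ℕ) + 1) := by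
        push_cast
        rw [div_sub_div _ _ (by positivity) (by positivity), ← one_div,
          div_le_div_iff₀ (by positivity) (by positivity)]
        nlinarith
      rw [Finset.sum_range_succ]
      linarith
  refine (Finset.sum_le_sum_of_subset_of_nonneg (Finset.range_subset_range.mpr N.le_succ)
    fun n _ _ => by positivity).trans ((hsucc N).trans ?_)
  have : 0 ≤ 1 / (N + 1 : ℝ) := by positivity
  linarith

lemma inv_add_sq_add_inv_sub_sq_le {p y b : ℝ} (hp : 1 ≤ p) (hy : |y| ≤ b) (hb : b < 1) :
    ((p + y) ^ 2)⁻¹ + ((p - y) ^ 2)⁻¹ ≤ 2 * ((1 + b ^ 2) / (1 - b ^ 2) ^ 2) * (p ^ 2)⁻¹ := by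
  have hb0 : 0 ≤ b := (abs_nonneg y).trans hy
  have hy' := abs_le.mp hy
  have hyb : y ^ 2 ≤ b ^ 2 := sq_le_sq' (by linarith) hy'.2
  have hb1 : 0 < 1 - b ^ 2 := by nlinarith
  have hadd : 0 < p + y := by linarith
  have hsub : 0 < p - y := by linarith
  set w := y ^ 2 / p ^ 2 with hw
  have : 0 ≤ w := by positivity
  have hwb : w ≤ b ^ 2 := (div_le_self (sq_nonneg y) (one_le_pow₀ hp)).trans hyb
  have hsum : ((p + y) ^ 2)⁻¹ + ((p - y) ^ 2)⁻¹ = 2 * ((1 + w) / (1 - w) ^ 2) * (p ^ 2)⁻¹ := by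
    have : 1 - w = (p + y) * (p - y) / p ^ 2 := by
      rw [hw]
      field_simp
      ring
    rw [this, hw]
    field_simp
    ring
  rw [hsum]
  gcongr

lemma sum_div_sq_add_one_le_near {A H b y : ℝ} (hA : 0 ≤ A) (hH : 0 ≤ H) (hb : b < 1)
    (hy : |y| ≤ b) (hzH : ∀ k ∈ S, |z k| ≤ H) (hzy : ∀ k ∈ S, 1 ≤ |z k - y|)
    (hsep : (S : Set ι).Pairwise fun k l => 1 ≤ |z k - z l|) :
    ∑ k ∈ S, (A / z k ^ 2 + 1) ≤
      A * ((1 + b ^ 2) / (1 - b ^ 2) ^ 2) * (π ^ 2 / 3) + 2 * (H + b) := by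
  have hb0 : 0 ≤ b := (abs_nonneg y).trans hy
  have hy' := abs_le.mp hy
  set L := ⌊H + b⌋₊
  have hL : (L : ℝ) ≤ H + b := Nat.floor_le (by linarith)
  have hL' : H + b < L + 1 := Nat.lt_floor_add_one _
  have hmem : ∀ k ∈ S, z k ∈ Set.Ico (1 + y) (1 + y + L) ∨ -z k ∈ Set.Ico (1 - y) (1 - y + L) := by
    intro k hk
    have hk' := abs_le.mp (hzH k hk)
    rcases le_abs.mp (hzy k hk) with h | h
    · exact Or.inl ⟨by linarith, by linarith⟩
    · exact Or.inr ⟨by linarith, by linarith⟩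
  have hpair : ∀ n : ℕ, A / (1 + y + n) ^ 2 + 1 + (A / (1 - y + n) ^ 2 + 1) ≤
      A * (2 * ((1 + b ^ 2) / (1 - b ^ 2) ^ 2) * ((1 + n : ℝ) ^ 2)⁻¹) + 2 := by
    intro n
    have h := mul_le_mul_of_nonneg_left
      (inv_add_sq_add_inv_sub_sq_le (p := 1 + n) (by simp) hy hb) hA
    rw [div_eq_mul_inv, div_eq_mul_inv, add_right_comm 1 y, sub_add_eq_add_sub 1 y]
    linarith
  calc ∑ k ∈ S, (A / z k ^ 2 + 1)
      ≤ ∑ n ∈ Finset.range L, (A / (1 + y + n) ^ 2 + 1) +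
          ∑ n ∈ Finset.range L, (A / (1 - y + n) ^ 2 + 1) :=
        sum_le_sum_range_add_sum_range_of_separated hmem hsep (by simp)
          (antitoneOn_div_sq_add_one hA (by linarith)) (antitoneOn_div_sq_add_one hA (by linarith))
          fun _ => by positivity
    _ ≤ ∑ n ∈ Finset.range L,
          (A * (2 * ((1 + b ^ 2) / (1 - b ^ 2) ^ 2) * ((1 + n : ℝ) ^ 2)⁻¹) + 2) := by
        rw [← Finset.sum_add_distrib]
        exact Finset.sum_le_sum fun n _ => hpair n
    _ = A * (2 * ((1 + b ^ 2) / (1 - b ^ 2) ^ 2) * ∑ n ∈ Finset.range L, ((1 + n : ℝ) ^ 2)⁻¹) +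
          2 * L := by
        rw [Finset.sum_add_distrib, ← Finset.mul_sum, ← Finset.mul_sum, Finset.sum_const,
          Finset.card_range, nsmul_eq_mul, mul_comm (L : ℝ)]
    _ ≤ A * (2 * ((1 + b ^ 2) / (1 - b ^ 2) ^ 2) * (π ^ 2 / 6)) + 2 * (H + b) := by
        gcongr
        exact sum_range_inv_sq_le L
    _ = A * ((1 + b ^ 2) / (1 - b ^ 2) ^ 2) * (π ^ 2 / 3) + 2 * (H + b) := by ring

lemma sum_div_sq_add_one_le_far {A H : ℝ} (hA : 0 ≤ A) (hH : 0 ≤ H)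
    (hzH : ∀ k ∈ S, |z k| ≤ H) (hz : ∀ k ∈ S, 1 / 2 ≤ |z k|)
    (hsep : (S : Set ι).Pairwise fun k l => 1 ≤ |z k - z l|) :
    ∑ k ∈ S, (A / z k ^ 2 + 1) ≤ 10 * A + 2 * H + 1 := by
  set L := ⌊H + 1 / 2⌋₊
  have hL : (L : ℝ) ≤ H + 1 / 2 := Nat.floor_le (by linarith)
  have hL' : H + 1 / 2 < L + 1 := Nat.lt_floor_add_one _
  have hmem : ∀ k ∈ S, z k ∈ Set.Ico (1 / 2) (1 / 2 + (L : ℝ)) ∨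
      -z k ∈ Set.Ico (1 / 2) (1 / 2 + (L : ℝ)) := by
    intro k hk
    have hk' := abs_le.mp (hzH k hk)
    rcases le_abs.mp (hz k hk) with h | h
    · exact Or.inl ⟨h, by linarith⟩
    · exact Or.inr ⟨h, by linarith⟩
  have hanti := antitoneOn_div_sq_add_one hA (one_half_pos (α := ℝ))
  have hhalf : ∑ n ∈ Finset.range L, (A / (1 / 2 + n : ℝ) ^ 2 + 1) ≤ 5 * A + (H + 1 / 2) := by
    simp_rw [div_eq_mul_inv A]
    rw [Finset.sum_add_distrib, ← Finset.mul_sum, Finset.sum_const, Finset.card_range,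
      nsmul_eq_mul, mul_one, mul_comm 5]
    gcongr
    exact sum_range_inv_half_add_sq_le L
  linarith [sum_le_sum_range_add_sum_range_of_separated hmem hsep (by simp) hanti hanti
    fun _ => by positivity]

end SeparatedSums

section SeparatedTorus

variable {ι : Type*} {x : ι → ℝ} {δ t : ℝ}

lemma exists_abs_eq_torusDist_div (hδ : 0 < δ)
    (hsep : Pairwise fun j k => δ ≤ torusDist (x j) (x k)) (t : ℝ) :
    ∃ z : ι → ℝ, (∀ k, |z k| = torusDist t (x k) / δ) ∧ Pairwise fun k l => 1 ≤ |z k - z l| := by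
  choose n hn using fun k => exists_torusDist_eq_abs t (x k)
  refine ⟨fun k => (t - x k + 2 * π * n k) / δ, fun k => ?_, fun k l hkl => ?_⟩
  · rw [hn, abs_div, abs_of_pos hδ]
  · beta_reduce
    rw [← sub_div, abs_div, abs_of_pos hδ, one_le_div₀ hδ]
    refine (hsep hkl.symm).trans ((torusDist_le_abs_sub_add _ _ (n k - n l)).trans_eq ?_)
    push_cast
    ring_nf

lemma cscSq_sub_le_of_abs_eq {y : ℝ} {k : ι} (hδ : 0 < δ) (hpos : 0 < torusDist t (x k))
    (hy : |y| = torusDist t (x k) / δ) : cscSq (t - x k) ≤ 4 / δ ^ 2 / y ^ 2 + 1 := by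
  refine (cscSq_sub_le hpos).trans_eq ?_
  rw [← sq_abs y, hy, div_pow]
  field_simp

lemma le_torusDist_of_near {b : ℝ} {j k : ι} (hjk : j ≠ k)
    (hsep : Pairwise fun j k => δ ≤ torusDist (x j) (x k)) (hj : torusDist t (x j) ≤ b * δ) :
    (1 - b) * δ ≤ torusDist t (x k) := by
  have h := torusDist_triangle (x j) t (x k)
  rw [torusDist_comm (x j) t] at h
  linarith [hsep hjk]

variable [Fintype ι]

lemma sum_erase_cscSq_le_near [DecidableEq ι] {b : ℝ} (hδ : 0 < δ) (hb : b < 1)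
    (hsep : Pairwise fun j k => δ ≤ torusDist (x j) (x k)) (j : ι)
    (hj : torusDist t (x j) ≤ b * δ) :
    ∑ k ∈ Finset.univ.erase j, cscSq (t - x k) ≤
      4 / δ ^ 2 * ((1 + b ^ 2) / (1 - b ^ 2) ^ 2) * (π ^ 2 / 3) + 2 * (π / δ + b) := by
  obtain ⟨z, hz, hzsep⟩ := exists_abs_eq_torusDist_div hδ hsep t
  calc ∑ k ∈ Finset.univ.erase j, cscSq (t - x k)
      ≤ ∑ k ∈ Finset.univ.erase j, (4 / δ ^ 2 / z k ^ 2 + 1) :=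
        Finset.sum_le_sum fun k hk => cscSq_sub_le_of_abs_eq hδ
          ((mul_pos (sub_pos.mpr hb) hδ).trans_le
            (le_torusDist_of_near (Finset.ne_of_mem_erase hk).symm hsep hj)) (hz k)
    _ ≤ _ := by
        refine sum_div_sq_add_one_le_near (y := z j) (by positivity) (by positivity) hb ?_ ?_ ?_ ?_
        · rwa [hz, div_le_iff₀ hδ]
        · intro k _
          rw [hz]
          gcongr
          exact torusDist_le_pi _ _
        · exact fun k hk => hzsep (Finset.ne_of_mem_erase hk)
        · exact fun k _ l _ hkl => hzsep hkl

lemma sum_cscSq_le_far {η : ℝ} (hδ : 0 < δ) (hη : 0 < η)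
    (hsep : Pairwise fun j k => δ ≤ torusDist (x j) (x k)) (ht : ∀ k, η ≤ torusDist t (x k)) :
    ∑ k, cscSq (t - x k) ≤ 4 / η ^ 2 + 40 / δ ^ 2 + 2 * (π / δ) + 2 := by
  classical
  rcases isEmpty_or_nonempty ι with hι | hι
  · rw [Fintype.sum_empty]
    positivity
  obtain ⟨z, hz, hzsep⟩ := exists_abs_eq_torusDist_div hδ hsep t
  obtain ⟨j, hj⟩ := Finite.exists_min fun k => |z k|
  have hnearest : cscSq (t - x j) ≤ 4 / η ^ 2 + 1 := by
    refine (cscSq_sub_le (hη.trans_le (ht j))).trans ?_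
    gcongr
    exact ht j
  have hrest : ∑ k ∈ Finset.univ.erase j, cscSq (t - x k) ≤
      10 * (4 / δ ^ 2) + 2 * (π / δ) + 1 := by
    refine (Finset.sum_le_sum fun k _ =>
      cscSq_sub_le_of_abs_eq hδ (hη.trans_le (ht k)) (hz k)).trans
      (sum_div_sq_add_one_le_far (by positivity) (by positivity) ?_ ?_ ?_)
    · intro k _
      rw [hz]
      gcongr
      exact torusDist_le_pi _ _
    · intro k hk
      linarith [hj k, abs_sub (z k) (z j), hzsep (Finset.ne_of_mem_erase hk)]
    · exact fun k _ l _ hkl => hzsep hkl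
  rw [← Finset.add_sum_erase _ _ (Finset.mem_univ j)]
  linarith [show 10 * (4 / δ ^ 2) = 40 / δ ^ 2 by ring]

end SeparatedTorus

/-! ### Projections -/

section Projections

variable {ι 𝕜 E : Type*} [RCLike 𝕜] [NormedAddCommGroup E] [InnerProductSpace 𝕜 E]

lemma sum_norm_sub_smul_sq_le {S : Finset ι} {f g : ι → 𝕜} {α β : ℝ} (c : 𝕜)
    (hα : 0 ≤ α) (hβ : 0 ≤ β) (hf : ∑ k ∈ S, ‖f k‖ ^ 2 ≤ α ^ 2) (hg : ∑ k ∈ S, ‖g k‖ ^ 2 ≤ β ^ 2) :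
    ∑ k ∈ S, ‖f k - c * g k‖ ^ 2 ≤ (α + ‖c‖ * β) ^ 2 := by
  have hcross : ∑ k ∈ S, ‖f k‖ * ‖g k‖ ≤ α * β := by
    refine abs_le_of_sq_le_sq' ?_ (mul_nonneg hα hβ) |>.2
    calc (∑ k ∈ S, ‖f k‖ * ‖g k‖) ^ 2 ≤ (∑ k ∈ S, ‖f k‖ ^ 2) * ∑ k ∈ S, ‖g k‖ ^ 2 :=
          Finset.sum_mul_sq_le_sq_mul_sq _ _ _
      _ ≤ α ^ 2 * β ^ 2 := by gcongr
      _ = (α * β) ^ 2 := (mul_pow _ _ _).symm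
  calc ∑ k ∈ S, ‖f k - c * g k‖ ^ 2 ≤ ∑ k ∈ S, (‖f k‖ + ‖c‖ * ‖g k‖) ^ 2 := by
        gcongr with k
        rw [← norm_mul]
        exact norm_sub_le _ _
    _ = ∑ k ∈ S, ‖f k‖ ^ 2 + 2 * ‖c‖ * ∑ k ∈ S, ‖f k‖ * ‖g k‖ +
          ‖c‖ ^ 2 * ∑ k ∈ S, ‖g k‖ ^ 2 := by
        rw [Finset.mul_sum, Finset.mul_sum, ← Finset.sum_add_distrib, ← Finset.sum_add_distrib]
        exact Finset.sum_congr rfl fun k _ => by ring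
    _ ≤ α ^ 2 + 2 * ‖c‖ * (α * β) + ‖c‖ ^ 2 * β ^ 2 := by gcongr
    _ = (α + ‖c‖ * β) ^ 2 := by ring

lemma mul_norm_sq_le_sum_norm_inner_sq [Fintype ι] {v : ι → E} {A : ℝ} (hA : 0 ≤ A)
    (hv : ∀ c : ι → 𝕜, A * ∑ k, ‖c k‖ ^ 2 ≤ ‖∑ k, c k • v k‖ ^ 2) {y : E}
    (hy : y ∈ Submodule.span 𝕜 (Set.range v)) :
    A * ‖y‖ ^ 2 ≤ ∑ k, ‖inner 𝕜 (v k) y‖ ^ 2 := by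
  obtain ⟨c, rfl⟩ := (Submodule.mem_span_range_iff_exists_fun 𝕜).mp hy
  set y := ∑ k, c k • v k with hy_def
  rcases eq_or_ne y 0 with h0 | h0
  · rw [h0, norm_zero]
    simp
  have hsq : ‖y‖ ^ 2 ≤ ∑ k, ‖c k‖ * ‖inner 𝕜 (v k) y‖ := by
    calc ‖y‖ ^ 2 = ‖inner 𝕜 y y‖ := by rw [inner_self_eq_norm_sq_to_K]; simp
      _ = ‖∑ k, starRingEnd 𝕜 (c k) * inner 𝕜 (v k) y‖ := by
          conv_lhs => rw [hy_def, sum_inner, ← hy_def]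
          simp_rw [inner_smul_left]
      _ ≤ ∑ k, ‖c k‖ * ‖inner 𝕜 (v k) y‖ :=
          norm_sum_le_of_le _ fun k _ => by rw [norm_mul, RCLike.norm_conj]
  have hpos : 0 < ‖y‖ ^ 2 := by positivity
  refine le_of_mul_le_mul_left ?_ hpos
  calc ‖y‖ ^ 2 * (A * ‖y‖ ^ 2) = A * (‖y‖ ^ 2) ^ 2 := by ring
    _ ≤ A * (∑ k, ‖c k‖ * ‖inner 𝕜 (v k) y‖) ^ 2 := by gcongr
    _ ≤ A * ((∑ k, ‖c k‖ ^ 2) * ∑ k, ‖inner 𝕜 (v k) y‖ ^ 2) := by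
        gcongr
        exact Finset.sum_mul_sq_le_sq_mul_sq _ _ _
    _ = (A * ∑ k, ‖c k‖ ^ 2) * ∑ k, ‖inner 𝕜 (v k) y‖ ^ 2 := by ring
    _ ≤ ‖y‖ ^ 2 * ∑ k, ‖inner 𝕜 (v k) y‖ ^ 2 := by
        gcongr
        exact hv c

lemma mul_norm_starProjection_sq_le [Fintype ι] {v : ι → E} {A : ℝ} (hA : 0 ≤ A)
    (hv : ∀ c : ι → 𝕜, A * ∑ k, ‖c k‖ ^ 2 ≤ ‖∑ k, c k • v k‖ ^ 2) {V : Submodule 𝕜 E}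
    [V.HasOrthogonalProjection] (hV : V = Submodule.span 𝕜 (Set.range v)) (w : E) :
    A * ‖V.starProjection w‖ ^ 2 ≤ ∑ k, ‖inner 𝕜 (v k) w‖ ^ 2 := by
  have hinner : ∀ k, inner 𝕜 (v k) (V.starProjection w) = inner 𝕜 (v k) w := fun k => by
    rw [← V.inner_starProjection_left_eq_right,
      V.starProjection_eq_self_iff.mpr (hV ▸ Submodule.subset_span ⟨k, rfl⟩)]
  simp_rw [← hinner]
  exact mul_norm_sq_le_sum_norm_inner_sq hA hv (hV ▸ V.starProjection_apply_mem w)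

lemma re_inner_starProjection_le (V : Submodule 𝕜 E) [V.HasOrthogonalProjection]
    (W : Submodule 𝕜 E) [W.HasOrthogonalProjection] (w : E) :
    RCLike.re (inner 𝕜 (W.starProjection w) w) ≤
      ‖V.starProjection w‖ ^ 2 + ‖V.starProjection - W.starProjection‖ * ‖w‖ ^ 2 := by
  have hdiff : RCLike.re (inner 𝕜 ((W.starProjection - V.starProjection) w) w) ≤
      ‖V.starProjection - W.starProjection‖ * ‖w‖ ^ 2 := by
    refine (re_inner_le_norm _ _).trans ?_
    rw [norm_sub_rev V.starProjection, sq, ← mul_assoc]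
    gcongr
    exact ContinuousLinearMap.le_opNorm _ _
  rw [_root_.sub_apply, inner_sub_left, map_sub, V.re_inner_starProjection_eq_normSq] at hdiff
  exact sub_le_iff_le_add'.mp hdiff

/-- The projection onto the part of `V` orthogonal to `u`; for a unit vector `u ∈ V` it is what
remains of the projection onto `V` once the contribution of `u` is removed. -/
def deflation (V : Submodule 𝕜 E) [FiniteDimensional 𝕜 V] (u : E) : E →L[𝕜] E :=
  (V ⊓ (𝕜 ∙ u)ᗮ).starProjection

variable {V : Submodule 𝕜 E} [FiniteDimensional 𝕜 V] {u : E}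

lemma deflation_apply (hu : u ∈ V) (hu1 : ‖u‖ = 1) (w : E) :
    deflation V u w = V.starProjection w - inner 𝕜 u w • u := by
  refine Submodule.eq_starProjection_of_mem_of_inner_eq_zero (K := V ⊓ (𝕜 ∙ u)ᗮ) ?_ fun z hz => ?_
  · refine ⟨V.sub_mem (V.starProjection_apply_mem w) (V.smul_mem _ hu), ?_⟩
    rw [SetLike.mem_coe, Submodule.mem_orthogonal_singleton_iff_inner_right, inner_sub_right,
      ← V.inner_starProjection_left_eq_right, V.starProjection_eq_self_iff.mpr hu, inner_smul_right,
      inner_self_eq_norm_sq_to_K, hu1]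
    simp
  · rw [sub_sub_eq_add_sub, inner_sub_left, inner_add_left, inner_smul_left,
      Submodule.mem_orthogonal_singleton_iff_inner_right.mp hz.2, mul_zero, add_zero,
      ← inner_sub_left, Submodule.starProjection_inner_eq_zero w z hz.1]

lemma inner_starProjection_eq_inner_deflation_add (hu : u ∈ V) (hu1 : ‖u‖ = 1) (v w : E) :
    inner 𝕜 (V.starProjection v) w =
      inner 𝕜 (deflation V u v) (deflation V u w) + inner 𝕜 v u * inner 𝕜 u w := by
  have hres : inner 𝕜 (deflation V u v) (deflation V u w) = inner 𝕜 (deflation V u v) w := by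
    unfold deflation
    rw [← Submodule.inner_starProjection_left_eq_right, Submodule.starProjection_eq_self_iff.mpr
      (Submodule.starProjection_apply_mem _ _)]
  rw [hres, deflation_apply hu hu1, inner_sub_left, inner_smul_left, inner_conj_symm]
  ring

lemma deflation_self (u : E) : deflation V u u = 0 := by
  refine Submodule.eq_starProjection_of_mem_of_inner_eq_zero (K := V ⊓ (𝕜 ∙ u)ᗮ)
    (Submodule.zero_mem _) fun z hz => ?_
  rw [sub_zero, Submodule.mem_orthogonal_singleton_iff_inner_right.mp hz.2]

lemma abs_re_inner_starProjection_sub_le {W : Submodule 𝕜 E} [W.HasOrthogonalProjection]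
    (hu : u ∈ V) (hu1 : ‖u‖ = 1) {v w : E} {a b : ℝ} (ha : inner 𝕜 v u = (a : 𝕜))
    (hb : inner 𝕜 u w = (b : 𝕜)) :
    |RCLike.re (inner 𝕜 (W.starProjection v) w) - a * b| ≤
      ‖deflation V u v‖ * ‖deflation V u w‖ +
        ‖V.starProjection - W.starProjection‖ * ‖v‖ * ‖w‖ := by
  have hsplit : inner 𝕜 (W.starProjection v) w - ((a * b : ℝ) : 𝕜) =
      inner 𝕜 (deflation V u v) (deflation V u w) -
        inner 𝕜 ((V.starProjection - W.starProjection) v) w := by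
    rw [_root_.sub_apply, inner_sub_left,
      inner_starProjection_eq_inner_deflation_add hu hu1, ha, hb]
    push_cast
    ring
  calc |RCLike.re (inner 𝕜 (W.starProjection v) w) - a * b|
      = |RCLike.re (inner 𝕜 (W.starProjection v) w - ((a * b : ℝ) : 𝕜))| := by
        rw [map_sub, RCLike.ofReal_re]
    _ ≤ ‖inner 𝕜 (W.starProjection v) w - ((a * b : ℝ) : 𝕜)‖ := RCLike.abs_re_le_norm _
    _ ≤ ‖inner 𝕜 (deflation V u v) (deflation V u w)‖ +
          ‖inner 𝕜 ((V.starProjection - W.starProjection) v) w‖ := hsplit ▸ norm_sub_le _ _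
    _ ≤ _ := by
        refine add_le_add (norm_inner_le_norm _ _) ((norm_inner_le_norm _ _).trans ?_)
        gcongr
        exact ContinuousLinearMap.le_opNorm _ _

lemma mul_norm_deflation_sq_le [Fintype ι] [DecidableEq ι] {v : ι → E} {A α β : ℝ} (hA : 0 ≤ A)
    (hα : 0 ≤ α) (hβ : 0 ≤ β)
    (hV : V = Submodule.span 𝕜 (Set.range v))
    (hv : ∀ c : ι → 𝕜, A * ∑ k, ‖c k‖ ^ 2 ≤ ‖∑ k, c k • v k‖ ^ 2) {j : ι} (hj : ‖v j‖ = 1) {w : E}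
    (hw : ∑ k ∈ Finset.univ.erase j, ‖inner 𝕜 (v k) w‖ ^ 2 ≤ α ^ 2)
    (hvj : ∑ k ∈ Finset.univ.erase j, ‖inner 𝕜 (v k) (v j)‖ ^ 2 ≤ β ^ 2) :
    A * ‖deflation V (v j) w‖ ^ 2 ≤
      (α + ‖inner 𝕜 (v j) w‖ * β) ^ 2 := by
  have hmem : ∀ k, v k ∈ V := fun k => hV ▸ Submodule.subset_span ⟨k, rfl⟩
  have hres : deflation V (v j) w ∈ V ⊓ (𝕜 ∙ v j)ᗮ := Submodule.starProjection_apply_mem _ _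
  have hinner : ∀ k, inner 𝕜 (v k) (deflation V (v j) w) =
      inner 𝕜 (v k) w - inner 𝕜 (v j) w * inner 𝕜 (v k) (v j) := by
    intro k
    rw [deflation_apply (hmem j) hj, inner_sub_right, ← V.inner_starProjection_left_eq_right,
      V.starProjection_eq_self_iff.mpr (hmem k), inner_smul_right]
  refine (mul_norm_sq_le_sum_norm_inner_sq hA hv (hV ▸ hres.1)).trans ?_
  rw [← Finset.add_sum_erase _ _ (Finset.mem_univ j),
    Submodule.mem_orthogonal_singleton_iff_inner_right.mp hres.2, norm_zero, zero_pow two_ne_zero,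
    zero_add]
  simp_rw [hinner]
  exact sum_norm_sub_smul_sq_le _ hα hβ hw hvj

lemma one_sub_re_inner_starProjection_le {V W : Submodule 𝕜 E} [V.HasOrthogonalProjection]
    [W.HasOrthogonalProjection] {u : E} (hu : u ∈ V) (hu1 : ‖u‖ = 1) :
    1 - RCLike.re (inner 𝕜 (W.starProjection u) u) ≤ ‖V.starProjection - W.starProjection‖ ^ 2 := by
  have hpyth := Submodule.norm_sq_eq_add_norm_sq_starProjection u W
  have hdist : ‖u - W.starProjection u‖ ≤ ‖V.starProjection - W.starProjection‖ := by
    simpa [V.starProjection_eq_self_iff.mpr hu, hu1] using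
      (V.starProjection - W.starProjection).le_opNorm u
  rw [Submodule.starProjection_orthogonal', hu1] at hpyth
  calc 1 - RCLike.re (inner 𝕜 (W.starProjection u) u) = ‖u - W.starProjection u‖ ^ 2 := by
        rw [W.re_inner_starProjection_eq_normSq, sub_eq_iff_eq_add']
        simpa using hpyth
    _ ≤ ‖V.starProjection - W.starProjection‖ ^ 2 := by gcongr

end Projections

/-! ### Steering vectors and the Fourier subspace -/

/-- The `p`-th derivative of the steering vector at `t`, as a vector of the Euclidean space. -/
def steerDeriv (m p : ℕ) (t : ℝ) : EuclideanSpace ℂ (Fin m) :=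
  WithLp.toLp 2 fun k => (Complex.I * freq m k) ^ p * steer m t k

/-- The Fourier subspace generated by the points `x`. -/
def fourierSubspace {ι : Type*} (m : ℕ) (x : ι → ℝ) : Submodule ℂ (EuclideanSpace ℂ (Fin m)) :=
  Submodule.span ℂ (Set.range fun j => steerDeriv m 0 (x j))

section Steering

variable (m : ℕ)

lemma steerDeriv_zero (t : ℝ) : steerDeriv m 0 t = WithLp.toLp 2 (steer m t) := by
  simp [steerDeriv]

lemma steer_apply (t : ℝ) (k : Fin m) :
    steer m t k = (Real.sqrt m : ℂ)⁻¹ * Complex.exp ((freq m k * t : ℝ) * Complex.I) := by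
  rw [mul_comm _ Complex.I]
  rfl

lemma hasDerivAt_steer (t : ℝ) (k : Fin m) :
    HasDerivAt (fun t => steer m t k) (Complex.I * freq m k * steer m t k) t := by
  simp_rw [steer_apply]
  have harg : HasDerivAt (fun t : ℝ => ((freq m k * t : ℝ) : ℂ) * Complex.I)
      (freq m k * Complex.I) t := by
    simpa using (((hasDerivAt_id t).const_mul (freq m k)).ofReal_comp).mul_const Complex.I
  refine (harg.cexp.const_mul _).congr_deriv ?_
  ring

lemma hasDerivAt_steerDeriv (p : ℕ) (t : ℝ) :
    HasDerivAt (steerDeriv m p) (steerDeriv m (p + 1) t) t := by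
  have h : HasDerivAt (fun t k => (Complex.I * freq m k) ^ p * steer m t k)
      (fun k => (Complex.I * freq m k) ^ (p + 1) * steer m t k) t :=
    hasDerivAt_pi.mpr fun k => ((hasDerivAt_steer m t k).const_mul _).congr_deriv (by ring)
  exact ((PiLp.continuousLinearEquiv 2 ℝ fun _ : Fin m => ℂ).symm :
    (Fin m → ℂ) →L[ℝ] EuclideanSpace ℂ (Fin m)).hasFDerivAt.comp_hasDerivAt t h

lemma conj_steer_mul_steer (a b : ℝ) (k : Fin m) :
    starRingEnd ℂ (steer m a k) * steer m b k =
      Complex.exp ((freq m k * (b - a) : ℝ) * Complex.I) / m := by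
  have hsqrt : (Real.sqrt m : ℂ)⁻¹ * (Real.sqrt m : ℂ)⁻¹ = (m : ℂ)⁻¹ := by
    rw [← mul_inv, ← Complex.ofReal_mul, Real.mul_self_sqrt m.cast_nonneg, Complex.ofReal_natCast]
  have hexp : Complex.exp ((freq m k * (b - a) : ℝ) * Complex.I) =
      Complex.exp (-((freq m k * a : ℝ) * Complex.I)) *
        Complex.exp ((freq m k * b : ℝ) * Complex.I) := by
    rw [← Complex.exp_add]
    congr 1
    push_cast
    ring
  rw [steer_apply, steer_apply, map_mul, map_inv₀, Complex.conj_ofReal, ← Complex.exp_conj,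
    map_mul, Complex.conj_I, Complex.conj_ofReal, mul_neg, hexp, div_eq_mul_inv, ← hsqrt]
  ring

lemma sum_freq_pow_mul_sin_eq_zero (p : ℕ) (t : ℝ) :
    ∑ k, freq m k ^ p * Real.sin (freq m k * t + p * (π / 2)) = 0 := by
  have hodd : ∀ k, freq m (Fin.rev k) ^ p * Real.sin (freq m (Fin.rev k) * t + p * (π / 2)) =
      -(freq m k ^ p * Real.sin (freq m k * t + p * (π / 2))) := by
    intro k
    have harg : -freq m k * t + p * (π / 2) = -(freq m k * t + p * (π / 2) - p * π) := by ring
    rw [freq_rev, harg, Real.sin_neg, Real.sin_sub_nat_mul_pi, neg_pow]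
    have hsign : (-1 : ℝ) ^ p * (-1) ^ p = 1 := by rw [← mul_pow]; norm_num
    linear_combination -(freq m k ^ p * Real.sin (freq m k * t + p * (π / 2))) * hsign
  have h := Equiv.sum_comp Fin.revPerm
    fun k => freq m k ^ p * Real.sin (freq m k * t + p * (π / 2))
  simp_rw [Fin.revPerm_apply, hodd, Finset.sum_neg_distrib] at h
  linarith

lemma inner_steerDeriv_zero (p : ℕ) (a b : ℝ) :
    inner ℂ (steerDeriv m 0 a) (steerDeriv m p b) = (dirichlet m p (b - a) : ℂ) := by
  have hterm : ∀ k, inner ℂ (steerDeriv m 0 a k) (steerDeriv m p b k) =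
      ((freq m k ^ p * Real.cos (freq m k * (b - a) + p * (π / 2)) : ℝ) : ℂ) / m +
        ((freq m k ^ p * Real.sin (freq m k * (b - a) + p * (π / 2)) : ℝ) : ℂ) / m *
          Complex.I := by
    intro k
    have hI : Complex.I ^ p = Complex.exp ((p * (π / 2) : ℝ) * Complex.I) := by
      conv_lhs => rw [← Complex.exp_pi_div_two_mul_I, ← Complex.exp_nat_mul, ← mul_assoc]
      push_cast
      rfl
    calc inner ℂ (steerDeriv m 0 a k) (steerDeriv m p b k)
        = (Complex.I * freq m k) ^ p * (starRingEnd ℂ (steer m a k) * steer m b k) := by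
          simp only [steerDeriv, RCLike.inner_apply, pow_zero, one_mul]
          ring
      _ = (freq m k : ℂ) ^ p *
            Complex.exp ((freq m k * (b - a) + p * (π / 2) : ℝ) * Complex.I) / m := by
          rw [conj_steer_mul_steer, mul_pow, hI, Complex.ofReal_add (freq m k * (b - a)), add_mul,
            Complex.exp_add]
          ring
      _ = _ := by
          rw [Complex.exp_mul_I, ← Complex.ofReal_cos, ← Complex.ofReal_sin]
          push_cast
          ring
  rw [PiLp.inner_apply, Finset.sum_congr rfl fun k _ => hterm k, Finset.sum_add_distrib,
    ← Finset.sum_mul, ← Finset.sum_div, ← Finset.sum_div, ← Complex.ofReal_sum,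
    ← Complex.ofReal_sum, sum_freq_pow_mul_sin_eq_zero, dirichlet]
  simp

lemma norm_steerDeriv_sq (p : ℕ) (t : ℝ) :
    ‖steerDeriv m p t‖ ^ 2 = (∑ k, freq m k ^ (2 * p)) / m := by
  rw [EuclideanSpace.norm_sq_eq, Finset.sum_div]
  refine Finset.sum_congr rfl fun k _ => ?_
  rw [steerDeriv, norm_mul, norm_pow, norm_mul, Complex.norm_I, one_mul, Complex.norm_real,
    Real.norm_eq_abs, steer_apply, norm_mul, Complex.norm_exp_ofReal_mul_I, norm_inv,
    Complex.norm_real, mul_one, mul_pow, inv_pow, Real.norm_eq_abs, sq_abs,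
    Real.sq_sqrt m.cast_nonneg, ← pow_mul, mul_comm p, pow_mul, sq_abs, ← pow_mul, div_eq_mul_inv]

lemma norm_steerDeriv_zero [NeZero m] (t : ℝ) : ‖steerDeriv m 0 t‖ = 1 := by
  rw [← sq_eq_sq₀ (norm_nonneg _) zero_le_one, norm_steerDeriv_sq]
  simp [NeZero.ne]

lemma norm_steerDeriv_one_le (t : ℝ) : ‖steerDeriv m 1 t‖ ≤ 0.28868 * m := by
  refine (abs_le_of_sq_le_sq' ?_ (by positivity)).2
  rw [norm_steerDeriv_sq]
  refine (avg_freq_sq_le m).trans ?_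
  nlinarith [sq_nonneg (m : ℝ)]

lemma norm_steerDeriv_two_le (t : ℝ) : ‖steerDeriv m 2 t‖ ≤ 0.11181 * (m : ℝ) ^ 2 := by
  refine (abs_le_of_sq_le_sq' ?_ (by positivity)).2
  rw [norm_steerDeriv_sq]
  refine (avg_freq_pow_four_le m).trans ?_
  nlinarith [sq_nonneg ((m : ℝ) ^ 2)]

end Steering

section ColumnSpace

variable {m d : ℕ} (W : Matrix (Fin m) (Fin d) ℂ)

lemma colSpan_eq_span_range_col :
    colSpan W = Submodule.span ℂ (Set.range fun j => WithLp.toLp 2 (W.col j)) := by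
  ext v
  rw [Submodule.mem_span_range_iff_exists_fun]
  have hsum : ∀ c : Fin d → ℂ, ∑ j, c j • WithLp.toLp 2 (W.col j) =
      Matrix.toEuclideanLin W (WithLp.toLp 2 c) := by
    intro c
    ext k
    simp [Matrix.mulVec, dotProduct, mul_comm]
  simp_rw [hsum]
  exact (WithLp.equiv 2 (Fin d → ℂ)).symm.surjective.exists

lemma colSpan_fourierMatrix [NeZero m] (x : Fin d → ℝ) :
    colSpan (fourierMatrix m x) = fourierSubspace m x := by
  have hsqrt : (Real.sqrt m : ℂ) ≠ 0 := by simp [NeZero.ne]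
  have hcol : ∀ j, WithLp.toLp 2 ((fourierMatrix m x).col j) =
      (Real.sqrt m : ℂ) • steerDeriv m 0 (x j) := by
    intro j
    rw [steerDeriv_zero, ← WithLp.toLp_smul]
    congr 1
    ext k
    exact (mul_inv_cancel_left₀ hsqrt _).symm
  rw [colSpan_eq_span_range_col]
  unfold fourierSubspace
  refine le_antisymm (Submodule.span_le.mpr ?_) (Submodule.span_le.mpr ?_)
  · rintro _ ⟨j, rfl⟩
    beta_reduce
    rw [SetLike.mem_coe, hcol]
    exact Submodule.smul_mem _ _ (Submodule.subset_span ⟨j, rfl⟩)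
  · rintro _ ⟨j, rfl⟩
    beta_reduce
    rw [SetLike.mem_coe, ← Submodule.smul_mem_iff _ hsqrt, ← hcol]
    exact Submodule.subset_span ⟨j, rfl⟩

lemma toEuclideanLin_mul_conjTranspose_apply (v : EuclideanSpace ℂ (Fin m)) :
    Matrix.toEuclideanLin (W * Wᴴ) v =
      Matrix.toEuclideanLin W ((Matrix.toEuclideanLin W).adjoint v) := by
  rw [← Matrix.toEuclideanLin_conjTranspose_eq_adjoint]
  simp

variable {W}

lemma adjoint_toEuclideanLin_apply_apply (hW : Wᴴ * W = 1) (c : EuclideanSpace ℂ (Fin d)) :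
    (Matrix.toEuclideanLin W).adjoint (Matrix.toEuclideanLin W c) = c := by
  rw [← Matrix.toEuclideanLin_conjTranspose_eq_adjoint, ← LinearMap.comp_apply,
    ← Matrix.toLpLin_mul_same, hW, Matrix.toLpLin_one, LinearMap.id_apply]

lemma toEuclideanLin_mul_conjTranspose_eq_starProjection (hW : Wᴴ * W = 1) :
    LinearMap.toContinuousLinearMap (Matrix.toEuclideanLin (W * Wᴴ)) =
      (colSpan W).starProjection := by
  ext1 v
  rw [LinearMap.coe_toContinuousLinearMap', toEuclideanLin_mul_conjTranspose_apply]
  refine (Submodule.eq_starProjection_of_mem_of_inner_eq_zero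
    (LinearMap.mem_range_self _ _) ?_).symm
  rintro _ ⟨c, rfl⟩
  rw [← LinearMap.adjoint_inner_left, map_sub, adjoint_toEuclideanLin_apply_apply hW, sub_self,
    inner_zero_left]

lemma specNorm_sub_eq_norm_starProjection_sub {e : ℕ} {W' : Matrix (Fin m) (Fin e) ℂ}
    (hW : Wᴴ * W = 1) (hW' : W'ᴴ * W' = 1) :
    specNorm (W * Wᴴ - W' * W'ᴴ) =
      ‖(colSpan W).starProjection - (colSpan W').starProjection‖ := by
  rw [specNorm, map_sub, map_sub, toEuclideanLin_mul_conjTranspose_eq_starProjection hW,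
    toEuclideanLin_mul_conjTranspose_eq_starProjection hW']

lemma landscape_eq_one_sub_re_inner (hW : Wᴴ * W = 1) (t : ℝ) :
    landscape W t =
      1 - (inner ℂ ((colSpan W).starProjection (steerDeriv m 0 t)) (steerDeriv m 0 t)).re := by
  have hnorm : ∑ j, ‖(Wᴴ *ᵥ steer m t) j‖ ^ 2 =
      ‖(Matrix.toEuclideanLin W).adjoint (steerDeriv m 0 t)‖ ^ 2 := by
    rw [← Matrix.toEuclideanLin_conjTranspose_eq_adjoint, steerDeriv_zero,
      EuclideanSpace.norm_sq_eq]
    rfl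
  rw [← toEuclideanLin_mul_conjTranspose_eq_starProjection hW,
    LinearMap.coe_toContinuousLinearMap', toEuclideanLin_mul_conjTranspose_apply,
    ← LinearMap.adjoint_inner_right, landscape, hnorm]
  exact congrArg _ (inner_self_eq_norm_sq (𝕜 := ℂ) _).symm

end ColumnSpace

/-! ### Lower Riesz bound for the steering vectors -/

-- Gershgorin's theorem for the Gram matrix of `v`, in quadratic form.
lemma sub_mul_sum_norm_sq_le_norm_sum_smul_sq {𝕜 E ι : Type*} [RCLike 𝕜]
    [NormedAddCommGroup E] [InnerProductSpace 𝕜 E] [Fintype ι] [DecidableEq ι] {v : ι → E}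
    {D R : ℝ} (hD : ∀ j, ‖v j‖ ^ 2 = D)
    (hR : ∀ j, ∑ l ∈ Finset.univ.erase j, ‖inner 𝕜 (v j) (v l)‖ ≤ R) (c : ι → 𝕜) :
    (D - R) * ∑ j, ‖c j‖ ^ 2 ≤ ‖∑ j, c j • v j‖ ^ 2 := by
  set a : ι → ι → ℝ := fun j l => ‖inner 𝕜 (v j) (v l)‖
  have hterm : ∀ j l, -(‖c j‖ ^ 2 / 2 * a j l + ‖c l‖ ^ 2 / 2 * a j l) ≤
      RCLike.re (inner 𝕜 (c j • v j) (c l • v l)) := by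
    intro j l
    have hre := neg_le_of_abs_le (RCLike.abs_re_le_norm (inner 𝕜 (c j • v j) (c l • v l)))
    rw [inner_smul_left, inner_smul_right, norm_mul, norm_mul, RCLike.norm_conj] at hre
    rw [inner_smul_left, inner_smul_right]
    nlinarith [mul_nonneg (norm_nonneg (inner 𝕜 (v j) (v l))) (sq_nonneg (‖c j‖ - ‖c l‖))]
  have hdiag : ∀ j, RCLike.re (inner 𝕜 (c j • v j) (c j • v j)) = ‖c j‖ ^ 2 * D := by
    intro j
    rw [inner_self_eq_norm_sq, norm_smul, mul_pow, hD]
  have hrow : ∑ j, ∑ l ∈ Finset.univ.erase j, ‖c j‖ ^ 2 / 2 * a j l ≤ R / 2 * ∑ j, ‖c j‖ ^ 2 := by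
    rw [Finset.mul_sum]
    refine Finset.sum_le_sum fun j _ => ?_
    rw [← Finset.mul_sum]
    linarith [mul_le_mul_of_nonneg_left (hR j) (sq_nonneg ‖c j‖)]
  have hcol : ∑ j, ∑ l ∈ Finset.univ.erase j, ‖c l‖ ^ 2 / 2 * a j l =
      ∑ j, ∑ l ∈ Finset.univ.erase j, ‖c j‖ ^ 2 / 2 * a j l := by
    rw [Finset.sum_comm' (t' := Finset.univ) (s' := fun l => Finset.univ.erase l)
      (by simp [ne_comm])]
    simp only [a, norm_inner_symm]
  calc (D - R) * ∑ j, ‖c j‖ ^ 2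
      ≤ ∑ j, (‖c j‖ ^ 2 * D +
          ∑ l ∈ Finset.univ.erase j, -(‖c j‖ ^ 2 / 2 * a j l + ‖c l‖ ^ 2 / 2 * a j l)) := by
        simp only [Finset.sum_add_distrib, Finset.sum_neg_distrib, ← Finset.sum_mul]
        linarith
    _ ≤ ∑ j, ∑ l, RCLike.re (inner 𝕜 (c j • v j) (c l • v l)) := by
        refine Finset.sum_le_sum fun j _ => ?_
        rw [← Finset.add_sum_erase _ _ (Finset.mem_univ j), hdiag]
        gcongr
        exact hterm _ _
    _ = ‖∑ j, c j • v j‖ ^ 2 := by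
        simp_rw [← inner_self_eq_norm_sq (𝕜 := 𝕜) (∑ j, c j • v j), sum_inner, inner_sum, map_sum]

lemma sum_sum_add_le {L₁ L₂ m : ℕ} (hL : L₁ + L₂ = m + 1) {f : ℕ → ℝ} (hf : ∀ k, 0 ≤ f k) :
    ∑ a : Fin L₁, ∑ b : Fin L₂, f (a + b) ≤ L₂ * ∑ k : Fin m, f k := by
  have hshift : ∀ b : Fin L₂, ∑ a : Fin L₁, f (a + b) ≤ ∑ k : Fin m, f k := by
    intro b
    have hb := b.isLt
    rw [Fin.sum_univ_eq_sum_range (fun a => f (a + b)), Fin.sum_univ_eq_sum_range f]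
    refine (Finset.sum_map (Finset.range L₁) (addRightEmbedding (b : ℕ)) f).symm.trans_le ?_
    refine Finset.sum_le_sum_of_subset_of_nonneg (fun k hk => ?_) fun k _ _ => hf k
    obtain ⟨a, ha, rfl⟩ := Finset.mem_map.mp hk
    rw [Finset.mem_range] at ha ⊢
    simp only [addRightEmbedding_apply]
    omega
  rw [Finset.sum_comm]
  exact (Finset.sum_le_sum fun b _ => hshift b).trans_eq (by simp)

/-- The tensor product of two steering vectors at the same point. Its inner products are products
of two Dirichlet kernels, which decay quadratically in the separation. -/
def steerTensor (L₁ L₂ : ℕ) (t : ℝ) : EuclideanSpace ℂ (Fin L₁ × Fin L₂) :=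
  WithLp.toLp 2 fun p => steer L₁ t p.1 * steer L₂ t p.2

lemma inner_steerTensor (L₁ L₂ : ℕ) (a b : ℝ) :
    inner ℂ (steerTensor L₁ L₂ a) (steerTensor L₁ L₂ b) =
      (dirichlet L₁ 0 (b - a) : ℂ) * (dirichlet L₂ 0 (b - a) : ℂ) := by
  rw [← inner_steerDeriv_zero, ← inner_steerDeriv_zero, PiLp.inner_apply, PiLp.inner_apply,
    PiLp.inner_apply, Fintype.sum_prod_type, Finset.sum_mul_sum]
  refine Finset.sum_congr rfl fun k _ => Finset.sum_congr rfl fun l _ => ?_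
  simp only [steerTensor, steerDeriv_zero, RCLike.inner_apply, map_mul]
  ring

lemma norm_steerTensor (L₁ L₂ : ℕ) [NeZero L₁] [NeZero L₂] (t : ℝ) :
    ‖steerTensor L₁ L₂ t‖ = 1 := by
  have hdir : ∀ L : ℕ, [NeZero L] → dirichlet L 0 0 = 1 := fun L _ => by
    simp [dirichlet, NeZero.ne]
  rw [@norm_eq_sqrt_re_inner ℂ, inner_steerTensor, sub_self, hdir, hdir]
  simp

lemma steer_mul_steer {L₁ L₂ m : ℕ} (hL : L₁ + L₂ = m + 1) (t : ℝ) (a : Fin L₁) (b : Fin L₂) :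
    steer L₁ t a * steer L₂ t b = (√L₁ : ℂ)⁻¹ * ((√L₂ : ℂ)⁻¹ *
      Complex.exp (((((a + b : ℕ) : ℝ) - ((m : ℝ) - 1) / 2) * t : ℝ) * Complex.I)) := by
  have hfreq : ((a + b : ℕ) : ℝ) - ((m : ℝ) - 1) / 2 = freq L₁ a + freq L₂ b := by
    have hL' : (L₁ : ℝ) + L₂ = m + 1 := by exact_mod_cast hL
    unfold freq
    push_cast
    linarith
  rw [hfreq, add_mul, Complex.ofReal_add, add_mul, Complex.exp_add, steer_apply, steer_apply]
  ring

section Riesz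

variable {ι : Type*} [Fintype ι] (x : ι → ℝ) (c : ι → ℂ)

-- The coordinate `(a, b)` of the left side is, up to scaling, the coordinate `a + b` of the right
-- side, and every coordinate of the latter arises at most `L₂` times.
lemma norm_sum_smul_steerTensor_sq_le {L₁ L₂ m : ℕ} [NeZero L₁] [NeZero L₂] [NeZero m]
    (hL : L₁ + L₂ = m + 1) :
    L₁ * ‖∑ j, c j • steerTensor L₁ L₂ (x j)‖ ^ 2 ≤ m * ‖∑ j, c j • steerDeriv m 0 (x j)‖ ^ 2 := by
  have hpos : ∀ n : ℕ, [NeZero n] → (0 : ℝ) < n := fun n _ => Nat.cast_pos.mpr (NeZero.pos n)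
  have hscale : ∀ (n : ℕ) (e : ι → ℂ),
      ‖∑ j, c j * ((√n : ℂ)⁻¹ * e j)‖ ^ 2 = ‖∑ j, c j * e j‖ ^ 2 / n := by
    intro n e
    simp_rw [mul_left_comm (c _), ← Finset.mul_sum]
    rw [norm_mul, mul_pow, norm_inv, Complex.norm_real, Real.norm_eq_abs, inv_pow, sq_abs,
      Real.sq_sqrt n.cast_nonneg, inv_mul_eq_div]
  set f : ℕ → ℝ := fun k =>
    ‖∑ j, c j * Complex.exp ((((k : ℝ) - ((m : ℝ) - 1) / 2) * x j : ℝ) * Complex.I)‖ ^ 2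
  have hsteer : ‖∑ j, c j • steerDeriv m 0 (x j)‖ ^ 2 = (∑ k : Fin m, f k) / m := by
    simp only [EuclideanSpace.norm_sq_eq, steerDeriv_zero, WithLp.ofLp_sum, Finset.sum_apply,
      WithLp.ofLp_smul, Pi.smul_apply, smul_eq_mul, steer_apply, hscale, ← Finset.sum_div]
    rfl
  have htensor : ‖∑ j, c j • steerTensor L₁ L₂ (x j)‖ ^ 2 =
      (∑ a : Fin L₁, ∑ b : Fin L₂, f (a + b)) / L₂ / L₁ := by
    simp only [EuclideanSpace.norm_sq_eq, Fintype.sum_prod_type, steerTensor, WithLp.ofLp_sum,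
      Finset.sum_apply, WithLp.ofLp_smul, Pi.smul_apply, smul_eq_mul, steer_mul_steer hL, hscale,
      ← Finset.sum_div]
    rfl
  rw [hsteer, htensor, mul_div_cancel₀ _ (hpos L₁).ne', mul_div_cancel₀ _ (hpos m).ne',
    div_le_iff₀' (hpos L₂)]
  exact sum_sum_add_le hL fun _ => sq_nonneg _

variable {x}

lemma sum_erase_cscSq_le [DecidableEq ι] {m : ℕ} [NeZero m] {b t : ℝ} (hb : b < 1)
    (hsep : Pairwise fun j k => 8 * π / m ≤ torusDist (x j) (x k)) (j : ι)
    (hj : torusDist t (x j) ≤ b * (8 * π / m)) :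
    ∑ k ∈ Finset.univ.erase j, cscSq (t - x k) ≤
      (m : ℝ) ^ 2 / 48 * ((1 + b ^ 2) / (1 - b ^ 2) ^ 2) + m / 4 + 2 * b := by
  have hm : (0 : ℝ) < m := Nat.cast_pos.mpr (NeZero.pos m)
  refine (sum_erase_cscSq_le_near (by positivity) hb hsep j hj).trans_eq ?_
  field_simp
  ring

lemma abs_dirichlet_zero_mul_dirichlet_zero_le (L₁ L₂ : ℕ) {t : ℝ}
    (ht : Real.sin (t / 2) ≠ 0) :
    L₁ * L₂ * |dirichlet L₁ 0 t * dirichlet L₂ 0 t| ≤ cscSq t := by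
  have h₁ := dirichlet_zero_sq_le L₁ ht
  have h₂ := dirichlet_zero_sq_le L₂ ht
  rw [← sq_abs, abs_mul, Nat.abs_cast] at h₁ h₂
  rw [abs_mul]
  linarith [two_mul_le_add_sq (L₁ * |dirichlet L₁ 0 t|) (L₂ * |dirichlet L₂ 0 t|)]

lemma sum_erase_norm_inner_steerTensor_le [DecidableEq ι] {m : ℕ} [NeZero m] (L₁ L₂ : ℕ)
    (hsep : Pairwise fun j k => 8 * π / m ≤ torusDist (x j) (x k)) (j : ι) :
    L₁ * L₂ * ∑ l ∈ Finset.univ.erase j,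
      ‖inner ℂ (steerTensor L₁ L₂ (x j)) (steerTensor L₁ L₂ (x l))‖ ≤ (m : ℝ) ^ 2 / 48 + m / 4 := by
  have hm : (0 : ℝ) < m := Nat.cast_pos.mpr (NeZero.pos m)
  have hj : torusDist (x j) (x j) ≤ 0 * (8 * π / m) := by
    simpa using torusDist_le_abs_sub (x j) (x j)
  rw [Finset.mul_sum]
  refine (Finset.sum_le_sum fun l hl => ?_).trans
    ((sum_erase_cscSq_le zero_lt_one hsep j hj).trans_eq (by simp))
  have hsin : Real.sin ((x j - x l) / 2) ≠ 0 := sin_half_sub_ne_zero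
    (lt_of_lt_of_le (by positivity) (hsep (Finset.ne_of_mem_erase hl).symm))
  rw [norm_inner_symm, inner_steerTensor, ← Complex.ofReal_mul, Complex.norm_real,
    Real.norm_eq_abs]
  exact abs_dirichlet_zero_mul_dirichlet_zero_le L₁ L₂ hsin

-- Splitting with `L₂ = ⌊m / 6⌋` makes the diagonal term dominate the sum of the others.
lemma sum_norm_sq_le_norm_sum_smul_steerDeriv_sq {m : ℕ} (hm : 100 ≤ m)
    (hsep : Pairwise fun j k => 8 * π / m ≤ torusDist (x j) (x k)) :
    0.7 * ∑ j, ‖c j‖ ^ 2 ≤ ‖∑ j, c j • steerDeriv m 0 (x j)‖ ^ 2 := by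
  classical
  have hm' : (100 : ℝ) ≤ m := by exact_mod_cast hm
  have : NeZero m := ⟨by omega⟩
  obtain ⟨L₁, L₂, hL, h₁, h₂⟩ : ∃ L₁ L₂ : ℕ, L₁ + L₂ = m + 1 ∧ 6 * L₂ ≤ m ∧ m ≤ 6 * L₂ + 5 :=
    ⟨m + 1 - m / 6, m / 6, by omega, by omega, by omega⟩
  have : NeZero L₁ := ⟨by omega⟩
  have : NeZero L₂ := ⟨by omega⟩
  have hpos : (0 : ℝ) < L₁ * L₂ := by exact_mod_cast Nat.mul_pos (NeZero.pos L₁) (NeZero.pos L₂)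
  set R : ℝ := (m : ℝ) ^ 2 / 48 + m / 4
  have hdiag := sub_mul_sum_norm_sq_le_norm_sum_smul_sq
    (fun j => by rw [norm_steerTensor, one_pow])
    (fun j => (le_div_iff₀' hpos).mpr (sum_erase_norm_inner_steerTensor_le L₁ L₂ hsep j)) c
  have hfold := norm_sum_smul_steerTensor_sq_le x c hL
  have hnum : 0.7 * (m : ℝ) ≤ L₁ * (1 - R / (L₁ * L₂)) := by
    have hL' : (L₁ : ℝ) = m + 1 - L₂ := by linarith [(by exact_mod_cast hL : (L₁ : ℝ) + L₂ = m + 1)]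
    have h₁' : 6 * (L₂ : ℝ) ≤ m := by exact_mod_cast h₁
    have h₂' : (m : ℝ) ≤ 6 * L₂ + 5 := by exact_mod_cast h₂
    have hL₂ : (0 : ℝ) < L₂ := by linarith
    have hL₁ : (0 : ℝ) < L₁ := by linarith
    rw [← mul_le_mul_iff_left₀ hL₂]
    field_simp
    simp only [R, hL']
    nlinarith [mul_nonneg (sub_nonneg.2 h₁') (sub_nonneg.2 h₂')]
  refine le_of_mul_le_mul_left ?_ (by linarith : (0 : ℝ) < m)
  calc (m : ℝ) * (0.7 * ∑ j, ‖c j‖ ^ 2)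
      = 0.7 * m * ∑ j, ‖c j‖ ^ 2 := by ring
    _ ≤ L₁ * (1 - R / (L₁ * L₂)) * ∑ j, ‖c j‖ ^ 2 := by gcongr
    _ ≤ L₁ * ‖∑ j, c j • steerTensor L₁ L₂ (x j)‖ ^ 2 := by rw [mul_assoc]; gcongr
    _ ≤ m * ‖∑ j, c j • steerDeriv m 0 (x j)‖ ^ 2 := hfold

end Riesz

/-! ### Deflation of the Fourier subspace -/

/-- The deflation of the Fourier subspace generated by `x` at the steering vector of `x j`. It
measures how far the landscape is from that of the single point `x j`. -/
abbrev fourierDeflation {ι : Type*} (m : ℕ) (x : ι → ℝ) (j : ι) :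
    EuclideanSpace ℂ (Fin m) →L[ℂ] EuclideanSpace ℂ (Fin m) :=
  deflation (fourierSubspace m x) (steerDeriv m 0 (x j))

lemma norm_sq_inner_steerDeriv_zero (m p : ℕ) (a b : ℝ) :
    ‖inner ℂ (steerDeriv m 0 a) (steerDeriv m p b)‖ ^ 2 = dirichlet m p (b - a) ^ 2 := by
  rw [inner_steerDeriv_zero, Complex.norm_real, Real.norm_eq_abs, sq_abs]

section Near

variable {ι : Type*} {m : ℕ} {x : ι → ℝ} {j k : ι} {t : ℝ}

lemma torusDist_le_of_near (hm : 0 < m) (ht : m * |t - x j| ≤ 4.26) :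
    torusDist t (x j) ≤ 0.17 * (8 * π / m) := by
  refine (torusDist_le_abs_sub _ _).trans ?_
  rw [← mul_div_assoc, le_div_iff₀' (by positivity)]
  linarith [Real.pi_gt_d4]

lemma le_torusDist_of_near_of_ne (hm : 0 < m)
    (hsep : Pairwise fun j k => 8 * π / m ≤ torusDist (x j) (x k)) (ht : m * |t - x j| ≤ 4.26)
    (hk : k ≠ j) : 20.85 / m ≤ torusDist t (x k) := by
  refine le_trans ?_ (le_torusDist_of_near hk.symm hsep (torusDist_le_of_near hm ht))
  rw [← mul_div_assoc]
  gcongr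
  linarith [Real.pi_gt_d4]

lemma sin_half_ne_zero_of_near (hm : 0 < m)
    (hsep : Pairwise fun j k => 8 * π / m ≤ torusDist (x j) (x k)) (ht : m * |t - x j| ≤ 4.26)
    (hk : k ≠ j) : Real.sin ((t - x k) / 2) ≠ 0 :=
  sin_half_sub_ne_zero (lt_of_lt_of_le (by positivity) (le_torusDist_of_near_of_ne hm hsep ht hk))

lemma cscSq_sub_one_le_of_near (hm : 0 < m)
    (hsep : Pairwise fun j k => 8 * π / m ≤ torusDist (x j) (x k)) (ht : m * |t - x j| ≤ 4.26)
    (hk : k ≠ j) : cscSq (t - x k) - 1 ≤ (0.09594 * m) ^ 2 := by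
  have hd := le_torusDist_of_near_of_ne hm hsep ht hk
  have hpos : (0 : ℝ) < 20.85 / m := by positivity
  calc cscSq (t - x k) - 1 ≤ 4 / torusDist t (x k) ^ 2 := by
        linarith [cscSq_sub_le (hpos.trans_le hd)]
    _ ≤ 4 / (20.85 / m) ^ 2 := by gcongr
    _ ≤ (0.09594 * m) ^ 2 := by
        rw [div_pow, div_div_eq_mul_div, div_le_iff₀ (by norm_num)]
        nlinarith [sq_nonneg (m : ℝ)]

section Sums

variable [Fintype ι] [DecidableEq ι]

lemma sum_erase_cscSq_le_of_near (hm : 100 ≤ m)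
    (hsep : Pairwise fun j k => 8 * π / m ≤ torusDist (x j) (x k)) (ht : m * |t - x j| ≤ 4.26) :
    ∑ k ∈ Finset.univ.erase j, cscSq (t - x k) ≤ 0.025266 * (m : ℝ) ^ 2 := by
  have hm' : (100 : ℝ) ≤ m := by exact_mod_cast hm
  have : NeZero m := ⟨by omega⟩
  refine (sum_erase_cscSq_le (by norm_num) hsep j (torusDist_le_of_near (by omega) ht)).trans ?_
  norm_num
  nlinarith

lemma sq_mul_sum_erase_dirichlet_zero_sq_le (hm : 0 < m)
    (hsep : Pairwise fun j k => 8 * π / m ≤ torusDist (x j) (x k)) (ht : m * |t - x j| ≤ 4.26) :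
    (m : ℝ) ^ 2 * ∑ k ∈ Finset.univ.erase j, dirichlet m 0 (t - x k) ^ 2 ≤
      ∑ k ∈ Finset.univ.erase j, cscSq (t - x k) := by
  rw [Finset.mul_sum]
  refine Finset.sum_le_sum fun k hk => ?_
  rw [← mul_pow]
  exact dirichlet_zero_sq_le m (sin_half_ne_zero_of_near hm hsep ht (Finset.ne_of_mem_erase hk))

lemma sum_erase_dirichlet_zero_sq_le (hm : 100 ≤ m)
    (hsep : Pairwise fun j k => 8 * π / m ≤ torusDist (x j) (x k)) (ht : m * |t - x j| ≤ 4.26) :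
    ∑ k ∈ Finset.univ.erase j, dirichlet m 0 (t - x k) ^ 2 ≤ 0.159 ^ 2 := by
  have : (100 : ℝ) ≤ m := by exact_mod_cast hm
  refine le_of_mul_le_mul_left (a := (m : ℝ) ^ 2) ?_ (by positivity)
  nlinarith [sq_mul_sum_erase_dirichlet_zero_sq_le (by omega) hsep ht,
    sum_erase_cscSq_le_of_near hm hsep ht]

lemma sum_erase_dirichlet_zero_sub_sq_le (hm : 100 ≤ m)
    (hsep : Pairwise fun j k => 8 * π / m ≤ torusDist (x j) (x k)) (j : ι) :
    ∑ k ∈ Finset.univ.erase j, dirichlet m 0 (x j - x k) ^ 2 ≤ 0.1528 ^ 2 := by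
  have hm' : (100 : ℝ) ≤ m := by exact_mod_cast hm
  have : NeZero m := ⟨by omega⟩
  have hj : torusDist (x j) (x j) ≤ 0 * (8 * π / m) := by
    simpa using torusDist_le_abs_sub (x j) (x j)
  have hcsc : ∑ k ∈ Finset.univ.erase j, cscSq (x j - x k) ≤ (m : ℝ) ^ 2 / 48 + m / 4 :=
    (sum_erase_cscSq_le zero_lt_one hsep j hj).trans_eq (by simp)
  refine le_of_mul_le_mul_left (a := (m : ℝ) ^ 2) ?_ (by positivity)
  nlinarith [sq_mul_sum_erase_dirichlet_zero_sq_le (j := j) (t := x j) (by omega) hsep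
    (by rw [sub_self, abs_zero]; norm_num)]

lemma sum_erase_dirichlet_one_sq_le (hm : 100 ≤ m)
    (hsep : Pairwise fun j k => 8 * π / m ≤ torusDist (x j) (x k)) (ht : m * |t - x j| ≤ 4.26) :
    ∑ k ∈ Finset.univ.erase j, dirichlet m 1 (t - x k) ^ 2 ≤ (0.0799 * m) ^ 2 := by
  have hm0 : 0 < m := by omega
  have : (0 : ℝ) < m := by exact_mod_cast hm0
  refine le_of_mul_le_mul_left (a := 4 * (m : ℝ) ^ 2) ?_ (by positivity)
  rw [Finset.mul_sum]
  calc ∑ k ∈ Finset.univ.erase j, 4 * (m : ℝ) ^ 2 * dirichlet m 1 (t - x k) ^ 2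
      ≤ ∑ k ∈ Finset.univ.erase j, cscSq (t - x k) * (1.00921 * (m : ℝ) ^ 2) := by
        refine Finset.sum_le_sum fun k hk => ?_
        have hkj := Finset.ne_of_mem_erase hk
        have hsin := sin_half_ne_zero_of_near hm0 hsep ht hkj
        refine (dirichlet_one_sq_le m hsin).trans ?_
        gcongr
        · exact zero_le_one.trans (one_le_cscSq hsin)
        · nlinarith [cscSq_sub_one_le_of_near hm0 hsep ht hkj, sq_nonneg (m : ℝ)]
    _ ≤ 0.025266 * (m : ℝ) ^ 2 * (1.00921 * (m : ℝ) ^ 2) := by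
        rw [← Finset.sum_mul]
        gcongr
        exact sum_erase_cscSq_le_of_near hm hsep ht
    _ ≤ 4 * (m : ℝ) ^ 2 * (0.0799 * m) ^ 2 := by nlinarith [sq_nonneg ((m : ℝ) ^ 2)]

lemma sum_erase_dirichlet_two_sq_le (hm : 100 ≤ m)
    (hsep : Pairwise fun j k => 8 * π / m ≤ torusDist (x j) (x k)) (ht : m * |t - x j| ≤ 4.26) :
    ∑ k ∈ Finset.univ.erase j, dirichlet m 2 (t - x k) ^ 2 ≤ (0.0475 * (m : ℝ) ^ 2) ^ 2 := by
  have hm0 : 0 < m := by omega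
  have hzero : ∑ k ∈ Finset.univ.erase j, ‖(m : ℝ) ^ 2 / 4 * |dirichlet m 0 (t - x k)|‖ ^ 2 ≤
      ((m : ℝ) ^ 2 / 4 * 0.159) ^ 2 := by
    simp only [norm_mul, mul_pow, Real.norm_eq_abs, abs_abs, sq_abs, ← Finset.mul_sum]
    gcongr
    exact sum_erase_dirichlet_zero_sq_le hm hsep ht
  have hone : ∑ k ∈ Finset.univ.erase j, ‖-|dirichlet m 1 (t - x k)|‖ ^ 2 ≤ (0.0799 * m) ^ 2 := by
    simpa only [norm_neg, Real.norm_eq_abs, abs_abs, sq_abs] using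
      sum_erase_dirichlet_one_sq_le hm hsep ht
  calc ∑ k ∈ Finset.univ.erase j, dirichlet m 2 (t - x k) ^ 2
      ≤ ∑ k ∈ Finset.univ.erase j, ‖(m : ℝ) ^ 2 / 4 * |dirichlet m 0 (t - x k)| -
          0.09594 * m * -|dirichlet m 1 (t - x k)|‖ ^ 2 := by
        refine Finset.sum_le_sum fun k hk => ?_
        have hkj := Finset.ne_of_mem_erase hk
        rw [Real.norm_eq_abs, sq_le_sq, abs_abs, mul_neg, sub_neg_eq_add]
        refine (abs_dirichlet_two_le m (sin_half_ne_zero_of_near hm0 hsep ht hkj)).trans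
          (le_trans ?_ (le_abs_self _))
        gcongr
        exact Real.sqrt_le_iff.mpr
          ⟨by positivity, cscSq_sub_one_le_of_near hm0 hsep ht hkj⟩
    _ ≤ ((m : ℝ) ^ 2 / 4 * 0.159 + ‖0.09594 * (m : ℝ)‖ * (0.0799 * m)) ^ 2 :=
        sum_norm_sub_smul_sq_le _ (by positivity) (by positivity) hzero hone
    _ ≤ (0.0475 * (m : ℝ) ^ 2) ^ 2 := by
        rw [Real.norm_of_nonneg (by positivity)]
        refine pow_le_pow_left₀ (by positivity) ?_ 2
        nlinarith [sq_nonneg (m : ℝ)]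

lemma mul_norm_fourierDeflation_sq_le (hm : 100 ≤ m)
    (hsep : Pairwise fun j k => 8 * π / m ≤ torusDist (x j) (x k)) {p : ℕ} {α N : ℝ} (hα : 0 ≤ α)
    (hN : ‖steerDeriv m p t‖ ≤ N)
    (hsum : ∑ k ∈ Finset.univ.erase j, dirichlet m p (t - x k) ^ 2 ≤ α ^ 2) :
    0.7 * ‖fourierDeflation m x j (steerDeriv m p t)‖ ^ 2 ≤ (α + 0.1528 * N) ^ 2 := by
  have : NeZero m := ⟨by omega⟩
  have hinner : ‖inner ℂ (steerDeriv m 0 (x j)) (steerDeriv m p t)‖ ≤ N := by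
    refine (norm_inner_le_norm _ _).trans ?_
    rwa [norm_steerDeriv_zero, one_mul]
  refine (mul_norm_deflation_sq_le (V := fourierSubspace m x) (v := fun k => steerDeriv m 0 (x k))
    (α := α) (β := 0.1528) (by norm_num) hα (by norm_num) rfl
    (fun c => sum_norm_sq_le_norm_sum_smul_steerDeriv_sq c hm hsep)
    (norm_steerDeriv_zero m (x j)) ?_ ?_).trans ?_
  · simpa only [norm_sq_inner_steerDeriv_zero] using hsum
  · simpa only [norm_sq_inner_steerDeriv_zero] using sum_erase_dirichlet_zero_sub_sq_le hm hsep j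
  · rw [mul_comm 0.1528]
    gcongr

end Sums

variable [Finite ι]

lemma norm_fourierDeflation_zero_le (hm : 100 ≤ m)
    (hsep : Pairwise fun j k => 8 * π / m ≤ torusDist (x j) (x k)) (ht : m * |t - x j| ≤ 4.26) :
    ‖fourierDeflation m x j (steerDeriv m 0 t)‖ ≤ 0.3727 := by
  classical
  have := Fintype.ofFinite ι
  have : NeZero m := ⟨by omega⟩
  refine (abs_le_of_sq_le_sq' ?_ (by norm_num)).2
  linarith [mul_norm_fourierDeflation_sq_le hm hsep (by norm_num) (norm_steerDeriv_zero m t).le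
    (sum_erase_dirichlet_zero_sq_le hm hsep ht)]

lemma norm_fourierDeflation_one_le (hm : 100 ≤ m)
    (hsep : Pairwise fun j k => 8 * π / m ≤ torusDist (x j) (x k)) (ht : m * |t - x j| ≤ 4.26) :
    ‖fourierDeflation m x j (steerDeriv m 1 t)‖ ≤ 0.1483 * m := by
  classical
  have := Fintype.ofFinite ι
  refine (abs_le_of_sq_le_sq' ?_ (by positivity)).2
  nlinarith [mul_norm_fourierDeflation_sq_le hm hsep (by positivity) (norm_steerDeriv_one_le m t)
    (sum_erase_dirichlet_one_sq_le hm hsep ht), sq_nonneg (m : ℝ)]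

lemma norm_fourierDeflation_two_le (hm : 100 ≤ m)
    (hsep : Pairwise fun j k => 8 * π / m ≤ torusDist (x j) (x k)) (ht : m * |t - x j| ≤ 4.26) :
    ‖fourierDeflation m x j (steerDeriv m 2 t)‖ ≤ 0.0772 * (m : ℝ) ^ 2 := by
  classical
  have := Fintype.ofFinite ι
  refine (abs_le_of_sq_le_sq' ?_ (by positivity)).2
  nlinarith [mul_norm_fourierDeflation_sq_le hm hsep (by positivity) (norm_steerDeriv_two_le m t)
    (sum_erase_dirichlet_two_sq_le hm hsep ht), sq_nonneg ((m : ℝ) ^ 2)]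

lemma norm_fourierDeflation_zero_le_mul (hm : 100 ≤ m)
    (hsep : Pairwise fun j k => 8 * π / m ≤ torusDist (x j) (x k)) (ht : m * |t - x j| ≤ 4.26) :
    ‖fourierDeflation m x j (steerDeriv m 0 t)‖ ≤ 0.1483 * (m * |t - x j|) := by
  have hbound : ∀ y ∈ Set.uIcc (x j) t,
      ‖fourierDeflation m x j (steerDeriv m 1 y)‖ ≤ 0.1483 * m := by
    intro y hy
    refine norm_fourierDeflation_one_le hm hsep (le_trans ?_ ht)
    gcongr 1
    exact Set.abs_sub_left_of_mem_uIcc hy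
  have hlip := (convex_uIcc (x j) t).norm_image_sub_le_of_norm_hasDerivWithin_le
    (fun y _ => (((fourierDeflation m x j).restrictScalars ℝ).hasFDerivAt.comp_hasDerivAt y
      (hasDerivAt_steerDeriv m 0 y)).hasDerivWithinAt) hbound Set.left_mem_uIcc Set.right_mem_uIcc
  simpa [deflation_self, mul_assoc] using hlip

end Near

/-! ### The landscape function of a subspace -/

section SubspaceLandscape

variable {m : ℕ} (W : Submodule ℂ (EuclideanSpace ℂ (Fin m)))

/-- The real part of the pairing, through the projection onto `W`, of the `p`-th and the `q`-th
derivative of the steering vector. Derivatives of the landscape function are combinations of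
these pairings. -/
def steerPairing (p q : ℕ) (t : ℝ) : ℝ :=
  (inner ℂ (W.starProjection (steerDeriv m p t)) (steerDeriv m q t)).re

/-- The landscape function of a subspace `W`, the squared distance from the steering vector to `W`;
working with subspaces removes the choice of an orthonormal basis. -/
def subspaceLandscape (t : ℝ) : ℝ :=
  1 - steerPairing W 0 0 t

variable {W}

lemma landscape_eq_subspaceLandscape {d : ℕ} {A : Matrix (Fin m) (Fin d) ℂ} (hA : Aᴴ * A = 1) :
    landscape A = subspaceLandscape (colSpan A) :=
  funext fun t => landscape_eq_one_sub_re_inner hA t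

lemma steerPairing_comm (p q : ℕ) (t : ℝ) : steerPairing W p q t = steerPairing W q p t := by
  rw [steerPairing, W.inner_starProjection_left_eq_right, ← inner_conj_symm, Complex.conj_re]
  rfl

lemma hasDerivAt_steerPairing (p q : ℕ) (t : ℝ) :
    HasDerivAt (steerPairing W p q)
      (steerPairing W p (q + 1) t + steerPairing W (p + 1) q t) t := by
  have hproj : HasDerivAt (fun t => W.starProjection (steerDeriv m p t))
      (W.starProjection (steerDeriv m (p + 1) t)) t :=
    (W.starProjection.restrictScalars ℝ).hasFDerivAt.comp_hasDerivAt t (hasDerivAt_steerDeriv m p t)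
  exact Complex.reCLM.hasFDerivAt.comp_hasDerivAt t (hproj.inner ℂ (hasDerivAt_steerDeriv m q t))

lemma hasDerivAt_subspaceLandscape (t : ℝ) :
    HasDerivAt (subspaceLandscape W) (-2 * steerPairing W 0 1 t) t := by
  refine ((hasDerivAt_steerPairing 0 0 t).const_sub 1).congr_deriv ?_
  rw [steerPairing_comm (0 + 1)]
  ring

lemma deriv_subspaceLandscape :
    deriv (subspaceLandscape W) = fun t => -2 * steerPairing W 0 1 t :=
  funext fun t => (hasDerivAt_subspaceLandscape t).deriv

lemma differentiable_subspaceLandscape : Differentiable ℝ (subspaceLandscape W) :=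
  fun t => (hasDerivAt_subspaceLandscape t).differentiableAt

lemma hasDerivAt_deriv_subspaceLandscape (t : ℝ) :
    HasDerivAt (deriv (subspaceLandscape W))
      (-2 * steerPairing W 0 2 t - 2 * steerPairing W 1 1 t) t := by
  rw [deriv_subspaceLandscape]
  refine ((hasDerivAt_steerPairing 0 1 t).const_mul (-2)).congr_deriv ?_
  ring

lemma differentiable_deriv_subspaceLandscape : Differentiable ℝ (deriv (subspaceLandscape W)) :=
  fun t => (hasDerivAt_deriv_subspaceLandscape t).differentiableAt

lemma iteratedDeriv_two_subspaceLandscape (t : ℝ) :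
    iteratedDeriv 2 (subspaceLandscape W) t =
      -2 * steerPairing W 0 2 t - 2 * steerPairing W 1 1 t := by
  rw [iteratedDeriv_succ, iteratedDeriv_one, (hasDerivAt_deriv_subspaceLandscape t).deriv]

variable {ι : Type*} {x : ι → ℝ}

lemma steerDeriv_zero_mem_fourierSubspace (m : ℕ) (x : ι → ℝ) (j : ι) :
    steerDeriv m 0 (x j) ∈ fourierSubspace m x :=
  Submodule.subset_span ⟨j, rfl⟩

lemma subspaceLandscape_apply_le [NeZero m] (j : ι) :
    subspaceLandscape W (x j) ≤
      ‖(fourierSubspace m x).starProjection - W.starProjection‖ ^ 2 :=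
  one_sub_re_inner_starProjection_le (steerDeriv_zero_mem_fourierSubspace m x j)
    (norm_steerDeriv_zero m (x j))

variable [NeZero m] (j : ι) (t : ℝ)

lemma abs_steerPairing_sub_le (p q : ℕ) :
    |steerPairing W p q t - dirichlet m p (t - x j) * dirichlet m q (t - x j)| ≤
      ‖fourierDeflation m x j (steerDeriv m p t)‖ * ‖fourierDeflation m x j (steerDeriv m q t)‖ +
        ‖(fourierSubspace m x).starProjection - W.starProjection‖ *
          ‖steerDeriv m p t‖ * ‖steerDeriv m q t‖ := by
  refine abs_re_inner_starProjection_sub_le (steerDeriv_zero_mem_fourierSubspace m x j)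
    (norm_steerDeriv_zero m (x j)) ?_ (inner_steerDeriv_zero m q _ _)
  rw [← inner_conj_symm, inner_steerDeriv_zero]
  exact Complex.conj_ofReal _

lemma abs_deriv_subspaceLandscape_sub_slope_le :
    |deriv (subspaceLandscape W) t - -2 * dirichlet m 0 (t - x j) * dirichlet m 1 (t - x j)| ≤
      2 * (‖fourierDeflation m x j (steerDeriv m 0 t)‖ *
        ‖fourierDeflation m x j (steerDeriv m 1 t)‖) +
        0.57736 * ‖(fourierSubspace m x).starProjection - W.starProjection‖ * m := by
  have h := abs_steerPairing_sub_le (W := W) (x := x) j t 0 1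
  have hone := mul_le_mul_of_nonneg_left (norm_steerDeriv_one_le m t)
    (norm_nonneg ((fourierSubspace m x).starProjection - W.starProjection))
  rw [norm_steerDeriv_zero, mul_one] at h
  rw [deriv_subspaceLandscape, mul_assoc, ← mul_sub, abs_mul]
  norm_num
  linarith

lemma abs_iteratedDeriv_two_subspaceLandscape_sub_curvature_le :
    |iteratedDeriv 2 (subspaceLandscape W) t -
      (-2 * dirichlet m 0 (t - x j) * dirichlet m 2 (t - x j) -
        2 * dirichlet m 1 (t - x j) ^ 2)| ≤
      2 * (‖fourierDeflation m x j (steerDeriv m 0 t)‖ *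
        ‖fourierDeflation m x j (steerDeriv m 2 t)‖) +
        2 * ‖fourierDeflation m x j (steerDeriv m 1 t)‖ ^ 2 +
        0.3904 * ‖(fourierSubspace m x).starProjection - W.starProjection‖ * (m : ℝ) ^ 2 := by
  have hzero_two := abs_steerPairing_sub_le (W := W) (x := x) j t 0 2
  have hone_one := abs_steerPairing_sub_le (W := W) (x := x) j t 1 1
  have hθ := norm_nonneg ((fourierSubspace m x).starProjection - W.starProjection)
  have htwo := mul_le_mul_of_nonneg_left (norm_steerDeriv_two_le m t) hθ
  have hone : ‖steerDeriv m 1 t‖ ^ 2 ≤ (0.28868 * m) ^ 2 := by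
    gcongr
    exact norm_steerDeriv_one_le m t
  have hone_sq := mul_le_mul_of_nonneg_left hone hθ
  have hm := mul_nonneg hθ (sq_nonneg (m : ℝ))
  rw [norm_steerDeriv_zero, mul_one] at hzero_two
  rw [abs_le] at hzero_two hone_one
  rw [iteratedDeriv_two_subspaceLandscape, abs_le]
  constructor <;> linarith [hzero_two.1, hzero_two.2, hone_one.1, hone_one.2]

end SubspaceLandscape

section NearEstimates

variable {ι : Type*} [Finite ι] {m : ℕ} {x : ι → ℝ} {j : ι} {t : ℝ}
  {W : Submodule ℂ (EuclideanSpace ℂ (Fin m))}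

lemma norm_fourierDeflation_zero_le_of_le {r : ℝ} (hm : 100 ≤ m)
    (hsep : Pairwise fun j k => 8 * π / m ≤ torusDist (x j) (x k)) (ht : m * |t - x j| ≤ r)
    (hr : r ≤ 4.26) :
    ‖fourierDeflation m x j (steerDeriv m 0 t)‖ ≤ 0.1483 * r :=
  (norm_fourierDeflation_zero_le_mul hm hsep (ht.trans hr)).trans (by gcongr)

lemma abs_deriv_subspaceLandscape_sub_slope_le_mul {r : ℝ} (hm : 100 ≤ m)
    (hsep : Pairwise fun j k => 8 * π / m ≤ torusDist (x j) (x k))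
    (hθ : ‖(fourierSubspace m x).starProjection - W.starProjection‖ ≤ 0.01)
    (ht : m * |t - x j| ≤ 4.26) (hr : ‖fourierDeflation m x j (steerDeriv m 0 t)‖ ≤ r) :
    |deriv (subspaceLandscape W) t - -2 * dirichlet m 0 (t - x j) * dirichlet m 1 (t - x j)| ≤
      (0.2966 * r + 0.0057736) * m := by
  have : NeZero m := ⟨by omega⟩
  have hprod : ‖fourierDeflation m x j (steerDeriv m 0 t)‖ *
      ‖fourierDeflation m x j (steerDeriv m 1 t)‖ ≤ r * (0.1483 * m) := by
    gcongr
    · exact (norm_nonneg _).trans hr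
    · exact norm_fourierDeflation_one_le hm hsep ht
  refine (abs_deriv_subspaceLandscape_sub_slope_le j t).trans ?_
  have hθm := mul_le_mul_of_nonneg_right hθ (Nat.cast_nonneg (α := ℝ) m)
  linarith

lemma abs_deriv_subspaceLandscape_sub_slope_le_far (hm : 100 ≤ m)
    (hsep : Pairwise fun j k => 8 * π / m ≤ torusDist (x j) (x k))
    (hθ : ‖(fourierSubspace m x).starProjection - W.starProjection‖ ≤ 0.01)
    (ht : m * |t - x j| ≤ 4.26) :
    |deriv (subspaceLandscape W) t - -2 * dirichlet m 0 (t - x j) * dirichlet m 1 (t - x j)| ≤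
      0.1164 * m :=
  (abs_deriv_subspaceLandscape_sub_slope_le_mul hm hsep hθ ht
    (norm_fourierDeflation_zero_le hm hsep ht)).trans (by gcongr; norm_num)

lemma abs_deriv_subspaceLandscape_sub_slope_le_near (hm : 100 ≤ m)
    (hsep : Pairwise fun j k => 8 * π / m ≤ torusDist (x j) (x k))
    (hθ : ‖(fourierSubspace m x).starProjection - W.starProjection‖ ≤ 0.01)
    (ht : m * |t - x j| ≤ 2) :
    |deriv (subspaceLandscape W) t - -2 * dirichlet m 0 (t - x j) * dirichlet m 1 (t - x j)| ≤
      0.0938 * m :=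
  (abs_deriv_subspaceLandscape_sub_slope_le_mul hm hsep hθ (ht.trans (by norm_num))
    (norm_fourierDeflation_zero_le_of_le hm hsep ht (by norm_num))).trans (by gcongr; norm_num)

lemma abs_iteratedDeriv_two_subspaceLandscape_sub_curvature_le_near (hm : 100 ≤ m)
    (hsep : Pairwise fun j k => 8 * π / m ≤ torusDist (x j) (x k))
    (hθ : ‖(fourierSubspace m x).starProjection - W.starProjection‖ ≤ 0.01)
    (ht : m * |t - x j| ≤ 1.12) :
    |iteratedDeriv 2 (subspaceLandscape W) t -
      (-2 * dirichlet m 0 (t - x j) * dirichlet m 2 (t - x j) -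
        2 * dirichlet m 1 (t - x j) ^ 2)| ≤ 0.0736 * (m : ℝ) ^ 2 := by
  have : NeZero m := ⟨by omega⟩
  have ht' : m * |t - x j| ≤ 4.26 := ht.trans (by norm_num)
  have hzero_two : ‖fourierDeflation m x j (steerDeriv m 0 t)‖ *
      ‖fourierDeflation m x j (steerDeriv m 2 t)‖ ≤
        0.1483 * 1.12 * (0.0772 * (m : ℝ) ^ 2) := by
    gcongr
    · exact norm_fourierDeflation_zero_le_of_le hm hsep ht (by norm_num)
    · exact norm_fourierDeflation_two_le hm hsep ht'
  have hone : ‖fourierDeflation m x j (steerDeriv m 1 t)‖ ^ 2 ≤ (0.1483 * m) ^ 2 := by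
    gcongr
    exact norm_fourierDeflation_one_le hm hsep ht'
  refine (abs_iteratedDeriv_two_subspaceLandscape_sub_curvature_le j t).trans ?_
  have hθm := mul_le_mul_of_nonneg_right hθ (sq_nonneg (m : ℝ))
  linarith [sq_nonneg (m : ℝ)]

lemma le_iteratedDeriv_two_subspaceLandscape (hm : 100 ≤ m)
    (hsep : Pairwise fun j k => 8 * π / m ≤ torusDist (x j) (x k))
    (hθ : ‖(fourierSubspace m x).starProjection - W.starProjection‖ ≤ 0.01)
    (ht : m * |t - x j| ≤ 1.12) :
    (0.093 - (m * |t - x j|) ^ 2 / 30) * (m : ℝ) ^ 2 ≤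
      iteratedDeriv 2 (subspaceLandscape W) t := by
  have hcurv := le_curvature (t - x j) hm
    (by rw [abs_mul, Nat.abs_cast]; exact ht.trans (by norm_num))
  have herr := abs_le.mp
    (abs_iteratedDeriv_two_subspaceLandscape_sub_curvature_le_near hm hsep hθ ht)
  have hsq : (m * (t - x j)) ^ 2 = (m * |t - x j|) ^ 2 := by rw [mul_pow, mul_pow, sq_abs]
  rw [hsq] at hcurv
  linarith [herr.1]

lemma iteratedDeriv_two_subspaceLandscape_le (hm : 100 ≤ m)
    (hsep : Pairwise fun j k => 8 * π / m ≤ torusDist (x j) (x k))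
    (hθ : ‖(fourierSubspace m x).starProjection - W.starProjection‖ ≤ 0.01)
    (ht : m * |t - x j| ≤ 1.12) :
    iteratedDeriv 2 (subspaceLandscape W) t ≤ 0.269 * (m : ℝ) ^ 2 := by
  have herr := abs_le.mp
    (abs_iteratedDeriv_two_subspaceLandscape_sub_curvature_le_near hm hsep hθ ht)
  linarith [herr.2, curvature_le (m := m) (t - x j), sq_nonneg (m : ℝ)]

lemma le_sub_mul_deriv_subspaceLandscape (hm : 100 ≤ m)
    (hsep : Pairwise fun j k => 8 * π / m ≤ torusDist (x j) (x k))
    (hθ : ‖(fourierSubspace m x).starProjection - W.starProjection‖ ≤ 0.01)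
    (hlo : 0.977 ≤ m * |t - x j|) (hhi : m * |t - x j| ≤ 4.26) :
    0.0306 * m * |t - x j| ≤ (t - x j) * deriv (subspaceLandscape W) t := by
  have hmul : ∀ {c : ℝ},
      |deriv (subspaceLandscape W) t - -2 * dirichlet m 0 (t - x j) * dirichlet m 1 (t - x j)| ≤
        c * m → -(c * (m * |t - x j|)) ≤ (t - x j) * (deriv (subspaceLandscape W) t -
          -2 * dirichlet m 0 (t - x j) * dirichlet m 1 (t - x j)) := by
    intro c hc
    refine (neg_le_neg ?_).trans (neg_abs_le _)
    rw [abs_mul, ← mul_assoc, mul_comm]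
    gcongr
  rcases le_total (m * |t - x j|) 2 with hmid | hmid
  · linarith [le_mul_slope_near (t - x j) hm hlo hmid,
      hmul (abs_deriv_subspaceLandscape_sub_slope_le_near hm hsep hθ hmid)]
  · linarith [le_mul_slope_far (t - x j) hm hmid hhi,
      hmul (abs_deriv_subspaceLandscape_sub_slope_le_far hm hsep hθ hhi)]

lemma le_deriv_subspaceLandscape (hm : 100 ≤ m)
    (hsep : Pairwise fun j k => 8 * π / m ≤ torusDist (x j) (x k))
    (hθ : ‖(fourierSubspace m x).starProjection - W.starProjection‖ ≤ 0.01)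
    (hlo : 0.977 ≤ m * (t - x j)) (hhi : m * (t - x j) ≤ 4.26) :
    0.0306 * m ≤ deriv (subspaceLandscape W) t := by
  have hpos : 0 < t - x j := pos_of_mul_pos_right (by linarith) m.cast_nonneg
  have habs := abs_of_pos hpos
  have h := le_sub_mul_deriv_subspaceLandscape hm hsep hθ (by rwa [habs]) (by rwa [habs])
  rw [habs, mul_comm (t - x j)] at h
  exact le_of_mul_le_mul_right h hpos

lemma deriv_subspaceLandscape_le (hm : 100 ≤ m)
    (hsep : Pairwise fun j k => 8 * π / m ≤ torusDist (x j) (x k))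
    (hθ : ‖(fourierSubspace m x).starProjection - W.starProjection‖ ≤ 0.01)
    (hlo : 0.977 ≤ m * (x j - t)) (hhi : m * (x j - t) ≤ 4.26) :
    deriv (subspaceLandscape W) t ≤ -(0.0306 * m) := by
  have hpos : 0 < x j - t := pos_of_mul_pos_right (by linarith) m.cast_nonneg
  have habs : |t - x j| = x j - t := by rw [abs_sub_comm, abs_of_pos hpos]
  have h := le_sub_mul_deriv_subspaceLandscape hm hsep hθ (by rwa [habs]) (by rwa [habs])
  rw [habs] at h
  refine le_neg.mp (le_of_mul_le_mul_right ?_ hpos)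
  linarith

lemma abs_deriv_subspaceLandscape_le (hm : 100 ≤ m)
    (hsep : Pairwise fun j k => 8 * π / m ≤ torusDist (x j) (x k))
    (hθ : ‖(fourierSubspace m x).starProjection - W.starProjection‖ ≤ 0.01)
    (ht : m * |t - x j| ≤ 4.26) :
    |deriv (subspaceLandscape W) t| ≤ (m : ℝ) ^ 2 * |t - x j| / 6 + 0.1164 * m := by
  have htri := abs_sub_abs_le_abs_sub (deriv (subspaceLandscape W) t)
    (-2 * dirichlet m 0 (t - x j) * dirichlet m 1 (t - x j))
  linarith [abs_deriv_subspaceLandscape_sub_slope_le_far hm hsep hθ ht,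
    abs_slope_le (m := m) (t - x j)]

end NearEstimates

lemma le_subspaceLandscape_of_le_torusDist {ι : Type*} [Finite ι] {m : ℕ} {x : ι → ℝ} {t : ℝ}
    {W : Submodule ℂ (EuclideanSpace ℂ (Fin m))} (hm : 100 ≤ m)
    (hsep : Pairwise fun j k => 8 * π / m ≤ torusDist (x j) (x k))
    (hθ : ‖(fourierSubspace m x).starProjection - W.starProjection‖ ≤ 0.01)
    (ht : ∀ j, 4.118 / m ≤ torusDist t (x j)) : 0.529 ≤ subspaceLandscape W t := by
  have := Fintype.ofFinite ι
  have hm' : (100 : ℝ) ≤ m := by exact_mod_cast hm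
  have : NeZero m := ⟨by omega⟩
  have hη : (0 : ℝ) < 4.118 / m := by positivity
  have hcsc : ∑ k, cscSq (t - x k) ≤ 0.3025 * (m : ℝ) ^ 2 := by
    refine (sum_cscSq_le_far (by positivity) hη hsep ht).trans ?_
    have hπ : 40 / (8 * π / m) ^ 2 ≤ 40 / (8 * 3.1415 / m) ^ 2 := by
      gcongr
      exact Real.pi_gt_d4.le
    have hratio : π / (8 * π / m) = m / 8 := by field_simp
    rw [hratio]
    refine (add_le_add_left (add_le_add_left (add_le_add_right hπ _) _) _).trans ?_
    have hsq : 100 * (m : ℝ) ≤ (m : ℝ) ^ 2 := by rw [sq]; gcongr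
    simp only [div_pow, div_div_eq_mul_div]
    norm_num
    linarith
  have hsum : ∑ k, ‖inner ℂ (steerDeriv m 0 (x k)) (steerDeriv m 0 t)‖ ^ 2 ≤ 0.3025 := by
    refine le_of_mul_le_mul_left (a := (m : ℝ) ^ 2) ?_ (by positivity)
    rw [Finset.mul_sum, mul_comm ((m : ℝ) ^ 2) 0.3025]
    refine (Finset.sum_le_sum fun k _ => ?_).trans hcsc
    rw [norm_sq_inner_steerDeriv_zero, ← mul_pow]
    exact dirichlet_zero_sq_le m (sin_half_sub_ne_zero (hη.trans_le (ht k)))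
  have hproj := mul_norm_starProjection_sq_le (by norm_num)
    (fun c => sum_norm_sq_le_norm_sum_smul_steerDeriv_sq c hm hsep)
    (V := fourierSubspace m x) rfl (steerDeriv m 0 t)
  have hperturb : steerPairing W 0 0 t ≤ _ :=
    re_inner_starProjection_le (fourierSubspace m x) W (steerDeriv m 0 t)
  rw [norm_steerDeriv_zero, one_pow, mul_one] at hperturb
  rw [subspaceLandscape]
  linarith

/-! ### Critical points -/

section Calculus

variable {f : ℝ → ℝ} {a : ℝ}

lemma exists_eq_zero_of_le_deriv {r c : ℝ} (hf : Differentiable ℝ f) (hr : 0 ≤ r)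
    (ha : |f a| ≤ c * r) (hderiv : ∀ t, |t - a| ≤ r → c ≤ deriv f t) :
    ∃ y, |y - a| ≤ r ∧ f y = 0 := by
  have hle : ∀ u v, a - r ≤ u → u ≤ v → v ≤ a + r → c * (v - u) ≤ f v - f u := by
    intro u v hu huv hv
    refine (convex_Icc u v).mul_sub_le_image_sub_of_le_deriv hf.continuous.continuousOn
      hf.differentiableOn (fun t ht => hderiv t ?_) u ⟨le_rfl, huv⟩ v ⟨huv, le_rfl⟩ huv
    have ht' := interior_subset ht
    rw [abs_le]
    constructor <;> linarith [ht'.1, ht'.2]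
  have hleft := hle (a - r) a le_rfl (by linarith) (by linarith)
  have hright := hle a (a + r) (by linarith) (by linarith) le_rfl
  rw [sub_sub_cancel] at hleft
  rw [add_sub_cancel_left] at hright
  rw [abs_le] at ha
  have hzero : (0 : ℝ) ∈ Set.Icc (f (a - r)) (f (a + r)) := ⟨by linarith, by linarith⟩
  obtain ⟨y, hy, hfy⟩ := intermediate_value_Icc (by linarith) hf.continuous.continuousOn hzero
  exact ⟨y, abs_le.mpr ⟨by linarith [hy.1], by linarith [hy.2]⟩, hfy⟩

lemma isMinOn_of_deriv_eq_zero {s : Set ℝ} (hs : Convex ℝ s) (has : a ∈ interior s)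
    (hf : Differentiable ℝ f) (hf' : Differentiable ℝ (deriv f)) (ha : deriv f a = 0)
    (hnonneg : ∀ t ∈ s, 0 ≤ iteratedDeriv 2 f t) : IsMinOn f s a := by
  refine ConvexOn.isMinOn_of_rightDeriv_eq_zero (convexOn_of_deriv2_nonneg' hs hf.differentiableOn
    hf'.differentiableOn fun t ht => ?_) has ?_
  · rw [← iteratedDeriv_eq_iterate]
    exact hnonneg t ht
  · rw [(hf a).derivWithin (uniqueDiffWithinAt_Ioi a), ha]

end Calculus

section Localization

variable {m : ℕ} {t y z : ℝ}

lemma mul_sub_mem_Icc (hm : 0 < m)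
    (ht : t ∈ Set.Icc (y + π / (3 * m)) (y + 4 * π / (3 * m))) :
    m * (t - y) ∈ Set.Icc 1.047 4.189 := by
  have hm' : (0 : ℝ) < 3 * m := by positivity
  have hlo := (div_le_iff₀ hm').mp (le_sub_iff_add_le'.mpr ht.1)
  have hhi := (le_div_iff₀ hm').mp (sub_le_iff_le_add'.mpr ht.2)
  constructor <;> linarith [Real.pi_gt_d4, Real.pi_lt_d4]

lemma mul_abs_sub_mem_Icc (hm : 0 < m)
    (ht : t ∈ Set.Icc (y + π / (3 * m)) (y + 4 * π / (3 * m))) :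
    m * |t - y| ∈ Set.Icc 1.047 4.189 := by
  have h := mul_sub_mem_Icc hm ht
  rwa [abs_of_nonneg (nonneg_of_mul_nonneg_right (by linarith [h.1]) (Nat.cast_pos.mpr hm))]

lemma mem_Icc_add_of_mem_Icc_sub {a b : ℝ} (ht : t ∈ Set.Icc (y - b) (y - a)) :
    y ∈ Set.Icc (t + a) (t + b) :=
  ⟨by linarith [ht.2], by linarith [ht.1]⟩

lemma mul_abs_sub_le_add_of_near {r : ℝ} (hyz : m * |y - z| ≤ 0.07) (hty : m * |t - y| ≤ r) :
    m * |t - z| ≤ r + 0.07 := by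
  linarith [mul_le_mul_of_nonneg_left (abs_sub_le t y z) (Nat.cast_nonneg (α := ℝ) m)]

lemma mul_abs_sub_le_of_near (hm : 0 < m) (hyz : m * |y - z| ≤ 0.07)
    (hty : |t - y| ≤ π / (3 * m)) : m * |t - z| ≤ 1.12 := by
  rw [le_div_iff₀ (by positivity)] at hty
  have h : m * |t - y| ≤ 1.05 := by linarith [Real.pi_lt_d4]
  linarith [mul_abs_sub_le_add_of_near hyz h]

end Localization

section CriticalPoints

variable {ι : Type*} [Finite ι] {m : ℕ} {x : ι → ℝ} {j : ι} {t y : ℝ}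
  {W : Submodule ℂ (EuclideanSpace ℂ (Fin m))}

/-- At `x j` the slope is at most `0.57736 * θ * m`, while nearby the curvature is at least
`0.0914 * m ^ 2`, and `0.57736 < 7 * 0.0914`. -/
lemma exists_deriv_subspaceLandscape_eq_zero (hm : 100 ≤ m)
    (hsep : Pairwise fun j k => 8 * π / m ≤ torusDist (x j) (x k))
    (hθ : ‖(fourierSubspace m x).starProjection - W.starProjection‖ ≤ 0.01) (j : ι) :
    ∃ y, |y - x j| ≤ 7 * ‖(fourierSubspace m x).starProjection - W.starProjection‖ / m ∧
      deriv (subspaceLandscape W) y = 0 := by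
  have : NeZero m := ⟨by omega⟩
  have hm' : (0 : ℝ) < m := by exact_mod_cast NeZero.pos m
  have hθ0 := norm_nonneg ((fourierSubspace m x).starProjection - W.starProjection)
  refine exists_eq_zero_of_le_deriv (c := 0.0914 * (m : ℝ) ^ 2)
    differentiable_deriv_subspaceLandscape (by positivity) ?_ fun t ht => ?_
  · have hslope := abs_deriv_subspaceLandscape_sub_slope_le (W := W) (x := x) j (x j)
    have hone : dirichlet m 1 0 = 0 := by simpa using abs_dirichlet_one_le (m := m) 0
    rw [fourierDeflation, deflation_self, norm_zero, zero_mul, mul_zero, zero_add, sub_self,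
      hone, mul_zero, sub_zero] at hslope
    refine hslope.trans ?_
    rw [mul_div_assoc', le_div_iff₀ hm']
    linarith [mul_nonneg hθ0 (sq_nonneg (m : ℝ))]
  · rw [le_div_iff₀' hm'] at ht
    have ht' : m * |t - x j| ≤ 0.07 := by linarith
    have hcurv := le_iteratedDeriv_two_subspaceLandscape (W := W) hm hsep hθ
      (ht'.trans (by norm_num))
    rw [iteratedDeriv_succ, iteratedDeriv_one] at hcurv
    refine le_trans ?_ hcurv
    have hsq : (m * |t - x j|) ^ 2 ≤ 0.07 ^ 2 := by gcongr
    gcongr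
    linarith

lemma iteratedDeriv_two_subspaceLandscape_mem_Icc (hm : 100 ≤ m)
    (hsep : Pairwise fun j k => 8 * π / m ≤ torusDist (x j) (x k))
    (hθ : ‖(fourierSubspace m x).starProjection - W.starProjection‖ ≤ 0.01)
    (hy : m * |y - x j| ≤ 0.07) (ht : |t - y| ≤ π / (3 * m)) :
    iteratedDeriv 2 (subspaceLandscape W) t ∈
      Set.Icc (0.0271 * (m : ℝ) ^ 2) (0.269 * (m : ℝ) ^ 2) := by
  have ht' := mul_abs_sub_le_of_near (by omega) hy ht
  refine ⟨le_trans ?_ (le_iteratedDeriv_two_subspaceLandscape hm hsep hθ ht'),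
    iteratedDeriv_two_subspaceLandscape_le hm hsep hθ ht'⟩
  have hsq : (m * |t - x j|) ^ 2 ≤ 1.12 ^ 2 := by gcongr
  gcongr
  linarith

lemma isMinOn_subspaceLandscape (hm : 100 ≤ m)
    (hsep : Pairwise fun j k => 8 * π / m ≤ torusDist (x j) (x k))
    (hθ : ‖(fourierSubspace m x).starProjection - W.starProjection‖ ≤ 0.01)
    (hy : m * |y - x j| ≤ 0.07) (hcrit : deriv (subspaceLandscape W) y = 0) :
    IsMinOn (subspaceLandscape W) (Metric.closedBall y (π / (3 * m))) y := by
  have : 0 < m := by omega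
  refine isMinOn_of_deriv_eq_zero (convex_closedBall _ _)
    (mem_interior_iff_mem_nhds.mpr (Metric.closedBall_mem_nhds y (by positivity)))
    differentiable_subspaceLandscape differentiable_deriv_subspaceLandscape hcrit fun t ht => ?_
  exact le_trans (by positivity) (iteratedDeriv_two_subspaceLandscape_mem_Icc hm hsep hθ hy ht).1

lemma isLocalMin_subspaceLandscape (hm : 100 ≤ m)
    (hsep : Pairwise fun j k => 8 * π / m ≤ torusDist (x j) (x k))
    (hθ : ‖(fourierSubspace m x).starProjection - W.starProjection‖ ≤ 0.01)
    (hy : m * |y - x j| ≤ 0.07) (hcrit : deriv (subspaceLandscape W) y = 0) :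
    IsLocalMin (subspaceLandscape W) y := by
  have : 0 < m := by omega
  exact (isMinOn_subspaceLandscape hm hsep hθ hy hcrit).isLocalMin
    (Metric.closedBall_mem_nhds y (by positivity))

lemma subspaceLandscape_le_apply (hm : 100 ≤ m)
    (hsep : Pairwise fun j k => 8 * π / m ≤ torusDist (x j) (x k))
    (hθ : ‖(fourierSubspace m x).starProjection - W.starProjection‖ ≤ 0.01)
    (hy : m * |y - x j| ≤ 0.07) (hcrit : deriv (subspaceLandscape W) y = 0) :
    subspaceLandscape W y ≤ subspaceLandscape W (x j) := by
  have : 0 < m := by omega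
  refine isMinOn_subspaceLandscape hm hsep hθ hy hcrit ?_
  rw [Metric.mem_closedBall', Real.dist_eq, le_div_iff₀ (by positivity)]
  linarith [Real.pi_gt_three]

lemma le_deriv_subspaceLandscape_of_mem_Icc (hm : 100 ≤ m)
    (hsep : Pairwise fun j k => 8 * π / m ≤ torusDist (x j) (x k))
    (hθ : ‖(fourierSubspace m x).starProjection - W.starProjection‖ ≤ 0.01)
    (hy : m * |y - x j| ≤ 0.07)
    (ht : t ∈ Set.Icc (y + π / (3 * m)) (y + 4 * π / (3 * m))) :
    0.0306 * m ≤ deriv (subspaceLandscape W) t := by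
  have hty := mul_sub_mem_Icc (by omega) ht
  rw [← Nat.abs_cast, ← abs_mul, abs_le] at hy
  exact le_deriv_subspaceLandscape hm hsep hθ (j := j) (by linarith [hty.1, hy.1])
    (by linarith [hty.2, hy.2])

lemma deriv_subspaceLandscape_le_of_mem_Icc (hm : 100 ≤ m)
    (hsep : Pairwise fun j k => 8 * π / m ≤ torusDist (x j) (x k))
    (hθ : ‖(fourierSubspace m x).starProjection - W.starProjection‖ ≤ 0.01)
    (hy : m * |y - x j| ≤ 0.07)
    (ht : t ∈ Set.Icc (y - 4 * π / (3 * m)) (y - π / (3 * m))) :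
    deriv (subspaceLandscape W) t ≤ -(0.0306 * m) := by
  have hyt := mul_sub_mem_Icc (by omega) (mem_Icc_add_of_mem_Icc_sub ht)
  rw [← Nat.abs_cast, ← abs_mul, abs_le] at hy
  exact deriv_subspaceLandscape_le hm hsep hθ (j := j) (by linarith [hyt.1, hy.2])
    (by linarith [hyt.2, hy.1])

lemma abs_deriv_subspaceLandscape_le_mul (hm : 100 ≤ m)
    (hsep : Pairwise fun j k => 8 * π / m ≤ torusDist (x j) (x k))
    (hθ : ‖(fourierSubspace m x).starProjection - W.starProjection‖ ≤ 0.01)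
    (hy : m * |y - x j| ≤ 0.07) (ht : m * |t - y| ∈ Set.Icc 1.047 4.189) :
    |deriv (subspaceLandscape W) t| ≤ 0.292 * (m : ℝ) ^ 2 * |t - y| := by
  have htri := mul_abs_sub_le_add_of_near hy le_rfl (t := t)
  have hm' := Nat.cast_nonneg (α := ℝ) m
  refine (abs_deriv_subspaceLandscape_le hm hsep hθ (j := j) (by linarith [ht.2])).trans ?_
  linarith [mul_le_mul_of_nonneg_left htri hm', mul_le_mul_of_nonneg_left ht.1 hm']

lemma deriv_subspaceLandscape_le_mul_of_mem_Icc (hm : 100 ≤ m)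
    (hsep : Pairwise fun j k => 8 * π / m ≤ torusDist (x j) (x k))
    (hθ : ‖(fourierSubspace m x).starProjection - W.starProjection‖ ≤ 0.01)
    (hy : m * |y - x j| ≤ 0.07)
    (ht : t ∈ Set.Icc (y + π / (3 * m)) (y + 4 * π / (3 * m))) :
    deriv (subspaceLandscape W) t ≤ 0.292 * (m : ℝ) ^ 2 * |t - y| :=
  (abs_le.mp (abs_deriv_subspaceLandscape_le_mul hm hsep hθ hy
    (mul_abs_sub_mem_Icc (by omega) ht))).2

lemma neg_mul_le_deriv_subspaceLandscape_of_mem_Icc (hm : 100 ≤ m)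
    (hsep : Pairwise fun j k => 8 * π / m ≤ torusDist (x j) (x k))
    (hθ : ‖(fourierSubspace m x).starProjection - W.starProjection‖ ≤ 0.01)
    (hy : m * |y - x j| ≤ 0.07)
    (ht : t ∈ Set.Icc (y - 4 * π / (3 * m)) (y - π / (3 * m))) :
    -(0.292 * (m : ℝ) ^ 2 * |t - y|) ≤ deriv (subspaceLandscape W) t := by
  refine (abs_le.mp (abs_deriv_subspaceLandscape_le_mul hm hsep hθ hy ?_)).1
  rw [abs_sub_comm]
  exact mul_abs_sub_mem_Icc (by omega) (mem_Icc_add_of_mem_Icc_sub ht)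

lemma le_subspaceLandscape_of_lt_torusDist {y : ι → ℝ} (hm : 100 ≤ m)
    (hsep : Pairwise fun j k => 8 * π / m ≤ torusDist (x j) (x k))
    (hθ : ‖(fourierSubspace m x).starProjection - W.starProjection‖ ≤ 0.01)
    (hy : ∀ j, m * |y j - x j| ≤ 0.07) (ht : ∀ j, 4 * π / (3 * m) < torusDist t (y j)) :
    0.529 ≤ subspaceLandscape W t := by
  have hm' : (0 : ℝ) < m := by exact_mod_cast (by omega : 0 < m)
  refine le_subspaceLandscape_of_le_torusDist hm hsep hθ fun j => ?_
  have htj := (div_lt_iff₀ (by positivity)).mp (ht j)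
  have hyj := mul_le_mul_of_nonneg_left (torusDist_le_abs_sub (x j) (y j)) hm'.le
  have htri := mul_le_mul_of_nonneg_left (torusDist_triangle t (x j) (y j)) hm'.le
  rw [abs_sub_comm] at hyj
  rw [div_le_iff₀' hm']
  linarith [hy j, Real.pi_gt_d4]

end CriticalPoints

lemma torusDist_pos_of_near {ι : Type*} {m : ℕ} {x y : ι → ℝ} {j k : ι} (hm : 0 < m)
    (hsep : Pairwise fun j k => 8 * π / m ≤ torusDist (x j) (x k))
    (hy : ∀ j, m * |y j - x j| ≤ 0.07) (hjk : j ≠ k) : 0 < torusDist (y j) (y k) := by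
  have hm' : (0 : ℝ) < m := by exact_mod_cast hm
  have hx := (div_le_iff₀' hm').mp (hsep hjk)
  have htri : torusDist (x j) (x k) ≤ |y j - x j| + torusDist (y j) (y k) + |y k - x k| := by
    rw [abs_sub_comm (y j)]
    linarith [torusDist_triangle (x j) (y j) (x k), torusDist_triangle (y j) (y k) (x k),
      torusDist_le_abs_sub (x j) (y j), torusDist_le_abs_sub (y k) (x k)]
  refine pos_of_mul_pos_right ?_ hm'.le
  linarith [mul_le_mul_of_nonneg_left htri hm'.le, hy j, hy k, Real.pi_gt_three]

/-- **Landscape analysis** (Theorem `thm:landscape`). Let `m ≥ 100`, let `x ⊂ 𝕋` with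
`Δ(x) ≥ 8π/m`, let `U` be an orthonormal basis of the Fourier subspace `range Φ(m,x)`,
and let `Ũ` have orthonormal columns with `ϑ := ‖UU^* − ŨŨ^*‖₂ ≤ 0.01`. Then the landscape
function `q̃ := q_Ũ` has at least `s` critical points `x̃_1,…,x̃_s` satisfying (a)–(f). -/
theorem landscape_analysis
    (m s : ℕ) (hm : 100 ≤ m)
    (x : Fin s → ℝ)
    (hsep : ∀ j k : Fin s, j ≠ k → 8 * Real.pi / m ≤ torusDist (x j) (x k))
    (U Ut : Matrix (Fin m) (Fin s) ℂ)
    (hU : IsONBasisOf U (colSpan (fourierMatrix m x)))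
    (hUt : Utᴴ * Ut = 1)
    (θ : ℝ) (hθdef : θ = specNorm (U * Uᴴ - Ut * Utᴴ)) (hθ : θ ≤ 0.01) :
    ∃ xt : Fin s → ℝ,
      -- the `x̃_j` are `s` (pairwise distinct) critical points of `q̃`
      (∀ j k : Fin s, j ≠ k → 0 < torusDist (xt j) (xt k)) ∧
      (∀ j, deriv (landscape Ut) (xt j) = 0) ∧
      (∀ j : Fin s,
        -- (a)
        torusDist (xt j) (x j) ≤ 7 * θ / m ∧
        -- (b)
        (∀ t : ℝ, |t - xt j| ≤ Real.pi / (3 * m) →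
          0.0271 * (m : ℝ) ^ 2 ≤ iteratedDeriv 2 (landscape Ut) t ∧
            iteratedDeriv 2 (landscape Ut) t ≤ 0.269 * (m : ℝ) ^ 2) ∧
        -- (c)
        IsLocalMin (landscape Ut) (xt j) ∧
        landscape Ut (xt j) ≤ landscape Ut (x j) ∧
        landscape Ut (x j) ≤ θ ^ 2 ∧ θ ^ 2 ≤ 1 / 10000 ∧
        -- (d)
        (∀ t ∈ Set.Icc (xt j + Real.pi / (3 * m)) (xt j + 4 * Real.pi / (3 * m)),
          0.0306 * (m : ℝ) ≤ deriv (landscape Ut) t) ∧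
        (∀ t ∈ Set.Icc (xt j - 4 * Real.pi / (3 * m)) (xt j - Real.pi / (3 * m)),
          deriv (landscape Ut) t ≤ -(0.0306 * (m : ℝ))) ∧
        -- (f)
        (∀ t ∈ Set.Icc (xt j + Real.pi / (3 * m)) (xt j + 4 * Real.pi / (3 * m)),
          deriv (landscape Ut) t ≤ 0.292 * (m : ℝ) ^ 2 * |t - xt j|) ∧
        (∀ t ∈ Set.Icc (xt j - 4 * Real.pi / (3 * m)) (xt j - Real.pi / (3 * m)),
          -(0.292 * (m : ℝ) ^ 2 * |t - xt j|) ≤ deriv (landscape Ut) t)) ∧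
      -- (e)
      (∀ t : ℝ, (∀ j, 4 * Real.pi / (3 * m) < torusDist t (xt j)) →
        0.529 ≤ landscape Ut t) := by
  have hm0 : 0 < m := by omega
  have : NeZero m := ⟨hm0.ne'⟩
  rw [specNorm_sub_eq_norm_starProjection_sub hU.1 hUt, hU.2, colSpan_fourierMatrix] at hθdef
  subst hθdef
  rw [landscape_eq_subspaceLandscape hUt]
  have hsep' : Pairwise fun j k => 8 * π / m ≤ torusDist (x j) (x k) := fun j k => hsep j k
  choose y hyx hcrit using exists_deriv_subspaceLandscape_eq_zero hm hsep' hθ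
  have hy : ∀ j, m * |y j - x j| ≤ 0.07 := fun j => by
    linarith [(le_div_iff₀' (Nat.cast_pos.mpr hm0)).mp (hyx j)]
  refine ⟨y, fun j k => torusDist_pos_of_near hm0 hsep' hy, hcrit, fun j =>
    ⟨(torusDist_le_abs_sub _ _).trans (hyx j),
      fun t => iteratedDeriv_two_subspaceLandscape_mem_Icc hm hsep' hθ (hy j),
      isLocalMin_subspaceLandscape hm hsep' hθ (hy j) (hcrit j),
      subspaceLandscape_le_apply hm hsep' hθ (hy j) (hcrit j),
      subspaceLandscape_apply_le j,
      (pow_le_pow_left₀ (norm_nonneg _) hθ 2).trans (by norm_num),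
      fun t => le_deriv_subspaceLandscape_of_mem_Icc hm hsep' hθ (hy j),
      fun t => deriv_subspaceLandscape_le_of_mem_Icc hm hsep' hθ (hy j),
      fun t => deriv_subspaceLandscape_le_mul_of_mem_Icc hm hsep' hθ (hy j),
      fun t => neg_mul_le_deriv_subspaceLandscape_of_mem_Icc hm hsep' hθ (hy j)⟩,
    fun t => le_subspaceLandscape_of_lt_torusDist hm hsep' hθ hy⟩

end
end

section
/- Properties of the Toeplitz subspace error. Let m > s ≥ 1, let (x,a) with x = {x_1,…,x_s} ⊂ 𝕋 and a ∈ (ℂ∖{0})^s, let y be the clean samples, let η ∈ ℂ^{2m−1}, set T := T(y) and T̃ := T(y+η), and define ρ := 2‖T(η)‖_2/σ_s(T). If ρ ≤ 1 − 1/√2, then σ_s(T̃) > σ_{s+1}(T̃), so T̃ has a unique leading s-dimensional left singular subspace; and for any orthonormal basis Ũ of this subspace and any orthonormal basis U of range Φ(m,x), one has ‖UU^* − ŨŨ^*‖_2 ≤ ρ. -/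
open scoped Real BigOperators Matrix
open Matrix

noncomputable section

/-- The Toeplitz matrix `T(y)` of `y ∈ ℂ^{2m-1}`. -/
def toeplitz (m : ℕ) (y : Fin (2 * m - 1) → ℂ) : Matrix (Fin m) (Fin m) ℂ :=
  fun j k => y ⟨(j : ℕ) + (m - 1) - (k : ℕ), by
    have hj := j.isLt; have hk := k.isLt; omega⟩

/-- Clean samples `y_k = Σ_j a_j e^{i k x_j}` for `k ∈ {-(m-1),…,m-1}`. -/
def cleanSamples (m : ℕ) {s : ℕ} (x : Fin s → ℝ) (a : Fin s → ℂ) :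
    Fin (2 * m - 1) → ℂ :=
  fun k => ∑ j, a j *
    Complex.exp (Complex.I * (((((k : ℕ) : ℝ) - ((m : ℝ) - 1)) * x j : ℝ) : ℂ))

/-- The `k`-th largest singular value (1-indexed) of a square complex matrix. -/
def singVal {d : ℕ} (M : Matrix (Fin d) (Fin d) ℂ) (k : ℕ) : ℝ :=
  if h : 1 ≤ k ∧ k ≤ d then
    Real.sqrt (((Matrix.isHermitian_mul_conjTranspose_self M).eigenvalues ∘
      Tuple.sort ((Matrix.isHermitian_mul_conjTranspose_self M).eigenvalues))
      ⟨d - k, by omega⟩)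
  else 0

/-- The leading `s`-dimensional left singular subspace of a square matrix `M`: the span
of the eigenvectors of `M Mᴴ` whose eigenvalues exceed `σ_{s+1}(M)²` (this is the unique
leading subspace whenever `σ_s(M) > σ_{s+1}(M)`). -/
def leadingLeftSingularSpace {d : ℕ} (M : Matrix (Fin d) (Fin d) ℂ) (s : ℕ) :
    Submodule ℂ (EuclideanSpace ℂ (Fin d)) :=
  Submodule.span ℂ {v | ∃ i : Fin d,
    (singVal M (s + 1)) ^ 2 <
      (Matrix.isHermitian_mul_conjTranspose_self M).eigenvalues i ∧
    v = (Matrix.isHermitian_mul_conjTranspose_self M).eigenvectorBasis i}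

/-!
For orthogonal projections `P`, `Q` onto `K`, `L`, splitting a vector along `L` and `Lᗮ` bounds
`‖P - Q‖` by the larger of `‖P (1 - Q)‖` and `‖(1 - P) Q‖`. When `K` and `L` are the leading left
singular subspaces of `M` and `N`, each of these is controlled by a Wedin-type argument: for
`z ∈ Lᗮ`,
`σ_s(M) ‖P z‖ ≤ ‖M* z‖ ≤ ‖N* z‖ + ‖M - N‖ ‖z‖ ≤ (σ_{s+1}(N) + ‖M - N‖) ‖z‖`,
and symmetrically. For `M` of rank `s` and `N = M + E` with `2‖E‖ < σ_s(M)`, Weyl's inequality gives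
`σ_{s+1}(N) ≤ ‖E‖` and `σ_s(N) ≥ σ_s(M) - ‖E‖ ≥ σ_s(M) / 2`, so both quantities are at most
`2‖E‖ / σ_s(M) = ρ`. The Toeplitz structure enters only through `T(y) = Φ diag(a) Φ*`, which shows
that `T(y)` has rank `s` and the same range as `Φ`.
-/

open Finset

section Projections

variable {𝕜 E : Type*} [RCLike 𝕜] [NormedAddCommGroup E] [InnerProductSpace 𝕜 E]

theorem norm_starProjection_le_of_mem {K L : Submodule 𝕜 E} [K.HasOrthogonalProjection]
    [L.HasOrthogonalProjection] {ρ : ℝ} (hρ : 0 ≤ ρ)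
    (hK : ∀ z ∈ K, ‖L.starProjection z‖ ≤ ρ * ‖z‖) {z : E} (hz : z ∈ L) :
    ‖K.starProjection z‖ ≤ ρ * ‖z‖ := by
  set p := K.starProjection z
  have hp : p ∈ K := K.starProjection_apply_mem z
  -- In operator terms: `P_K P_L` and its adjoint `P_L P_K` have the same norm.
  have hinner : inner 𝕜 p p = inner 𝕜 (L.starProjection p) z := by
    rw [L.inner_starProjection_left_eq_right, Submodule.starProjection_eq_self_iff.2 hz,
      ← K.inner_starProjection_left_eq_right, Submodule.starProjection_eq_self_iff.2 hp]
  have hsq : ‖p‖ * ‖p‖ ≤ ρ * ‖z‖ * ‖p‖ := calc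
    ‖p‖ * ‖p‖ = RCLike.re (inner 𝕜 (L.starProjection p) z) := by
      rw [← hinner, inner_self_eq_norm_mul_norm]
    _ ≤ ‖L.starProjection p‖ * ‖z‖ := re_inner_le_norm _ _
    _ ≤ ρ * ‖p‖ * ‖z‖ := by gcongr; exact hK p hp
    _ = ρ * ‖z‖ * ‖p‖ := by ring
  obtain h0 | hpos := (norm_nonneg p).eq_or_lt
  · rw [← h0]; positivity
  · exact le_of_mul_le_mul_right hsq hpos

theorem norm_starProjection_sub_starProjection_le {K L : Submodule 𝕜 E}
    [K.HasOrthogonalProjection] [L.HasOrthogonalProjection] {ρ : ℝ} (hρ : 0 ≤ ρ)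
    (hL : ∀ z ∈ Lᗮ, ‖K.starProjection z‖ ≤ ρ * ‖z‖)
    (hK : ∀ z ∈ Kᗮ, ‖L.starProjection z‖ ≤ ρ * ‖z‖) :
    ‖K.starProjection - L.starProjection‖ ≤ ρ := by
  refine ContinuousLinearMap.opNorm_le_bound _ hρ fun z ↦ le_of_sq_le_sq ?_ (by positivity)
  set p := L.starProjection z
  set q := Lᗮ.starProjection z
  have hz : z = p + q := (L.starProjection_add_starProjection_orthogonal z).symm
  have hKdiff : K.starProjection (K.starProjection z - p) = K.starProjection q := by
    rw [map_sub, Submodule.starProjection_eq_self_iff.2 (K.starProjection_apply_mem z), ← map_sub,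
      hz, add_sub_cancel_left]
  have hKdiff' : Kᗮ.starProjection (K.starProjection z - p) = -Kᗮ.starProjection p := by
    rw [map_sub, Submodule.starProjection_orthogonal_apply_eq_zero (K.starProjection_apply_mem z),
      zero_sub]
  have hq : ‖K.starProjection q‖ ≤ ρ * ‖q‖ := hL q (Lᗮ.starProjection_apply_mem z)
  have hp : ‖Kᗮ.starProjection p‖ ≤ ρ * ‖p‖ :=
    norm_starProjection_le_of_mem hρ hK (L.starProjection_apply_mem z)
  calc ‖K.starProjection z - p‖ ^ 2
      = ‖K.starProjection q‖ ^ 2 + ‖Kᗮ.starProjection p‖ ^ 2 := by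
        rw [Submodule.norm_sq_eq_add_norm_sq_starProjection _ K, hKdiff, hKdiff', norm_neg]
    _ ≤ (ρ * ‖q‖) ^ 2 + (ρ * ‖p‖) ^ 2 := by gcongr
    _ = (ρ * ‖z‖) ^ 2 := by
        rw [mul_pow, mul_pow ρ ‖z‖, Submodule.norm_sq_eq_add_norm_sq_starProjection z L]; ring

theorem mem_orthogonal_span_image_iff {ι : Type*} {v : ι → E} {s : Set ι} {z : E} :
    z ∈ (Submodule.span 𝕜 (v '' s))ᗮ ↔ ∀ i ∈ s, inner 𝕜 (v i) z = 0 := by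
  rw [← Submodule.span_singleton_le_iff_mem, ← Submodule.isOrtho_iff_le, Submodule.isOrtho_comm,
    Submodule.isOrtho_span]
  simp

end Projections

section Eigenbasis

variable {𝕜 E F ι : Type*} [RCLike 𝕜] [NormedAddCommGroup E] [InnerProductSpace 𝕜 E]
  [NormedAddCommGroup F] [InnerProductSpace 𝕜 F] [Fintype ι]
  {b : OrthonormalBasis ι 𝕜 E} {s : Set ι} {z : E}

theorem mem_span_image_orthonormalBasis_iff :
    z ∈ Submodule.span 𝕜 (b '' s) ↔ ∀ i ∉ s, inner 𝕜 (b i) z = 0 := by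
  rw [← b.coe_toBasis, b.toBasis.mem_span_image]
  simp [Set.subset_def, not_imp_comm, b.repr_apply_apply]

theorem finrank_span_image_orthonormalBasis (b : OrthonormalBasis ι 𝕜 E) (S : Finset ι) :
    Module.finrank 𝕜 (Submodule.span 𝕜 (b '' S)) = #S := by
  classical
  have hli := b.orthonormal.linearIndependent.linearIndepOn_id.mono (Set.image_subset_range b S)
  rw [← coe_image] at hli ⊢
  rw [finrank_span_finset_eq_card hli,
    card_image_of_injective _ b.orthonormal.linearIndependent.injective]

variable [FiniteDimensional 𝕜 E] [FiniteDimensional 𝕜 F] {A : E →ₗ[𝕜] F} {μ : ι → ℝ}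

theorem norm_sq_apply_eq_sum_eigenvalue_mul (hA : ∀ i, A.adjoint (A (b i)) = (μ i : 𝕜) • b i)
    (z : E) :
    ‖A z‖ ^ 2 = ∑ i, μ i * ‖(inner 𝕜 (b i) z : 𝕜)‖ ^ 2 := by
  have hcoord (i : ι) : (inner 𝕜 (b i) (A.adjoint (A z)) : 𝕜) = μ i * inner 𝕜 (b i) z := by
    rw [LinearMap.adjoint_inner_right, ← LinearMap.adjoint_inner_left, hA, inner_smul_left,
      RCLike.conj_ofReal]
  have hsum : ((‖A z‖ ^ 2 : ℝ) : 𝕜) =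
      ∑ i, (μ i : 𝕜) * ((‖(inner 𝕜 (b i) z : 𝕜)‖ ^ 2 : ℝ) : 𝕜) := calc
    ((‖A z‖ ^ 2 : ℝ) : 𝕜) = inner 𝕜 z (A.adjoint (A z)) := by
      rw [LinearMap.adjoint_inner_right, inner_self_eq_norm_sq_to_K, RCLike.ofReal_pow]
    _ = ∑ i, inner 𝕜 z (b i) * inner 𝕜 (b i) (A.adjoint (A z)) := (b.sum_inner_mul_inner _ _).symm
    _ = ∑ i, (μ i : 𝕜) * ((‖(inner 𝕜 (b i) z : 𝕜)‖ ^ 2 : ℝ) : 𝕜) := by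
      refine sum_congr rfl fun i _ ↦ ?_
      rw [hcoord, ← inner_conj_symm z, mul_left_comm, RCLike.conj_mul, RCLike.ofReal_pow]
  exact_mod_cast hsum

theorem eigenvalue_adjoint_comp_self_nonneg (hA : ∀ i, A.adjoint (A (b i)) = (μ i : 𝕜) • b i)
    (i : ι) : 0 ≤ μ i := by
  classical
  have h : ‖A (b i)‖ ^ 2 = μ i := by
    simp [norm_sq_apply_eq_sum_eigenvalue_mul hA, b.inner_eq_ite, apply_ite]
  exact h ▸ sq_nonneg _

theorem mul_norm_starProjection_span_image_le
    (hA : ∀ i, A.adjoint (A (b i)) = (μ i : 𝕜) • b i) {c : ℝ}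
    (hc : ∀ i ∈ s, c ^ 2 ≤ μ i) (z : E) :
    c * ‖(Submodule.span 𝕜 (b '' s)).starProjection z‖ ≤ ‖A z‖ := by
  set L := Submodule.span 𝕜 (b '' s)
  refine le_of_sq_le_sq ?_ (norm_nonneg _)
  rw [mul_pow, ← b.sum_sq_norm_inner_right, norm_sq_apply_eq_sum_eigenvalue_mul hA, mul_sum]
  refine sum_le_sum fun i _ ↦ ?_
  by_cases hi : i ∈ s
  · have hproj : L.starProjection (b i) = b i :=
      Submodule.starProjection_eq_self_iff.2 (Submodule.subset_span (Set.mem_image_of_mem b hi))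
    rw [← L.inner_starProjection_left_eq_right, hproj]
    gcongr
    exact hc i hi
  · rw [mem_span_image_orthonormalBasis_iff.1 (L.starProjection_apply_mem z) i hi, norm_zero,
      zero_pow two_ne_zero, mul_zero]
    exact mul_nonneg (eigenvalue_adjoint_comp_self_nonneg hA i) (sq_nonneg _)

theorem norm_apply_le_of_mem_span_image
    (hA : ∀ i, A.adjoint (A (b i)) = (μ i : 𝕜) • b i) {c : ℝ} (hc₀ : 0 ≤ c)
    (hc : ∀ i ∈ s, μ i ≤ c ^ 2) (hz : z ∈ Submodule.span 𝕜 (b '' s)) :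
    ‖A z‖ ≤ c * ‖z‖ := by
  refine le_of_sq_le_sq ?_ (by positivity)
  rw [mul_pow, ← b.sum_sq_norm_inner_right, norm_sq_apply_eq_sum_eigenvalue_mul hA, mul_sum]
  refine sum_le_sum fun i _ ↦ ?_
  by_cases hi : i ∈ s
  · gcongr
    exact hc i hi
  · simp [mem_span_image_orthonormalBasis_iff.1 hz i hi]

end Eigenbasis

section SortedCounts

variable {α : Type*} [LinearOrder α] {n : ℕ}

theorem lt_card_filter_le_apply_sort (f : Fin n → α) (j : Fin n) :
    (j : ℕ) < #{i | f i ≤ f (Tuple.sort f j)} := by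
  have h := (Tuple.lt_card_le_iff_apply_le_of_monotone (Tuple.monotone_sort f)
    (a := f (Tuple.sort f j)) (j := j)).2 le_rfl
  rwa [Finset.card_equiv (t := {i | f i ≤ f (Tuple.sort f j)}) (Tuple.sort f) (by simp)] at h

theorem card_filter_lt_apply_sort_le (f : Fin n → α) (j : Fin n) :
    #{i | f i < f (Tuple.sort f j)} ≤ j := by
  have h := (Tuple.lt_card_lt_iff_apply_lt_of_monotone (Tuple.monotone_sort f)
    (a := f (Tuple.sort f j)) (j := j)).not.2 (lt_irrefl _)
  rw [Finset.card_equiv (t := {i | f i < f (Tuple.sort f j)}) (Tuple.sort f) (by simp)] at h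
  exact not_lt.1 h

theorem le_card_filter_apply_sort_le (f : Fin n → α) (j : Fin n) :
    n ≤ j + #{i | f (Tuple.sort f j) ≤ f i} := by
  have hlt := card_filter_lt_apply_sort_le f j
  have hsplit := card_filter_add_card_filter_not (s := univ) (fun i ↦ f i < f (Tuple.sort f j))
  simp only [not_lt, card_univ, Fintype.card_fin] at hsplit
  lia

end SortedCounts

section SpectralNorm

variable {d e : ℕ}

theorem norm_toEuclideanLin_apply_le (M : Matrix (Fin d) (Fin e) ℂ)
    (z : EuclideanSpace ℂ (Fin e)) : ‖Matrix.toEuclideanLin M z‖ ≤ specNorm M * ‖z‖ :=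
  (LinearMap.toContinuousLinearMap (Matrix.toEuclideanLin M)).le_opNorm z

theorem specNorm_nonneg (M : Matrix (Fin d) (Fin e) ℂ) : 0 ≤ specNorm M :=
  norm_nonneg _

theorem specNorm_sub_comm (M N : Matrix (Fin d) (Fin e) ℂ) :
    specNorm (M - N) = specNorm (N - M) := by
  simp only [specNorm, map_sub, norm_sub_rev]

open scoped Matrix.Norms.L2Operator in
theorem specNorm_conjTranspose (M : Matrix (Fin d) (Fin e) ℂ) : specNorm Mᴴ = specNorm M :=
  Matrix.l2_opNorm_conjTranspose M

theorem norm_toEuclideanLin_conjTranspose_apply_le (M N : Matrix (Fin d) (Fin e) ℂ)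
    (z : EuclideanSpace ℂ (Fin d)) :
    ‖Matrix.toEuclideanLin Nᴴ z‖ ≤ ‖Matrix.toEuclideanLin Mᴴ z‖ + specNorm (N - M) * ‖z‖ := calc
  ‖Matrix.toEuclideanLin Nᴴ z‖ =
      ‖Matrix.toEuclideanLin Mᴴ z + Matrix.toEuclideanLin (N - M)ᴴ z‖ := by
    rw [← LinearMap.add_apply, ← map_add, Matrix.conjTranspose_sub, add_sub_cancel]
  _ ≤ ‖Matrix.toEuclideanLin Mᴴ z‖ + specNorm (N - M) * ‖z‖ := by
    refine (norm_add_le _ _).trans ?_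
    gcongr
    exact specNorm_conjTranspose (N - M) ▸ norm_toEuclideanLin_apply_le _ z

end SpectralNorm

section ColSpan

variable {d e f : ℕ}

theorem finrank_colSpan (M : Matrix (Fin d) (Fin e) ℂ) :
    Module.finrank ℂ (colSpan M) = M.rank := by
  rw [colSpan, toEuclideanLin, Matrix.toLpLin_eq_toLin]
  exact (M.rank_eq_finrank_range_toLin _ _).symm

theorem colSpan_mul_of_rank_eq (A : Matrix (Fin d) (Fin e) ℂ)
    {B : Matrix (Fin e) (Fin f) ℂ} (hB : B.rank = e) : colSpan (A * B) = colSpan A := by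
  have hsurj : (Matrix.toEuclideanLin B).range = ⊤ :=
    Submodule.eq_top_of_finrank_eq <| by
      rw [finrank_euclideanSpace_fin]
      exact (finrank_colSpan B).trans hB
  rw [colSpan, Matrix.toLpLin_mul_same, LinearMap.range_comp_of_range_eq_top _ hsurj, colSpan]

end ColSpan

section LeftSingularVectors

variable {d e : ℕ}

/-- The eigenvalues of `M Mᴴ`, that is, the squared singular values of `M`, indexed in the same
way as the basis `leftSingularBasis M`. -/
def sqSingularValues (M : Matrix (Fin d) (Fin e) ℂ) : Fin d → ℝ :=
  (Matrix.isHermitian_mul_conjTranspose_self M).eigenvalues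

/-- An orthonormal basis of left singular vectors of `M`, realised as eigenvectors of `M Mᴴ`. -/
def leftSingularBasis (M : Matrix (Fin d) (Fin e) ℂ) :
    OrthonormalBasis (Fin d) ℂ (EuclideanSpace ℂ (Fin d)) :=
  (Matrix.isHermitian_mul_conjTranspose_self M).eigenvectorBasis

/-- The span of the left singular vectors of `M` with indices in `S`. -/
def leftSingularSpan (M : Matrix (Fin d) (Fin e) ℂ) (S : Finset (Fin d)) :
    Submodule ℂ (EuclideanSpace ℂ (Fin d)) :=
  Submodule.span ℂ (leftSingularBasis M '' S)

variable {M : Matrix (Fin d) (Fin e) ℂ} {S : Finset (Fin d)} {c : ℝ} {z : EuclideanSpace ℂ (Fin d)}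

theorem adjoint_conjTranspose_leftSingularBasis (M : Matrix (Fin d) (Fin e) ℂ) (i : Fin d) :
    (Matrix.toEuclideanLin Mᴴ).adjoint (Matrix.toEuclideanLin Mᴴ (leftSingularBasis M i)) =
      (sqSingularValues M i : ℂ) • leftSingularBasis M i := by
  rw [← Matrix.toEuclideanLin_conjTranspose_eq_adjoint, Matrix.conjTranspose_conjTranspose,
    ← LinearMap.comp_apply, ← Matrix.toLpLin_mul_same, Matrix.toLpLin_apply]
  exact congrArg (WithLp.toLp 2)
    ((Matrix.isHermitian_mul_conjTranspose_self M).mulVec_eigenvectorBasis i)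

theorem sqSingularValues_nonneg (M : Matrix (Fin d) (Fin e) ℂ) (i : Fin d) :
    0 ≤ sqSingularValues M i :=
  eigenvalue_adjoint_comp_self_nonneg (adjoint_conjTranspose_leftSingularBasis M) i

theorem finrank_leftSingularSpan (M : Matrix (Fin d) (Fin e) ℂ) (S : Finset (Fin d)) :
    Module.finrank ℂ (leftSingularSpan M S) = #S :=
  finrank_span_image_orthonormalBasis _ S

theorem leftSingularSpan_orthogonal (M : Matrix (Fin d) (Fin e) ℂ) (S : Finset (Fin d)) :
    (leftSingularSpan M S)ᗮ = leftSingularSpan M Sᶜ := by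
  ext z
  simp only [leftSingularSpan, mem_orthogonal_span_image_iff, mem_span_image_orthonormalBasis_iff,
    mem_coe, mem_compl, not_not]

theorem mul_norm_starProjection_leftSingularSpan_le (hc : ∀ i ∈ S, c ^ 2 ≤ sqSingularValues M i)
    (z : EuclideanSpace ℂ (Fin d)) :
    c * ‖(leftSingularSpan M S).starProjection z‖ ≤ ‖Matrix.toEuclideanLin Mᴴ z‖ :=
  mul_norm_starProjection_span_image_le (adjoint_conjTranspose_leftSingularBasis M) hc z

theorem norm_conjTranspose_apply_le_of_mem_leftSingularSpan (hc₀ : 0 ≤ c)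
    (hc : ∀ i ∈ S, sqSingularValues M i ≤ c ^ 2) (hz : z ∈ leftSingularSpan M S) :
    ‖Matrix.toEuclideanLin Mᴴ z‖ ≤ c * ‖z‖ :=
  norm_apply_le_of_mem_span_image (adjoint_conjTranspose_leftSingularBasis M) hc₀ hc hz

theorem rank_eq_card_sqSingularValues_ne_zero (M : Matrix (Fin d) (Fin e) ℂ) :
    M.rank = #{i | sqSingularValues M i ≠ 0} := by
  open scoped ComplexOrder in
  rw [← Matrix.rank_self_mul_conjTranspose,
    (Matrix.isHermitian_mul_conjTranspose_self M).rank_eq_card_non_zero_eigs, Fintype.card_subtype]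
  rfl

theorem leftSingularBasis_mem_colSpan {M : Matrix (Fin d) (Fin e) ℂ} {i : Fin d}
    (hi : sqSingularValues M i ≠ 0) : leftSingularBasis M i ∈ colSpan M := by
  have h := adjoint_conjTranspose_leftSingularBasis M i
  rw [← Matrix.toEuclideanLin_conjTranspose_eq_adjoint, Matrix.conjTranspose_conjTranspose] at h
  rw [← Submodule.smul_mem_iff _ (Complex.ofReal_ne_zero.2 hi), ← h]
  exact LinearMap.mem_range_self _ _

end LeftSingularVectors

section SingularValues

variable {d : ℕ} {M N : Matrix (Fin d) (Fin d) ℂ} {k s : ℕ} {z : EuclideanSpace ℂ (Fin d)}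

theorem singVal_nonneg (M : Matrix (Fin d) (Fin d) ℂ) (k : ℕ) : 0 ≤ singVal M k := by
  unfold singVal
  split_ifs
  exacts [Real.sqrt_nonneg _, le_rfl]

theorem singVal_of_not_one_le_and_le (M : Matrix (Fin d) (Fin d) ℂ) (hk : ¬(1 ≤ k ∧ k ≤ d)) :
    singVal M k = 0 :=
  dif_neg hk

theorem singVal_sq (M : Matrix (Fin d) (Fin d) ℂ) (hk : 1 ≤ k ∧ k ≤ d) :
    singVal M k ^ 2 =
      sqSingularValues M (Tuple.sort (sqSingularValues M) ⟨d - k, by lia⟩) := by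
  rw [singVal, dif_pos hk]
  exact Real.sq_sqrt (sqSingularValues_nonneg M _)

theorem le_card_sq_singVal_le (M : Matrix (Fin d) (Fin d) ℂ) (hkd : k ≤ d) :
    k ≤ #{i | singVal M k ^ 2 ≤ sqSingularValues M i} := by
  obtain rfl | hk := k.eq_zero_or_pos
  · exact Nat.zero_le _
  · rw [singVal_sq M ⟨hk, hkd⟩]
    have := le_card_filter_apply_sort_le (sqSingularValues M) ⟨d - k, by lia⟩
    lia

theorem lt_add_card_le_sq_singVal (M : Matrix (Fin d) (Fin d) ℂ) (hk : 1 ≤ k) :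
    d < k + #{i | sqSingularValues M i ≤ singVal M k ^ 2} := by
  obtain hkd | hkd := le_or_gt k d
  · rw [singVal_sq M ⟨hk, hkd⟩]
    have := lt_card_filter_le_apply_sort (sqSingularValues M) ⟨d - k, by lia⟩
    lia
  · lia

theorem singVal_le_singVal_add_specNorm (M N : Matrix (Fin d) (Fin d) ℂ) (k : ℕ) :
    singVal N k ≤ singVal M k + specNorm (N - M) := by
  by_cases hk : 1 ≤ k ∧ k ≤ d
  swap
  · simpa [singVal_of_not_one_le_and_le _ hk] using specNorm_nonneg (N - M)
  set V := leftSingularSpan N {i | singVal N k ^ 2 ≤ sqSingularValues N i}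
  set W := leftSingularSpan M {i | sqSingularValues M i ≤ singVal M k ^ 2}
  -- Courant-Fischer: the dimensions of `V` and `W` add up to more than `d`.
  have hVW : ¬Disjoint V W := fun hdisj ↦ by
    have hdim := Submodule.finrank_add_finrank_le_of_disjoint hdisj
    rw [finrank_leftSingularSpan, finrank_leftSingularSpan, finrank_euclideanSpace_fin] at hdim
    have hV := le_card_sq_singVal_le N hk.2
    have hW := lt_add_card_le_sq_singVal M hk.1
    lia
  simp only [Submodule.disjoint_def, not_forall] at hVW
  obtain ⟨z, hzV, hzW, hz⟩ := hVW
  refine le_of_mul_le_mul_right ?_ (norm_pos_iff.2 hz)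
  calc singVal N k * ‖z‖ = singVal N k * ‖V.starProjection z‖ := by
        rw [Submodule.starProjection_eq_self_iff.2 hzV]
    _ ≤ ‖Matrix.toEuclideanLin Nᴴ z‖ :=
        mul_norm_starProjection_leftSingularSpan_le (by simp) z
    _ ≤ ‖Matrix.toEuclideanLin Mᴴ z‖ + specNorm (N - M) * ‖z‖ :=
        norm_toEuclideanLin_conjTranspose_apply_le M N z
    _ ≤ singVal M k * ‖z‖ + specNorm (N - M) * ‖z‖ := by
        gcongr
        exact norm_conjTranspose_apply_le_of_mem_leftSingularSpan (singVal_nonneg M k) (by simp) hzW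
    _ = (singVal M k + specNorm (N - M)) * ‖z‖ := (add_mul _ _ _).symm

theorem one_le_and_le_of_singVal_pos (h : 0 < singVal M k) : 1 ≤ k ∧ k ≤ d := by
  by_contra hk
  exact h.ne' (singVal_of_not_one_le_and_le M hk)

theorem card_sq_singVal_succ_lt_le (M : Matrix (Fin d) (Fin d) ℂ) (s : ℕ) :
    #{i | singVal M (s + 1) ^ 2 < sqSingularValues M i} ≤ s := by
  have hle := lt_add_card_le_sq_singVal M s.succ_pos
  have hsplit := card_filter_add_card_filter_not (s := univ)
    (fun i ↦ sqSingularValues M i ≤ singVal M (s + 1) ^ 2)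
  simp only [not_le, card_univ, Fintype.card_fin] at hsplit
  lia

theorem filter_sq_singVal_le_eq (hgap : singVal M (s + 1) < singVal M s) :
    ({i | singVal M s ^ 2 ≤ sqSingularValues M i} : Finset (Fin d)) =
      ({i | singVal M (s + 1) ^ 2 < sqSingularValues M i} : Finset (Fin d)) := by
  have hσ := singVal_nonneg M (s + 1)
  have hsd := (one_le_and_le_of_singVal_pos (hσ.trans_lt hgap)).2
  refine eq_of_subset_of_card_le (monotone_filter_right _ fun i _ ↦ ?_)
    ((card_sq_singVal_succ_lt_le M s).trans (le_card_sq_singVal_le M hsd))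
  exact (by gcongr : singVal M (s + 1) ^ 2 < singVal M s ^ 2).trans_le

theorem leadingLeftSingularSpace_eq_leftSingularSpan (M : Matrix (Fin d) (Fin d) ℂ) (s : ℕ) :
    leadingLeftSingularSpace M s =
      leftSingularSpan M {i | singVal M (s + 1) ^ 2 < sqSingularValues M i} := by
  refine congrArg (Submodule.span ℂ) (Set.ext fun v ↦ ?_)
  simp only [Set.mem_image, coe_filter, mem_univ, true_and, Set.mem_ofPred_eq, eq_comm (a := v)]
  rfl

theorem finrank_leadingLeftSingularSpace (hgap : singVal M (s + 1) < singVal M s) :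
    Module.finrank ℂ (leadingLeftSingularSpace M s) = s := by
  rw [leadingLeftSingularSpace_eq_leftSingularSpan, finrank_leftSingularSpan]
  refine (card_sq_singVal_succ_lt_le M s).antisymm ?_
  rw [← filter_sq_singVal_le_eq hgap]
  exact le_card_sq_singVal_le M
    (one_le_and_le_of_singVal_pos ((singVal_nonneg M (s + 1)).trans_lt hgap)).2

theorem singVal_mul_norm_starProjection_leading_le (hgap : singVal M (s + 1) < singVal M s)
    (z : EuclideanSpace ℂ (Fin d)) :
    singVal M s * ‖(leadingLeftSingularSpace M s).starProjection z‖ ≤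
      ‖Matrix.toEuclideanLin Mᴴ z‖ := by
  rw [leadingLeftSingularSpace_eq_leftSingularSpan, ← filter_sq_singVal_le_eq hgap]
  exact mul_norm_starProjection_leftSingularSpan_le (by simp) z

theorem norm_conjTranspose_apply_le_of_mem_leading_orthogonal
    (hz : z ∈ (leadingLeftSingularSpace M s)ᗮ) :
    ‖Matrix.toEuclideanLin Mᴴ z‖ ≤ singVal M (s + 1) * ‖z‖ := by
  rw [leadingLeftSingularSpace_eq_leftSingularSpan, leftSingularSpan_orthogonal] at hz
  exact norm_conjTranspose_apply_le_of_mem_leftSingularSpan (singVal_nonneg M _) (by simp) hz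

theorem norm_starProjection_leading_le_of_mem_orthogonal {ρ : ℝ}
    (hgap : singVal M (s + 1) < singVal M s)
    (hρ : singVal N (s + 1) + specNorm (M - N) ≤ ρ * singVal M s)
    (hz : z ∈ (leadingLeftSingularSpace N s)ᗮ) :
    ‖(leadingLeftSingularSpace M s).starProjection z‖ ≤ ρ * ‖z‖ := by
  refine le_of_mul_le_mul_left ?_ ((singVal_nonneg M (s + 1)).trans_lt hgap)
  calc singVal M s * ‖(leadingLeftSingularSpace M s).starProjection z‖
      ≤ ‖Matrix.toEuclideanLin Mᴴ z‖ := singVal_mul_norm_starProjection_leading_le hgap z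
    _ ≤ ‖Matrix.toEuclideanLin Nᴴ z‖ + specNorm (M - N) * ‖z‖ :=
        norm_toEuclideanLin_conjTranspose_apply_le N M z
    _ ≤ singVal N (s + 1) * ‖z‖ + specNorm (M - N) * ‖z‖ := by
        gcongr
        exact norm_conjTranspose_apply_le_of_mem_leading_orthogonal hz
    _ = (singVal N (s + 1) + specNorm (M - N)) * ‖z‖ := (add_mul _ _ _).symm
    _ ≤ ρ * singVal M s * ‖z‖ := by gcongr
    _ = singVal M s * (ρ * ‖z‖) := by ring

theorem norm_starProjection_leading_sub_le {ρ : ℝ} (hρ : 0 ≤ ρ)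
    (hM : singVal M (s + 1) < singVal M s) (hN : singVal N (s + 1) < singVal N s)
    (hNM : singVal N (s + 1) + specNorm (M - N) ≤ ρ * singVal M s)
    (hMN : singVal M (s + 1) + specNorm (N - M) ≤ ρ * singVal N s) :
    ‖(leadingLeftSingularSpace M s).starProjection -
      (leadingLeftSingularSpace N s).starProjection‖ ≤ ρ :=
  norm_starProjection_sub_starProjection_le hρ
    (fun _ hz ↦ norm_starProjection_leading_le_of_mem_orthogonal hM hNM hz)
    (fun _ hz ↦ norm_starProjection_leading_le_of_mem_orthogonal hN hMN hz)

theorem singVal_pos_of_le_rank (hk : 1 ≤ k)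
    (hrank : k ≤ M.rank) : 0 < singVal M k := by
  refine (singVal_nonneg M k).lt_of_ne' fun h₀ ↦ ?_
  have hle := lt_add_card_le_sq_singVal M hk
  have hsplit := card_filter_add_card_filter_not (s := univ) (fun i ↦ sqSingularValues M i = 0)
  simp only [h₀, zero_pow two_ne_zero, (sqSingularValues_nonneg M _).ge_iff_eq'] at hle
  rw [rank_eq_card_sqSingularValues_ne_zero] at hrank
  simp only [card_univ, Fintype.card_fin] at hsplit
  lia

theorem singVal_eq_zero_of_rank_lt (hrank : M.rank < k) :
    singVal M k = 0 := by
  by_contra! h₀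
  have hpos := (singVal_nonneg M k).lt_of_ne' h₀
  have hle := le_card_sq_singVal_le M (one_le_and_le_of_singVal_pos hpos).2
  rw [rank_eq_card_sqSingularValues_ne_zero] at hrank
  refine (hle.trans (card_le_card (monotone_filter_right _ fun i _ hi ↦ ?_))).not_gt hrank
  exact ((pow_pos hpos 2).trans_le hi).ne'

theorem leadingLeftSingularSpace_rank (hM : 1 ≤ M.rank) :
    leadingLeftSingularSpace M M.rank = colSpan M := by
  have hzero : singVal M (M.rank + 1) = 0 := singVal_eq_zero_of_rank_lt M.rank.lt_succ_self
  refine Submodule.eq_of_le_of_finrank_eq ?_ ?_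
  · rw [leadingLeftSingularSpace_eq_leftSingularSpan, leftSingularSpan, Submodule.span_le]
    rintro _ ⟨i, hi, rfl⟩
    exact leftSingularBasis_mem_colSpan ((sq_nonneg _).trans_lt (mem_filter.1 hi).2).ne'
  · rw [finrank_colSpan, finrank_leadingLeftSingularSpace]
    exact hzero ▸ singVal_pos_of_le_rank hM le_rfl

end SingularValues

section OrthonormalColumns

variable {d e f : ℕ} {U : Matrix (Fin d) (Fin e) ℂ} {W : Matrix (Fin d) (Fin f) ℂ}
  {K L : Submodule ℂ (EuclideanSpace ℂ (Fin d))}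

theorem IsONBasisOf.toEuclideanLin_mul_conjTranspose_apply (hU : IsONBasisOf U K)
    (z : EuclideanSpace ℂ (Fin d)) :
    Matrix.toEuclideanLin (U * Uᴴ) z = K.starProjection z := by
  obtain ⟨horth, rfl⟩ := hU
  have hadj : Matrix.toEuclideanLin Uᴴ (Matrix.toEuclideanLin (U * Uᴴ) z) =
      Matrix.toEuclideanLin Uᴴ z := by
    rw [← LinearMap.comp_apply, ← Matrix.toLpLin_mul_same, ← Matrix.mul_assoc, horth,
      Matrix.one_mul]
  refine (Submodule.eq_starProjection_of_mem_of_inner_eq_zero ?_ ?_).symm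
  · rw [Matrix.toLpLin_mul_same]
    exact LinearMap.mem_range_self _ _
  · rintro _ ⟨w, rfl⟩
    rw [← LinearMap.adjoint_inner_left, ← Matrix.toEuclideanLin_conjTranspose_eq_adjoint, map_sub,
      hadj, sub_self, inner_zero_left]

theorem IsONBasisOf.specNorm_sub_eq (hU : IsONBasisOf U K) (hW : IsONBasisOf W L) :
    specNorm (U * Uᴴ - W * Wᴴ) = ‖K.starProjection - L.starProjection‖ := by
  refine congrArg norm (ContinuousLinearMap.ext fun z ↦ ?_)
  rw [map_sub]
  exact congrArg₂ (· - ·) (hU.toEuclideanLin_mul_conjTranspose_apply z)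
    (hW.toEuclideanLin_mul_conjTranspose_apply z)

end OrthonormalColumns

section Fourier

theorem torusDist_nonpos_of_exp_eq {u v : ℝ}
    (h : Complex.exp (Complex.I * u) = Complex.exp (Complex.I * v)) : torusDist u v ≤ 0 := by
  obtain ⟨n, hn⟩ := Complex.exp_eq_exp_iff_exists_int.1 h
  have huv : (u : ℂ) = v + 2 * Real.pi * n := by
    apply mul_left_cancel₀ Complex.I_ne_zero
    rw [hn]
    ring
  have huv' : u - v + 2 * Real.pi * ((-n : ℤ) : ℝ) = 0 := by
    have : u = v + 2 * Real.pi * n := by exact_mod_cast huv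
    push_cast
    linarith
  calc torusDist u v ≤ |u - v + 2 * Real.pi * ((-n : ℤ) : ℝ)| :=
        ciInf_le ⟨0, by rintro _ ⟨k, rfl⟩; positivity⟩ (-n)
    _ = 0 := by rw [huv', abs_zero]

variable {m s : ℕ} {x : Fin s → ℝ} {a : Fin s → ℂ}

theorem fourierMatrix_apply_eq_mul_pow (m : ℕ) (x : Fin s → ℝ) (k : Fin m) (j : Fin s) :
    fourierMatrix m x k j =
      Complex.exp (Complex.I * (-(((m : ℝ) - 1) / 2) * x j : ℝ)) *
        Complex.exp (Complex.I * x j) ^ (k : ℕ) := by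
  rw [fourierMatrix, ← Complex.exp_nat_mul, ← Complex.exp_add]
  push_cast
  ring_nf

theorem rank_fourierMatrix (hsm : s ≤ m)
    (hx : ∀ j k : Fin s, j ≠ k → 0 < torusDist (x j) (x k)) :
    (fourierMatrix m x).rank = s := by
  suffices hker : ∀ w, fourierMatrix m x *ᵥ w = 0 → w = 0 by
    rw [Matrix.rank, LinearMap.finrank_range_of_inj
      ((injective_iff_map_eq_zero (fourierMatrix m x).mulVecLin).2 hker), Module.finrank_fin_fun]
  intro w hw
  have hnodes : Function.Injective fun j ↦ Complex.exp (Complex.I * x j) := fun j k hjk ↦ by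
    by_contra hne
    exact (hx j k hne).not_ge (torusDist_nonpos_of_exp_eq hjk)
  let v (j : Fin s) : ℂ := w j * Complex.exp (Complex.I * (-(((m : ℝ) - 1) / 2) * x j : ℝ))
  have hv : v = 0 := Matrix.eq_zero_of_forall_pow_sum_mul_pow_eq_zero hnodes fun i ↦ by
    simpa [v, Matrix.mulVec, dotProduct, fourierMatrix_apply_eq_mul_pow, mul_comm, mul_left_comm]
      using congrFun hw (Fin.castLE hsm i)
  ext j
  exact (mul_eq_zero.1 (congrFun hv j)).resolve_right (Complex.exp_ne_zero _)

theorem toeplitz_cleanSamples (m : ℕ) (x : Fin s → ℝ) (a : Fin s → ℂ) :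
    toeplitz m (cleanSamples m x a) =
      fourierMatrix m x * (Matrix.diagonal a * (fourierMatrix m x)ᴴ) := by
  ext j k
  rw [Matrix.mul_apply]
  simp only [toeplitz, cleanSamples, Matrix.diagonal_mul, Matrix.conjTranspose_apply,
    fourierMatrix]
  refine Finset.sum_congr rfl fun i _ ↦ ?_
  rw [Complex.star_def, ← Complex.exp_conj, mul_left_comm, ← Complex.exp_add]
  congr 2
  rw [Nat.cast_sub (by lia), Nat.cast_add, Nat.cast_sub (Nat.one_le_of_lt k.isLt)]
  simp only [map_mul, Complex.conj_I, Complex.conj_ofReal]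
  push_cast
  ring

theorem colSpan_toeplitz_cleanSamples (hsm : s ≤ m)
    (hx : ∀ j k : Fin s, j ≠ k → 0 < torusDist (x j) (x k)) (ha : ∀ j, a j ≠ 0) :
    colSpan (toeplitz m (cleanSamples m x a)) = colSpan (fourierMatrix m x) := by
  have hdet : IsUnit (Matrix.diagonal a).det := by
    rw [Matrix.det_diagonal]
    exact (prod_ne_zero_iff.2 fun j _ ↦ ha j).isUnit
  rw [toeplitz_cleanSamples]
  apply colSpan_mul_of_rank_eq
  open scoped ComplexOrder in
  rw [Matrix.rank_mul_eq_right_of_isUnit_det _ _ hdet, Matrix.rank_conjTranspose,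
    rank_fourierMatrix hsm hx]

theorem rank_toeplitz_cleanSamples (hsm : s ≤ m)
    (hx : ∀ j k : Fin s, j ≠ k → 0 < torusDist (x j) (x k)) (ha : ∀ j, a j ≠ 0) :
    (toeplitz m (cleanSamples m x a)).rank = s := by
  rw [← finrank_colSpan, colSpan_toeplitz_cleanSamples hsm hx ha, finrank_colSpan,
    rank_fourierMatrix hsm hx]

theorem toeplitz_add (m : ℕ) (y z : Fin (2 * m - 1) → ℂ) :
    toeplitz m (y + z) = toeplitz m y + toeplitz m z :=
  rfl

end Fourier

theorem toeplitz_estimator_error_general {d s : ℕ} (hs : 1 ≤ s) (T E : Matrix (Fin d) (Fin d) ℂ)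
    (hT : T.rank = s) (ρ : ℝ) (hρdef : ρ = 2 * specNorm E / singVal T s) (hρ : ρ < 1) :
    singVal (T + E) (s + 1) < singVal (T + E) s ∧
    Module.finrank ℂ (leadingLeftSingularSpace (T + E) s) = s ∧
    ∀ U Ut : Matrix (Fin d) (Fin s) ℂ,
      IsONBasisOf U (colSpan T) →
      IsONBasisOf Ut (leadingLeftSingularSpace (T + E) s) →
      specNorm (U * Uᴴ - Ut * Utᴴ) ≤ ρ := by
  subst hT
  set σ := singVal T T.rank
  set ε := specNorm E
  have hσ : 0 < σ := singVal_pos_of_le_rank hs le_rfl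
  have hσ₀ : singVal T (T.rank + 1) = 0 := singVal_eq_zero_of_rank_lt T.rank.lt_succ_self
  have hρσ : 2 * ε = ρ * σ := by rw [hρdef, div_mul_cancel₀ _ hσ.ne']
  have hεσ : 2 * ε < σ := hρσ ▸ mul_lt_of_lt_one_left hσ hρ
  have hε : 0 ≤ ε := specNorm_nonneg E
  have hρ₀ : 0 ≤ ρ := hρdef ▸ by positivity
  have hTE : specNorm (T + E - T) = ε := by rw [add_sub_cancel_left]
  have hET : specNorm (T - (T + E)) = ε := by rw [specNorm_sub_comm, hTE]
  have hupper : singVal (T + E) (T.rank + 1) ≤ ε := by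
    simpa [hσ₀, hTE] using singVal_le_singVal_add_specNorm T (T + E) (T.rank + 1)
  have hlower : σ - ε ≤ singVal (T + E) T.rank :=
    sub_le_iff_le_add.2 (hET ▸ singVal_le_singVal_add_specNorm (T + E) T T.rank)
  have hgap : singVal (T + E) (T.rank + 1) < singVal (T + E) T.rank := by linarith
  refine ⟨hgap, finrank_leadingLeftSingularSpace hgap, fun U Ut hU hUt ↦ ?_⟩
  rw [hU.specNorm_sub_eq hUt, ← leadingLeftSingularSpace_rank hs]
  apply norm_starProjection_leading_sub_le hρ₀ (hσ₀ ▸ hσ) hgap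
  · linarith
  · calc singVal T (T.rank + 1) + specNorm (T + E - T) = ρ * (σ / 2) := by
          rw [hσ₀, hTE]
          linarith
      _ ≤ ρ * singVal (T + E) T.rank := by
          gcongr
          linarith

/-- **Properties of the Toeplitz subspace error** (Lemma `lem:rho`).
If `ρ := 2‖T(η)‖₂/σ_s(T(y)) ≤ 1 − 1/√2`, then `σ_s(T̃) > σ_{s+1}(T̃)`, so `T̃` has a unique
leading `s`-dimensional left singular subspace; and for any orthonormal basis `Ũ` of this
subspace and any orthonormal basis `U` of `range Φ(m,x)`, `‖UU^* − ŨŨ^*‖₂ ≤ ρ`. -/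
theorem toeplitz_estimator_error (m s : ℕ) (hs : 1 ≤ s) (hm : s < m)
    (x : Fin s → ℝ)
    (hx : ∀ j k : Fin s, j ≠ k → 0 < torusDist (x j) (x k))
    (a : Fin s → ℂ) (ha : ∀ j, a j ≠ 0)
    (η : Fin (2 * m - 1) → ℂ)
    (Tt : Matrix (Fin m) (Fin m) ℂ)
    (hTt : Tt = toeplitz m (cleanSamples m x a + η))
    (ρ : ℝ)
    (hρdef : ρ = 2 * specNorm (toeplitz m η) / singVal (toeplitz m (cleanSamples m x a)) s)
    (hρ : ρ ≤ 1 - 1 / Real.sqrt 2) :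
    singVal Tt (s + 1) < singVal Tt s ∧
    Module.finrank ℂ (leadingLeftSingularSpace Tt s) = s ∧
    ∀ U Ut : Matrix (Fin m) (Fin s) ℂ,
      IsONBasisOf U (colSpan (fourierMatrix m x)) →
      IsONBasisOf Ut (leadingLeftSingularSpace Tt s) →
      specNorm (U * Uᴴ - Ut * Utᴴ) ≤ ρ := by
  rw [hTt, toeplitz_add, ← colSpan_toeplitz_cleanSamples hm.le hx ha]
  exact toeplitz_estimator_error_general hs _ _ (rank_toeplitz_cleanSamples hm.le hx ha) ρ hρdef
    (hρ.trans_lt (sub_lt_self 1 (by positivity)))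

end
end
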